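/- Let A and B be C*-algebras and let I and J be closed two-sided ideals of A and B respectively. Then I ⊗̂ J = { x ∈ A ⊗̂ B : R_φ(x) ∈ J and L_ψ(x) ∈ I for all φ ∈ A* and all ψ ∈ B* }. -/

import Mathlib

open scoped TensorProduct
open Pointwise

universe u

noncomputable section

/-- A C⋆-norm on a complex `*`-algebra.  On a matrix algebra over a C⋆-algebra such a
norm is unique, namely the canonical C⋆-norm. -/
structure IsCStarNorm {M : Type*} [NonUnitalRing M] [StarRing M] [Module ℂ M]
    (N : M → ℝ) : Prop where
  add_le : ∀ x y, N (x + y) ≤ N x + N y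
  smul_eq : ∀ (c : ℂ) (x : M), N (c • x) = ‖c‖ * N x
  eq_zero_of : ∀ x, N x = 0 → x = 0
  mul_le : ∀ x y, N (x * y) ≤ N x * N y
  star_mul_self : ∀ x, N (star x * x) = N x * N x

/-- The operator space projective tensor norm `‖·‖_∧` on the algebraic tensor product
`A ⊗ B`, relative to given families of matrix norms on `A` and `B`:
`‖u‖_∧ = inf { ‖α‖ ‖v‖ ‖w‖ ‖β‖ : u = α (v ⊗ w) β }` where `v ∈ M_p(A)`, `w ∈ M_q(B)`,
`α ∈ M_{1,pq}(ℂ)` and `β ∈ M_{pq,1}(ℂ)` (row and column vectors carrying the Euclidean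
norm, which is their norm as scalar matrices). -/
noncomputable def osProjNorm {A B : Type u}
    [AddCommGroup A] [Module ℂ A] [AddCommGroup B] [Module ℂ B]
    (NA : ∀ p : ℕ, Matrix (Fin p) (Fin p) A → ℝ)
    (NB : ∀ q : ℕ, Matrix (Fin q) (Fin q) B → ℝ) (u : A ⊗[ℂ] B) : ℝ :=
  sInf { r : ℝ | ∃ (p q : ℕ) (α : Fin p × Fin q → ℂ) (v : Matrix (Fin p) (Fin p) A)
      (w : Matrix (Fin q) (Fin q) B) (β : Fin p × Fin q → ℂ),
      u = ∑ ik : Fin p × Fin q, ∑ jl : Fin p × Fin q,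
            (α ik * β jl) • (v ik.1 jl.1 ⊗ₜ[ℂ] w ik.2 jl.2) ∧
      r = Real.sqrt (∑ ik, ‖α ik‖ ^ 2) * NA p v * NB q w *
            Real.sqrt (∑ jl, ‖β jl‖ ^ 2) }

/-- `X` is a completion of the algebraic tensor product `A ⊗ B` with respect to the
norm `ν`, via the (necessarily isometric) dense embedding `ι`, and the multiplication and
involution of `X` are the canonical ones induced from `A` and `B`.  Applied with
`ν = osProjNorm NA NB` (for the canonical matrix C⋆-norms `NA`, `NB`) this characterizes
the Banach `*`-algebra `A ⊗̂ B` (the operator space projective tensor product) up to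
isometric `*`-isomorphism; applied with `ν = bsProjNorm` it characterizes the Banach
space projective tensor product `A ⊗_γ B`. -/
structure IsTensorCompletion {A B : Type u} [NonUnitalRing A] [StarRing A] [Module ℂ A]
    [NonUnitalRing B] [StarRing B] [Module ℂ B] (ν : A ⊗[ℂ] B → ℝ)
    (X : Type u) [NonUnitalNormedRing X] [StarRing X] [NormedSpace ℂ X] [CompleteSpace X]
    (ι : A ⊗[ℂ] B →ₗ[ℂ] X) : Prop where
  norm_eq : ∀ u, ‖ι u‖ = ν u
  dense : DenseRange ι
  mul_tmul : ∀ (a c : A) (b d : B),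
    ι (a ⊗ₜ[ℂ] b) * ι (c ⊗ₜ[ℂ] d) = ι ((a * c) ⊗ₜ[ℂ] (b * d))
  star_tmul : ∀ (a : A) (b : B), star (ι (a ⊗ₜ[ℂ] b)) = ι (star a ⊗ₜ[ℂ] star b)

/-- The product ideal `S ⊗̂ T`: the closure in `X` (a completion of `A ⊗ B`) of the span of
elementary tensors `a ⊗ b` with `a ∈ S`, `b ∈ T`. -/
def tensorIdeal {A B : Type u} [NonUnitalRing A] [StarRing A] [Module ℂ A]
    [NonUnitalRing B] [StarRing B] [Module ℂ B]
    {X : Type u} [NonUnitalNormedRing X] [StarRing X] [NormedSpace ℂ X] [CompleteSpace X]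
    (ι : A ⊗[ℂ] B →ₗ[ℂ] X) (S : Set A) (T : Set B) : Set X :=
  closure (ι '' (Submodule.span ℂ (Set.image2 (fun a b => a ⊗ₜ[ℂ] b) S T)))

/-- A closed prime (two-sided) ideal of a Banach algebra: a proper closed two-sided ideal `K`
such that whenever the product of two closed two-sided ideals is contained in `K`, one of them
is contained in `K`. -/
def IsClosedPrimeIdeal {Y : Type u} [NonUnitalNormedRing Y] (K : TwoSidedIdeal Y) : Prop :=
  IsClosed (K : Set Y) ∧ (K : Set Y) ≠ Set.univ ∧
    ∀ I J : TwoSidedIdeal Y, IsClosed (I : Set Y) → IsClosed (J : Set Y) →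
      (∀ x ∈ I, ∀ y ∈ J, x * y ∈ K) → (I : Set Y) ⊆ (K : Set Y) ∨ (J : Set Y) ⊆ (K : Set Y)

/-- An irreducible continuous `*`-representation of a Banach `*`-algebra `Y` on a complex
Hilbert space. -/
structure IrreducibleRepOn (Y : Type u)
    [NonUnitalNormedRing Y] [StarRing Y] [NormedSpace ℂ Y] where
  H : Type u
  [normH : NormedAddCommGroup H]
  [ipsH : InnerProductSpace ℂ H]
  [csH : CompleteSpace H]
  π : Y →⋆ₙₐ[ℂ] (H →L[ℂ] H)
  continuous : Continuous π
  nonzero : ∃ y, π y ≠ 0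
  irreducible : ∀ S : Submodule ℂ H, IsClosed (S : Set H) →
    (∀ y : Y, ∀ v ∈ S, π y v ∈ S) → S = ⊥ ∨ S = ⊤

/-- A primitive ideal: the kernel of an irreducible `*`-representation. -/
def IsPrimitiveIdeal {Y : Type u} [NonUnitalNormedRing Y] [StarRing Y] [NormedSpace ℂ Y]
    (K : TwoSidedIdeal Y) : Prop :=
  ∃ ρ : IrreducibleRepOn Y, ∀ y, y ∈ K ↔ ρ.π y = 0

/-- A subset `K` of a ring is modular (as an ideal) if there is a relative unit `e`
with `x * e - x ∈ K` and `e * x - x ∈ K` for every `x`. -/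
def IsModularIdealSet {Y : Type u} [NonUnitalRing Y] (K : Set Y) : Prop :=
  ∃ e : Y, ∀ x : Y, x * e - x ∈ K ∧ e * x - x ∈ K

/-- A maximal modular (two-sided) ideal: a modular ideal which is proper and maximal among
proper two-sided ideals. -/
def IsMaximalModularIdeal {Y : Type u} [NonUnitalRing Y] (K : TwoSidedIdeal Y) : Prop :=
  IsModularIdealSet (K : Set Y) ∧ (K : Set Y) ≠ Set.univ ∧
    ∀ L : TwoSidedIdeal Y, (K : Set Y) ⊆ (L : Set Y) →
      (L : Set Y) = (K : Set Y) ∨ (L : Set Y) = Set.univ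

/-- The operator norm of a `p × p` matrix of bounded operators on a Hilbert space `H`,
viewed as an operator on the `ℓ²`-direct sum `H ⊕ ⋯ ⊕ H`. -/
noncomputable def opMatrixNorm {H : Type u} [NormedAddCommGroup H] [InnerProductSpace ℂ H]
    {p : ℕ} (T : Matrix (Fin p) (Fin p) (H →L[ℂ] H)) : ℝ :=
  sSup { r : ℝ | ∃ x : Fin p → H, (∑ i, ‖x i‖ ^ 2) ≤ 1 ∧
      r = Real.sqrt (∑ i, ‖∑ j, (T i j) (x j)‖ ^ 2) }

/-- An operator algebra structure on a Banach algebra `Y`: a bicontinuous algebra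
homomorphism of `Y` into the bounded operators on some Hilbert space. -/
structure OperatorAlgebraEmbedding (Y : Type u) [NonUnitalNormedRing Y] [NormedSpace ℂ Y] where
  H : Type u
  [normH : NormedAddCommGroup H]
  [ipsH : InnerProductSpace ℂ H]
  [csH : CompleteSpace H]
  ρ : Y →ₙₐ[ℂ] (H →L[ℂ] H)
  c : ℝ
  C : ℝ
  c_pos : 0 < c
  lower : ∀ y, c * ‖y‖ ≤ ‖ρ y‖
  upper : ∀ y, ‖ρ y‖ ≤ C * ‖y‖

/-- The matrix norms on `Y` induced by an operator algebra embedding, giving `Y` its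
operator space structure: the norm of `v ∈ M_p(Y)` is the operator norm of the matrix
of operators obtained by applying the embedding entrywise. -/
noncomputable def OperatorAlgebraEmbedding.matrixNorm {Y : Type u}
    [NonUnitalNormedRing Y] [NormedSpace ℂ Y] (e : OperatorAlgebraEmbedding Y)
    (p : ℕ) (v : Matrix (Fin p) (Fin p) Y) : ℝ :=
  letI := e.normH; letI := e.ipsH
  opMatrixNorm (v.map e.ρ)

/-- The Banach space projective tensor norm `‖·‖_γ` on the algebraic tensor product. -/
noncomputable def bsProjNorm {A B : Type u} [NonUnitalNormedRing A] [NormedSpace ℂ A]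
    [NonUnitalNormedRing B] [NormedSpace ℂ B] (u : A ⊗[ℂ] B) : ℝ :=
  sInf { r : ℝ | ∃ (n : ℕ) (a : Fin n → A) (b : Fin n → B),
      u = ∑ i, a i ⊗ₜ[ℂ] b i ∧ r = ∑ i, ‖a i‖ * ‖b i‖ }

/-- A C⋆-algebra `A` is subhomogeneous if there is `n : ℕ` bounding the (finite)
dimensions of all its irreducible `*`-representations. -/
def IsSubhomogeneous (A : Type u) [NonUnitalCStarAlgebra A] : Prop :=
  ∃ n : ℕ, ∀ ρ : IrreducibleRepOn A,
    letI := ρ.normH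
    letI := ρ.ipsH
    FiniteDimensional ℂ ρ.H ∧ Module.finrank ℂ ρ.H ≤ n

/-!
Call a representation `u = ∑ aᵢ ⊗ bᵢ` a row representation of size `δ` if `‖∑ aᵢ aᵢ⋆‖ ≤ δ` and
`‖∑ bᵢ⋆ bᵢ‖ ≤ δ`, and a column representation if the adjoints sit on the other factors; the infima
of the sizes are the Haagerup norms of `u` and of its flip. The point is that `‖u‖_∧` is equivalent
to the larger of the two. It dominates both because the rows and columns of a matrix have norm at
most that of the matrix. Conversely, a row and a column representation of `u` can be brought, by
unitary changes of families, to the form `∑ xᵢ ⊗ yᵢ` and `∑ (√tᵢ xᵢ) ⊗ (yᵢ / √tᵢ)` with scalars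
`tᵢ > 0`. The noncommutative Grothendieck inequality needs both estimates for the same family; for
suitable finite matrices of transition weights, tensoring `xᵢ` and `yᵢ` with weighted matrix units
absorbs the `tᵢ`, as a type III factor would.

For a single side the ideal problem is linear algebra in a Hilbert space `H`. An element of the
completion is a series of blocks `∑ aᵢ ⊗ bᵢ` with `a` and `b` square-summable on their sides, so
that `a` is the image of an orthonormal family of `H` under an operator `H → A`. If all left
slices lie in `I`, the preimage `W ⊆ H` of `I` under this operator contains the coefficient
vectors `(ψ(bᵢ))ᵢ`, so the part of `b` orthogonal to `W` vanishes. Replacing the operator by its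
composition with the projection onto `W` therefore leaves the tensor unchanged and puts the left
factors into `I`.

The representations obtained on the two sides differ, but multiplication on the left by a
contractive approximate unit of `I` merges them: it moves each approximant into `I ⊗ B` without
increasing the size of a representation of the error. The same device applied to an approximant
from `A ⊗ J` lands in `I ⊗ J`.
-/

section CStarNorm

lemma IsCStarNorm.nonneg {M : Type*} [NonUnitalRing M] [StarRing M] [Module ℂ M] {N : M → ℝ}
    (hN : IsCStarNorm N) (x : M) : 0 ≤ N x := by
  have hzero : N 0 = 0 := by simpa using hN.smul_eq 0 0
  have hneg : N (-x) = N x := by simpa using hN.smul_eq (-1) x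
  have hadd := hN.add_le x (-x)
  rw [add_neg_cancel, hzero, hneg] at hadd
  linarith

variable {M : Type*} [NonUnitalCStarAlgebra M] {N : M → ℝ}

lemma abs_le_norm_of_mem_quasispectrum {h : M} (hh : IsSelfAdjoint h) {t : ℝ}
    (ht : t ∈ quasispectrum ℝ h) : |t| ≤ ‖h‖ :=
  NonUnitalIsometricContinuousFunctionalCalculus.norm_quasispectrum_le h ht hh

/-- The element `r = 1 - √(1 - h²)` satisfies `(1 - r)² + h² = 1`, that is, `1 - r ± i h` are
unitaries in the unitization. -/
lemma exists_isSelfAdjoint_mul_self_add_mul_self {h : M} (hh : IsSelfAdjoint h) (hle : ‖h‖ ≤ 1) :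
    ∃ r : M, IsSelfAdjoint r ∧ Commute h r ∧ r * r + h * h = r + r := by
  let f : ℝ → ℝ := fun t => 1 - Real.sqrt (1 - t ^ 2)
  have hf : ContinuousOn f (quasispectrum ℝ h) := by fun_prop
  have : f 0 = 0 := by simp [f]
  have hid : cfcₙ (fun t : ℝ => t) h = h := cfcₙ_id' ℝ h
  refine ⟨cfcₙ f h, cfcₙ_predicate _ _, ?_, ?_⟩
  · simpa only [hid] using cfcₙ_commute_cfcₙ (fun t : ℝ => t) f h
  · have hsq : h * h = cfcₙ (fun t : ℝ => t * t) h := by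
      rw [cfcₙ_mul (fun t : ℝ => t) (fun t : ℝ => t) h, hid]
    rw [hsq, ← cfcₙ_mul f f h, ← cfcₙ_add _ _ h, ← cfcₙ_add _ _ h]
    refine cfcₙ_congr fun t ht => ?_
    have habs : |t| ≤ 1 := (abs_le_norm_of_mem_quasispectrum hh ht).trans hle
    have hnonneg : 0 ≤ 1 - t ^ 2 := by linarith [(sq_le_one_iff_abs_le_one t).2 habs]
    linear_combination Real.mul_self_sqrt hnonneg

lemma IsCStarNorm.apply_mul_le_of_isSelfAdjoint (hN : IsCStarNorm N) {h : M}
    (hh : IsSelfAdjoint h) (hle : ‖h‖ ≤ 1) (m : M) : N (h * m) ≤ N m := by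
  obtain ⟨r, hr, hcomm, hrel⟩ := exists_isSelfAdjoint_mul_self_add_mul_self hh hle
  have isometric : ∀ c : ℂ, star c = -c → c * c = -1 → N (m - r * m + c • (h * m)) = N m := by
    intro c hc hcc
    have expand : star (m - r * m + c • (h * m)) * (m - r * m + c • (h * m))
        = star m * m + star m * ((r * r + h * h - (r + r)) * m)
          + c • (star m * ((h * r - r * h) * m)) := by
      simp only [star_add, star_sub, star_mul, star_smul, hr.star_eq, hh.star_eq, hc, mul_add,
        add_mul, mul_sub, sub_mul, smul_mul_assoc, mul_smul_comm, smul_smul, hcc, smul_add,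
        smul_sub, neg_smul, one_smul, mul_assoc, neg_mul, smul_neg, neg_neg]
      abel
    have hstar := hN.star_mul_self (m - r * m + c • (h * m))
    rw [expand, hrel, hcomm.eq, sub_self, sub_self, zero_mul, mul_zero, smul_zero, add_zero,
      add_zero, hN.star_mul_self m] at hstar
    exact ((mul_self_inj (hN.nonneg _) (hN.nonneg _)).1 hstar).symm
  have decompose : (2 * Complex.I) • (h * m) = (m - r * m + Complex.I • (h * m))
      + (-1 : ℂ) • (m - r * m + (-Complex.I) • (h * m)) := by
    module
  have htri := hN.add_le (m - r * m + Complex.I • (h * m))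
    ((-1 : ℂ) • (m - r * m + (-Complex.I) • (h * m)))
  rw [← decompose, hN.smul_eq, hN.smul_eq, isometric Complex.I (by simp) (by simp),
    isometric (-Complex.I) (by simp) (by simp)] at htri
  norm_num at htri
  linarith

lemma IsCStarNorm.le_norm (hN : IsCStarNorm N) (x : M) : N x ≤ ‖x‖ := by
  have le_of_isSelfAdjoint : ∀ h : M, IsSelfAdjoint h → N h ≤ ‖h‖ := by
    intro h hh
    obtain rfl | hne := eq_or_ne h 0
    · simpa using (hN.smul_eq 0 0).le
    have hpos : 0 < ‖h‖ := norm_pos_iff.2 hne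
    have hsq : ‖h‖⁻¹ * (N h * N h) ≤ N h := by
      have := hN.apply_mul_le_of_isSelfAdjoint (h := ((‖h‖⁻¹ : ℝ) : ℂ) • h)
        (by simp [IsSelfAdjoint, hh.star_eq]) (by simp [norm_smul, hpos.ne']) h
      rwa [smul_mul_assoc, hN.smul_eq, Complex.norm_real, norm_inv, norm_norm,
        ← congrArg (· * h) hh.star_eq, hN.star_mul_self] at this
    rw [inv_mul_le_iff₀ hpos] at hsq
    by_contra! hlt
    nlinarith
  have hsq := le_of_isSelfAdjoint _ (IsSelfAdjoint.star_mul_self x)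
  rw [hN.star_mul_self, CStarRing.norm_star_mul_self] at hsq
  exact (mul_self_le_mul_self_iff (hN.nonneg x) (norm_nonneg x)).2 hsq

/-- `max 0 (t - r)` divided `k` times by `t`, without the singularity at `0`. -/
def truncDiv (r : ℝ) (k : ℕ) (t : ℝ) : ℝ := max 0 (t - r) / (max t r) ^ k

lemma continuous_truncDiv {r : ℝ} (hr : 0 < r) (k : ℕ) : Continuous (truncDiv r k) :=
  Continuous.div (by fun_prop) (by fun_prop) fun _ => (pow_pos (lt_max_of_lt_right hr) k).ne'

lemma truncDiv_apply_zero {r : ℝ} (hr : 0 < r) (k : ℕ) : truncDiv r k 0 = 0 := by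
  simp [truncDiv, hr.le]

lemma truncDiv_eq_mul_truncDiv_succ {r : ℝ} (hr : 0 < r) (k : ℕ) (t : ℝ) :
    truncDiv r k t = t * truncDiv r (k + 1) t := by
  unfold truncDiv
  rcases le_total t r with htr | htr
  · simp [htr]
  · have : t ≠ 0 := (hr.trans_le htr).ne'
    rw [max_eq_left htr]
    field_simp
    ring

lemma cfcₙ_truncDiv_eq_mul {r : ℝ} (hr : 0 < r) (k : ℕ) {h : M} (hh : IsSelfAdjoint h) :
    cfcₙ (truncDiv r k) h = h * cfcₙ (truncDiv r (k + 1)) h := by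
  conv_rhs => enter [1]; rw [← cfcₙ_id' ℝ h]
  rw [← cfcₙ_mul _ _ h (by fun_prop) (by simp) (continuous_truncDiv hr _).continuousOn
    (truncDiv_apply_zero hr _)]
  exact cfcₙ_congr fun t _ => truncDiv_eq_mul_truncDiv_succ hr k t

lemma norm_cfcₙ_truncDiv_le {r : ℝ} (hr : 0 < r) (k : ℕ) {h : M} (hh : IsSelfAdjoint h) :
    ‖cfcₙ (truncDiv r k) h‖ ≤ ‖h‖ / r ^ k := by
  refine norm_cfcₙ_le fun t ht => ?_
  have habs := abs_le_norm_of_mem_quasispectrum hh ht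
  have hmax : 0 < max t r := lt_max_of_lt_right hr
  have hnum : max 0 (t - r) ≤ ‖h‖ := max_le (norm_nonneg _) (by linarith [le_abs_self t])
  rw [truncDiv, Real.norm_of_nonneg (div_nonneg (le_max_left _ _) (pow_pos hmax k).le)]
  gcongr
  exact le_max_right _ _

lemma norm_le_of_cfcₙ_truncDiv_zero_eq_zero [PartialOrder M] [StarOrderedRing M] {r : ℝ}
    (hr : 0 < r) {h : M} (hh : 0 ≤ h) (hz : cfcₙ (truncDiv r 0) h = 0) : ‖h‖ ≤ r := by
  have hsa : IsSelfAdjoint h := .of_nonneg hh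
  have heq : h = cfcₙ (fun t => t - truncDiv r 0 t) h := by
    rw [cfcₙ_sub (fun t : ℝ => t) (truncDiv r 0) h (by fun_prop) (by simp)
      (continuous_truncDiv hr 0).continuousOn (truncDiv_apply_zero hr 0), hz,
      cfcₙ_id' ℝ h, sub_zero]
  rw [heq]
  refine norm_cfcₙ_le fun t ht => ?_
  have htn : 0 ≤ t := quasispectrum_nonneg_of_nonneg h hh t ht
  simp only [truncDiv, pow_zero, div_one, Real.norm_eq_abs]
  rcases le_total t r with htr | htr
  · rwa [max_eq_left (by linarith), sub_zero, abs_of_nonneg htn]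
  · rw [max_eq_right (by linarith), sub_sub_cancel, abs_of_pos hr]

/-- Otherwise `N h < r < ‖h‖` for some `h ≥ 0`; then `g = max 0 (h - r)` is `h ^ k` times an element
of norm at most `‖h‖ / r ^ k`, so that `N g ≤ ‖h‖ (N h / r) ^ k → 0` although `g ≠ 0`. -/
lemma IsCStarNorm.eq_norm (hN : IsCStarNorm N) (x : M) : N x = ‖x‖ := by
  let _ : PartialOrder M := CStarAlgebra.spectralOrder M
  let _ : StarOrderedRing M := CStarAlgebra.spectralOrderedRing M
  refine le_antisymm (hN.le_norm x) ?_
  by_contra! hlt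
  obtain ⟨h, hh⟩ : ∃ h, h = star x * x := ⟨_, rfl⟩
  have hlt' : N h < ‖h‖ := by
    rw [hh, hN.star_mul_self, CStarRing.norm_star_mul_self]
    exact mul_self_lt_mul_self (hN.nonneg _) hlt
  obtain ⟨r, hNr, hrh⟩ := exists_between hlt'
  have hr : 0 < r := (hN.nonneg _).trans_lt hNr
  have hpos : 0 ≤ h := hh ▸ star_mul_self_nonneg x
  have hsa : IsSelfAdjoint h := .of_nonneg hpos
  have hpow : ∀ k, N (cfcₙ (truncDiv r 0) h) ≤ N h ^ k * N (cfcₙ (truncDiv r k) h) := by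
    intro k
    induction k with
    | zero => simp
    | succ k ih =>
      refine ih.trans ?_
      rw [cfcₙ_truncDiv_eq_mul hr k hsa, pow_succ, mul_assoc]
      exact mul_le_mul_of_nonneg_left (hN.mul_le _ _) (pow_nonneg (hN.nonneg _) _)
  have hbound : ∀ k, N (cfcₙ (truncDiv r 0) h) ≤ ‖h‖ * (N h / r) ^ k := fun k =>
    calc N (cfcₙ (truncDiv r 0) h) ≤ N h ^ k * (‖h‖ / r ^ k) :=
          (hpow k).trans <| mul_le_mul_of_nonneg_left
            ((hN.le_norm _).trans (norm_cfcₙ_truncDiv_le hr k hsa)) (pow_nonneg (hN.nonneg _) _)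
      _ = ‖h‖ * (N h / r) ^ k := by rw [div_pow]; ring
  have hlim : Filter.Tendsto (fun k : ℕ => ‖h‖ * (N h / r) ^ k) Filter.atTop (nhds 0) := by
    simpa using (tendsto_pow_atTop_nhds_zero_of_lt_one (div_nonneg (hN.nonneg _) hr.le)
      ((div_lt_one hr).2 hNr)).const_mul ‖h‖
  have hz : cfcₙ (truncDiv r 0) h = 0 :=
    hN.eq_zero_of _ (le_antisymm (ge_of_tendsto' hlim hbound) (hN.nonneg _))
  exact hrh.not_ge (norm_le_of_cfcₙ_truncDiv_zero_eq_zero hr hpos hz)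

end CStarNorm

section AlmostUnital

lemma norm_one_le_of_cstarRing (P : Type*) [NormedRing P] [StarRing P] [CStarRing P] :
    ‖(1 : P)‖ ≤ 1 := by
  rcases subsingleton_or_nontrivial P with _ | _
  · simp [Subsingleton.elim (1 : P) 0]
  · exact CStarRing.norm_one.le

lemma norm_le_one_of_star_mul_self_eq_one {P : Type*} [NormedRing P] [StarRing P] [CStarRing P]
    {x : P} (hx : star x * x = 1) : ‖x‖ ≤ 1 := by
  have hsq : ‖x‖ * ‖x‖ ≤ 1 := by
    rw [← CStarRing.norm_star_mul_self, hx]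
    exact norm_one_le_of_cstarRing P
  exact (mul_self_le_mul_self_iff (norm_nonneg x) zero_le_one).2 (by rwa [one_mul])

variable {P Q : Type*} [CStarAlgebra P] [CStarAlgebra Q]

lemma norm_one_add_smul_le {k : Q} (hk : IsSelfAdjoint k) (hk1 : ‖k‖ ≤ 1) (s : ℝ) :
    ‖1 + (s * Complex.I) • k‖ ≤ 1 + s ^ 2 / 2 := by
  have expand : star (1 + (s * Complex.I) • k) * (1 + (s * Complex.I) • k)
      = 1 + ((s : ℂ) ^ 2) • (k * k) := by
    have hsq : (s * Complex.I) * (s * Complex.I) = -(s : ℂ) ^ 2 := by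
      linear_combination (s : ℂ) ^ 2 * Complex.I_sq
    have hstar : star (s * Complex.I) = -(s * Complex.I) := by simp
    simp only [star_add, star_one, star_smul, hk.star_eq, hstar, mul_add, add_mul, mul_one,
      one_mul, smul_mul_assoc, mul_smul_comm, smul_add, smul_neg, smul_smul, neg_mul, neg_smul,
      hsq, neg_neg]
    abel
  have hsq : ‖1 + (s * Complex.I) • k‖ * ‖1 + (s * Complex.I) • k‖ ≤ 1 + s ^ 2 * 1 := by
    rw [← CStarRing.norm_star_mul_self, expand]
    refine (norm_add_le _ _).trans (add_le_add (norm_one_le_of_cstarRing Q) ?_)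
    rw [norm_smul, norm_pow, Complex.norm_real, Real.norm_eq_abs, sq_abs]
    gcongr
    exact (norm_mul_le _ _).trans (mul_le_one₀ hk1 (norm_nonneg _) hk1)
  refine le_of_sq_le_sq ?_ (by positivity)
  nlinarith [sq_nonneg (s ^ 2)]

lemma abs_im_le_of_one_sub_le_re {g : Q →ₗ[ℂ] ℂ} (hg : ∀ y, ‖g y‖ ≤ ‖y‖) {τ : ℝ}
    (h1 : 1 - τ ≤ (g 1).re) {k : Q} (hk : IsSelfAdjoint k) (hk1 : ‖k‖ ≤ 1) {β : ℝ} (hβ : 0 < β) :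
    |(g k).im| ≤ τ / β + β / 2 := by
  have signed : ∀ s : ℝ, 1 - τ - s * (g k).im ≤ 1 + s ^ 2 / 2 := by
    intro s
    have hre := (Complex.re_le_norm _).trans ((hg _).trans (norm_one_add_smul_le hk hk1 s))
    simp only [map_add, map_smul, smul_eq_mul, mul_assoc, Complex.add_re, Complex.re_ofReal_mul,
      Complex.I_mul_re] at hre
    linarith
  have hdiv : τ / β + β / 2 = (τ + β ^ 2 / 2) / β := by field_simp
  rw [hdiv, le_div_iff₀ hβ, ← abs_of_pos hβ, ← abs_mul, abs_of_pos hβ, abs_le]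
  constructor <;> linarith [signed β, signed (-β)]

lemma norm_cfc_add_smul_cfc_le_one (S : P) {u v : ℝ → ℝ} (hu : Continuous u) (hv : Continuous v)
    (huv : ∀ t, u t * u t + v t * v t = 1) {c : ℂ} (hc : star c = -c) (hcc : c * c = -1) :
    ‖cfc u S + c • cfc v S‖ ≤ 1 := by
  have hustar : star (cfc u S) = cfc u S := (cfc_predicate u S : IsSelfAdjoint _)
  have hvstar : star (cfc v S) = cfc v S := (cfc_predicate v S : IsSelfAdjoint _)
  by_cases hS : IsSelfAdjoint S
  · have circle : cfc u S * cfc u S + cfc v S * cfc v S = 1 := by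
      rw [← cfc_mul _ _ S, ← cfc_mul _ _ S, ← cfc_add _ _ _]
      simp only [huv]
      exact cfc_const_one ℝ S
    apply norm_le_one_of_star_mul_self_eq_one
    simp only [star_add, star_smul, hustar, hvstar, hc, mul_add, add_mul, smul_mul_assoc,
      mul_smul_comm, neg_smul, neg_mul, smul_add, smul_smul, hcc, one_smul, neg_neg, smul_neg,
      (cfc_commute_cfc u v S).eq, ← circle]
    abel
  · simp [cfc_apply_of_not_predicate S hS]

/-- A contractive bilinear form on a pair of C⋆-algebras which attains its norm at `(1, 1)` up to
`η`. -/
structure AlmostUnital (G : P →ₗ[ℂ] Q →ₗ[ℂ] ℂ) (η : ℝ) : Prop where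
  norm_le : ∀ x y, ‖G x y‖ ≤ ‖x‖ * ‖y‖
  one_sub_le : 1 - η ≤ (G 1 1).re

namespace AlmostUnital

variable {G : P →ₗ[ℂ] Q →ₗ[ℂ] ℂ} {η : ℝ}

lemma flip (hG : AlmostUnital G η) : AlmostUnital G.flip η where
  norm_le x y := (hG.norm_le y x).trans_eq (mul_comm _ _)
  one_sub_le := hG.one_sub_le

lemma norm_apply_le (hG : AlmostUnital G η) {x : P} (hx : ‖x‖ ≤ 1) (y : Q) : ‖G x y‖ ≤ ‖y‖ :=
  (hG.norm_le x y).trans (mul_le_of_le_one_left (norm_nonneg _) hx)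

lemma re_apply_one_le (hG : AlmostUnital G η) (x : P) : (G x 1).re ≤ ‖x‖ :=
  (Complex.re_le_norm _).trans <| (hG.norm_le x 1).trans <|
    mul_le_of_le_one_right (norm_nonneg _) (norm_one_le_of_cstarRing Q)

lemma nonneg (hG : AlmostUnital G η) : 0 ≤ η := by
  linarith [hG.one_sub_le, hG.re_apply_one_le 1, norm_one_le_of_cstarRing P]

lemma neg_mul_le_re_apply_one [PartialOrder P] [StarOrderedRing P] (hG : AlmostUnital G η) {a : P}
    (ha : 0 ≤ a) {r : ℝ} (har : ‖a‖ ≤ r) : -(η * r) ≤ (G a 1).re := by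
  have hr : 0 ≤ r := (norm_nonneg a).trans har
  have hnorm : ‖algebraMap ℝ P r - a‖ ≤ r := by
    have hle : a ≤ algebraMap ℝ P r := (CStarAlgebra.norm_le_iff_le_algebraMap a hr ha).1 har
    rw [CStarAlgebra.norm_le_iff_le_algebraMap _ hr (sub_nonneg.2 hle)]
    exact sub_le_self _ ha
  have hre : (G (algebraMap ℝ P r - a) 1).re = r * (G 1 1).re - (G a 1).re := by
    rw [Algebra.algebraMap_eq_smul_one, ← Complex.coe_smul]
    simp
  nlinarith [hG.re_apply_one_le (algebraMap ℝ P r - a), hG.one_sub_le]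

/-- If `u² + v² = 1` and `u(S)` is almost norming for `G(·, 1)`, then so are the contractions
`u(S) ± i v(S)`. -/
lemma abs_im_le_and_abs_re_le (hG : AlmostUnital G η) (S : P) {u v : ℝ → ℝ} (hu : Continuous u)
    (hv : Continuous v) (huv : ∀ t, u t * u t + v t * v t = 1) {τ : ℝ}
    (hτ : 1 - τ ≤ (G (cfc u S) 1).re) {k : Q} (hk : IsSelfAdjoint k) (hk1 : ‖k‖ ≤ 1) {β : ℝ}
    (hβ : 0 < β) :
    |(G (cfc u S) k).im| ≤ 2 * τ / β + β / 2 ∧ |(G (cfc v S) k).re| ≤ 2 * τ / β + β / 2 := by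
  have hplus := norm_cfc_add_smul_cfc_le_one S hu hv huv (c := Complex.I) (by simp) (by simp)
  have hminus := norm_cfc_add_smul_cfc_le_one S hu hv huv (c := -Complex.I) (by simp) (by simp)
  have replus := (hG.re_apply_one_le _).trans hplus
  have reminus := (hG.re_apply_one_le _).trans hminus
  simp only [map_add, map_smul, LinearMap.add_apply, LinearMap.smul_apply, smul_eq_mul, neg_mul,
    Complex.add_re, Complex.neg_re, Complex.I_mul_re, neg_neg] at replus reminus
  have implus := abs_im_le_of_one_sub_le_re (hG.norm_apply_le hplus) (τ := 2 * τ)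
    (by simp; linarith) hk hk1 hβ
  have imminus := abs_im_le_of_one_sub_le_re (hG.norm_apply_le hminus) (τ := 2 * τ)
    (by simp; linarith) hk hk1 hβ
  simp only [map_add, map_smul, LinearMap.add_apply, LinearMap.smul_apply, smul_eq_mul, neg_mul,
    Complex.add_im, Complex.neg_im, Complex.I_mul_im, abs_le] at implus imminus
  constructor <;> rw [abs_le] <;> constructor <;> linarith

lemma abs_im_apply_cfc_le (hG : AlmostUnital G η) {S : P} (hS : IsSelfAdjoint S) {p : ℝ → ℝ}
    (hp : Continuous p) (hp0 : ∀ t, 0 ≤ p t) (hp1 : ∀ t, p t ≤ 1) {k : Q} (hk : IsSelfAdjoint k)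
    (hk1 : ‖k‖ ≤ 1) {β : ℝ} (hβ : 0 < β) :
    |(G (cfc p S) k).im| ≤ (2 * (G (cfc p S) 1).re + 3 * η) / β + β := by
  have hsub : cfc (fun t => 1 - p t) S = 1 - cfc p S := by
    rw [cfc_sub _ _ S, cfc_const_one ℝ S]
  have hcompl := (hG.abs_im_le_and_abs_re_le S (u := fun t => 1 - p t)
    (v := fun t => Real.sqrt (2 * p t - p t ^ 2)) (by fun_prop) (by fun_prop)
    (fun t => by rw [Real.mul_self_sqrt (by nlinarith [hp0 t, hp1 t])]; ring)
    (τ := η + (G (cfc p S) 1).re) (by rw [hsub]; simp; linarith [hG.one_sub_le]) hk hk1 hβ).1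
  have hone := abs_im_le_of_one_sub_le_re (hG.norm_apply_le (norm_one_le_of_cstarRing P))
    hG.one_sub_le hk hk1 hβ
  rw [hsub, map_sub, LinearMap.sub_apply, Complex.sub_im] at hcompl
  calc |(G (cfc p S) k).im|
      = |(G 1 k).im - ((G 1 k).im - (G (cfc p S) k).im)| := by rw [sub_sub_cancel]
    _ ≤ (η / β + β / 2) + (2 * (η + (G (cfc p S) 1).re) / β + β / 2) :=
        (abs_sub _ _).trans (add_le_add hone hcompl)
    _ = (2 * (G (cfc p S) 1).re + 3 * η) / β + β := by ring

lemma abs_re_apply_cfc_le (hG : AlmostUnital G η) {S : P} (hS : IsSelfAdjoint S) {p : ℝ → ℝ}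
    (hp : Continuous p) (hp0 : ∀ t, 0 ≤ p t) (hp1 : ∀ t, p t ≤ 1) {k : Q} (hk : IsSelfAdjoint k)
    (hk1 : ‖k‖ ≤ 1) {β : ℝ} (hβ : 0 < β) :
    |(G (cfc p S) k).re| ≤ 2 * ((G (cfc p S) 1).re + 2 * η) / β + β / 2 := by
  let _ : PartialOrder P := CStarAlgebra.spectralOrder P
  let _ : StarOrderedRing P := CStarAlgebra.spectralOrderedRing P
  let q : ℝ → ℝ := fun t => Real.sqrt (1 - p t ^ 2)
  have hq : Continuous q := by fun_prop
  have hle_q : ∀ t, 1 - p t ≤ q t := fun t =>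
    Real.le_sqrt_of_sq_le (by nlinarith [hp0 t, hp1 t])
  have hq_le : ∀ t, q t ≤ 1 := fun t => Real.sqrt_le_iff.2 ⟨zero_le_one, by nlinarith [hp0 t]⟩
  have hτ : 1 - ((G (cfc p S) 1).re + 2 * η) ≤ (G (cfc q S) 1).re := by
    have hpos := hG.neg_mul_le_re_apply_one (a := cfc (fun t => q t - (1 - p t)) S)
      (cfc_nonneg fun t _ => sub_nonneg.2 (hle_q t)) (r := 1) <|
      norm_cfc_le zero_le_one fun t _ => by
        rw [Real.norm_of_nonneg (sub_nonneg.2 (hle_q t))]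
        linarith [hq_le t, hp1 t]
    rw [cfc_sub _ _ S, cfc_sub _ _ S, cfc_const_one ℝ S] at hpos
    simp only [map_sub, LinearMap.sub_apply, Complex.sub_re] at hpos
    linarith [hG.one_sub_le]
  exact (hG.abs_im_le_and_abs_re_le S hq hp
    (fun t => by rw [Real.mul_self_sqrt (by nlinarith [hp0 t, hp1 t])]; ring) hτ hk hk1 hβ).2

lemma norm_apply_cfc_le (hG : AlmostUnital G η) {S : P} (hS : IsSelfAdjoint S) {p : ℝ → ℝ}
    (hp : Continuous p) (hp0 : ∀ t, 0 ≤ p t) (hp1 : ∀ t, p t ≤ 1) {k : Q} (hk : IsSelfAdjoint k)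
    (hk1 : ‖k‖ ≤ 1) {β : ℝ} (hβ : 0 < β) :
    ‖G (cfc p S) k‖ ≤ 4 * ((G (cfc p S) 1).re + 2 * η) / β + 2 * β := by
  have hη : 0 ≤ η / β := div_nonneg hG.nonneg hβ.le
  calc ‖G (cfc p S) k‖ ≤ |(G (cfc p S) k).re| + |(G (cfc p S) k).im| :=
        Complex.norm_le_abs_re_add_abs_im _
    _ ≤ (2 * ((G (cfc p S) 1).re + 2 * η) / β + β / 2)
          + ((2 * (G (cfc p S) 1).re + 3 * η) / β + β) :=
        add_le_add (hG.abs_re_apply_cfc_le hS hp hp0 hp1 hk hk1 hβ)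
          (hG.abs_im_apply_cfc_le hS hp hp0 hp1 hk hk1 hβ)
    _ = 4 * ((G (cfc p S) 1).re + 2 * η) / β + 2 * β - η / β - β / 2 := by ring
    _ ≤ 4 * ((G (cfc p S) 1).re + 2 * η) / β + 2 * β := by linarith

end AlmostUnital

end AlmostUnital

section DyadicSlices

/-- The part of `t` between the levels `2 ^ l` and `2 ^ (l + 1)`. -/
def dyadicSlice (l : ℕ) (t : ℝ) : ℝ := min (max t 0) (2 ^ (l + 1)) - min (max t 0) (2 ^ l)

lemma continuous_dyadicSlice (l : ℕ) : Continuous (dyadicSlice l) := by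
  unfold dyadicSlice
  fun_prop

lemma dyadicSlice_nonneg (l : ℕ) (t : ℝ) : 0 ≤ dyadicSlice l t :=
  sub_nonneg.2 (min_le_min_left _ (pow_le_pow_right₀ one_le_two (Nat.le_succ l)))

lemma dyadicSlice_le (l : ℕ) (t : ℝ) : dyadicSlice l t ≤ 2 ^ l := by
  unfold dyadicSlice
  have hsucc : (2 : ℝ) ^ (l + 1) = 2 * 2 ^ l := by ring
  rcases le_total (max t 0) (2 ^ l) with h | h
  · rw [min_eq_left h]
    linarith [min_le_left (max t 0) ((2 : ℝ) ^ (l + 1)), pow_pos (zero_lt_two' ℝ) l]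
  · rw [min_eq_right h]
    linarith [min_le_right (max t 0) ((2 : ℝ) ^ (l + 1))]

lemma dyadicSlice_mul_le (l : ℕ) (t : ℝ) : dyadicSlice l t * (2 ^ l) ^ 3 ≤ t ^ 4 := by
  have hpos : (0 : ℝ) < 2 ^ l := by positivity
  rcases le_total t (2 ^ l) with h | h
  · have hmax : max t 0 ≤ 2 ^ l := max_le h hpos.le
    have hmin : min (max t 0) (2 ^ (l + 1)) ≤ max t 0 := min_le_left _ _
    have hle : dyadicSlice l t ≤ 0 := by
      rw [dyadicSlice, min_eq_left hmax]
      linarith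
    exact (mul_nonpos_of_nonpos_of_nonneg hle (by positivity)).trans (by positivity)
  · have ht : 0 ≤ t := hpos.le.trans h
    have hle : dyadicSlice l t ≤ t := by
      have hmin : min t (2 ^ (l + 1)) ≤ t := min_le_left _ _
      rw [dyadicSlice, max_eq_left ht, min_eq_right h]
      linarith
    calc dyadicSlice l t * (2 ^ l) ^ 3 ≤ t * t ^ 3 := by gcongr
      _ = t ^ 4 := by ring

lemma add_sum_dyadicSlice (L : ℕ) (t : ℝ) :
    min (max t 0) 1 + ∑ l ∈ Finset.range L, dyadicSlice l t = min (max t 0) (2 ^ L) := by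
  induction L with
  | zero => simp
  | succ L ih =>
    rw [Finset.sum_range_succ, ← add_assoc, ih, dyadicSlice]
    ring

/-- Truncation of the real line to `[-1, 1]`. -/
def clamp (t : ℝ) : ℝ := max (-1) (min t 1)

lemma continuous_clamp : Continuous clamp := by
  unfold clamp
  fun_prop

lemma abs_clamp_le_one (t : ℝ) : |clamp t| ≤ 1 :=
  abs_le.2 ⟨le_max_left _ _, max_le (by norm_num) (min_le_right _ _)⟩

lemma clamp_eq_sub (t : ℝ) : clamp t = min (max t 0) 1 - min (max (-t) 0) 1 := by
  unfold clamp
  grind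

lemma sub_clamp_mul_self_le (t : ℝ) : (t - clamp t) * (t - clamp t) ≤ 1 / 16 * t ^ 4 := by
  unfold clamp
  rcases le_total t 1 with ht | ht
  · rw [min_eq_left ht]
    rcases le_total (-1) t with ht' | ht'
    · rw [max_eq_right ht', sub_self, zero_mul]
      positivity
    · rw [max_eq_left ht']
      nlinarith [mul_nonneg (sq_nonneg (t + 2)) (show 0 ≤ t ^ 2 - 4 * t - 4 by nlinarith)]
  · rw [min_eq_right ht, max_eq_right (by norm_num)]
    nlinarith [mul_nonneg (sq_nonneg (t - 2)) (show 0 ≤ t ^ 2 + 4 * t - 4 by nlinarith)]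

lemma clamp_add_sum_dyadicSlice {L : ℕ} {t : ℝ} (ht : |t| ≤ 2 ^ L) :
    clamp t + ∑ l ∈ Finset.range L, (dyadicSlice l t - dyadicSlice l (-t)) = t := by
  have hL : (0 : ℝ) ≤ 2 ^ L := by positivity
  have hpos := add_sum_dyadicSlice L t
  have hneg := add_sum_dyadicSlice L (-t)
  rw [min_eq_left (max_le ((le_abs_self t).trans ht) hL)] at hpos
  rw [min_eq_left (max_le ((neg_le_abs t).trans ht) hL)] at hneg
  rw [Finset.sum_sub_distrib, clamp_eq_sub]
  have hparts : max t 0 - max (-t) 0 = t := by grind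
  linarith

variable {P Q : Type*} [CStarAlgebra P] [CStarAlgebra Q]

lemma abs_le_norm_of_mem_spectrum {S : P} (hS : IsSelfAdjoint S) {t : ℝ} (ht : t ∈ spectrum ℝ S) :
    |t| ≤ ‖S‖ :=
  abs_le_norm_of_mem_quasispectrum hS (spectrum_subset_quasispectrum ℝ S ht)

lemma cfc_clamp_add_sum_dyadicSlice {S : P} (hS : IsSelfAdjoint S) {L : ℕ} (hSL : ‖S‖ ≤ 2 ^ L) :
    cfc clamp S + ∑ l ∈ Finset.range L,
      (cfc (dyadicSlice l) S - cfc (fun t => dyadicSlice l (-t)) S) = S := by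
  have hpos := continuous_dyadicSlice
  have hneg : ∀ l, Continuous fun t => dyadicSlice l (-t) := fun l => (hpos l).comp continuous_neg
  have hsub : ∀ l, cfc (dyadicSlice l) S - cfc (fun t => dyadicSlice l (-t)) S
      = cfc (fun t => dyadicSlice l t - dyadicSlice l (-t)) S := fun l =>
    (cfc_sub _ _ S (hpos l).continuousOn (hneg l).continuousOn).symm
  have hsum : Continuous (∑ l ∈ Finset.range L, fun t => dyadicSlice l t - dyadicSlice l (-t)) := by
    rw [Finset.sum_fn]
    exact continuous_finsetSum _ fun l _ => (hpos l).sub (hneg l)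
  simp only [hsub]
  rw [← cfc_sum (fun l t => dyadicSlice l t - dyadicSlice l (-t)) S _
      fun l _ => ((hpos l).sub (hneg l)).continuousOn,
    ← cfc_add S _ _ continuous_clamp.continuousOn hsum.continuousOn]
  conv_rhs => rw [← cfc_id' ℝ S]
  refine cfc_congr fun t ht => ?_
  simp only [Finset.sum_apply]
  exact clamp_add_sum_dyadicSlice ((abs_le_norm_of_mem_spectrum hS ht).trans hSL)

namespace AlmostUnital

variable {G : P →ₗ[ℂ] Q →ₗ[ℂ] ℂ} {η : ℝ}

lemma mul_re_apply_cfc_le (hG : AlmostUnital G η) {S : P} (hS : IsSelfAdjoint S) {D : ℝ}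
    (hSD : ‖S‖ ^ 4 ≤ D) {x : ℝ} (hx : 0 < x) {p : ℝ → ℝ} (hp : Continuous p) (hp0 : ∀ t, 0 ≤ p t)
    (hp4 : ∀ t, p t * x ^ 3 ≤ t ^ 4) :
    x ^ 3 * (G (cfc p S) 1).re ≤ (G (S ^ 4) 1).re + η * D := by
  let _ : PartialOrder P := CStarAlgebra.spectralOrder P
  let _ : StarOrderedRing P := CStarAlgebra.spectralOrderedRing P
  have hcfc : cfc (fun t => t ^ 4 - x ^ 3 * p t) S = S ^ 4 - ((x ^ 3 : ℝ) : ℂ) • cfc p S := by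
    rw [cfc_sub _ _ S, cfc_pow_id S 4, cfc_const_mul _ _ S, Complex.coe_smul]
  have hlower := hG.neg_mul_le_re_apply_one (a := cfc (fun t => t ^ 4 - x ^ 3 * p t) S)
    (cfc_nonneg fun t _ => by linarith [hp4 t]) (r := D) <|
      norm_cfc_le ((by positivity : 0 ≤ ‖S‖ ^ 4).trans hSD) fun t ht => by
        have hpow : t ^ 4 ≤ D := by
          refine le_trans ?_ hSD
          rw [← Even.pow_abs (by decide : Even 4) t]
          gcongr
          exact abs_le_norm_of_mem_spectrum hS ht
        rw [Real.norm_of_nonneg (by linarith [hp4 t])]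
        linarith [mul_nonneg (pow_nonneg hx.le 3) (hp0 t)]
  rw [hcfc, map_sub, map_smul, LinearMap.sub_apply, LinearMap.smul_apply, Complex.sub_re,
    smul_eq_mul, Complex.re_ofReal_mul] at hlower
  linarith

/-- A slice `p(S)` at height `x` contributes `O(1 / x)`, since `x³ p(S) ≤ S⁴`. -/
lemma norm_apply_cfc_slice_le (hG : AlmostUnital G η) {S : P} (hS : IsSelfAdjoint S) {D : ℝ}
    (hSD : ‖S‖ ^ 4 ≤ D) {x : ℝ} (hx : 0 < x) {p : ℝ → ℝ} (hp : Continuous p) (hp0 : ∀ t, 0 ≤ p t)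
    (hp1 : ∀ t, p t ≤ x) (hp4 : ∀ t, p t * x ^ 3 ≤ t ^ 4) {k : Q} (hk : IsSelfAdjoint k)
    (hk1 : ‖k‖ ≤ 1) :
    ‖G (cfc p S) k‖ ≤ (4 * ((G (S ^ 4) 1).re + η * D) + 2) * x⁻¹ + 8 * η * x ^ 3 := by
  have hscale : cfc p S = (x : ℂ) • cfc (fun t => x⁻¹ * p t) S := by
    rw [cfc_const_mul _ _ S, Complex.coe_smul, smul_smul, mul_inv_cancel₀ hx.ne', one_smul]
  have hfour := hG.mul_re_apply_cfc_le hS hSD hx hp hp0 hp4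
  have hunit := hG.norm_apply_cfc_le hS (p := fun t => x⁻¹ * p t) (by fun_prop)
    (fun t => mul_nonneg (inv_pos.2 hx).le (hp0 t))
    (fun t => by rw [inv_mul_le_iff₀ hx, mul_one]; exact hp1 t) hk hk1
    (β := (x ^ 2)⁻¹) (by positivity)
  rw [hscale, map_smul, LinearMap.smul_apply, smul_eq_mul] at hfour ⊢
  rw [Complex.re_ofReal_mul] at hfour
  rw [norm_mul, Complex.norm_of_nonneg hx.le]
  set φ := (G (cfc (fun t => x⁻¹ * p t) S) 1).re
  calc x * ‖G (cfc (fun t => x⁻¹ * p t) S) k‖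
      ≤ x * (4 * (φ + 2 * η) / (x ^ 2)⁻¹ + 2 * (x ^ 2)⁻¹) := by gcongr
    _ = (4 * (x ^ 3 * (x * φ)) + 2) * x⁻¹ + 8 * η * x ^ 3 := by field_simp; ring
    _ ≤ (4 * ((G (S ^ 4) 1).re + η * D) + 2) * x⁻¹ + 8 * η * x ^ 3 := by gcongr

lemma norm_apply_dyadicSlice_sub_le (hG : AlmostUnital G η) {S : P} (hS : IsSelfAdjoint S) {L : ℕ}
    (hSL : ‖S‖ ^ 4 ≤ 16 ^ L) {l : ℕ} (hl : l < L) {k : Q} (hk : IsSelfAdjoint k) (hk1 : ‖k‖ ≤ 1) :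
    ‖G (cfc (dyadicSlice l) S - cfc (fun t => dyadicSlice l (-t)) S) k‖
      ≤ 2 * ((4 * ((G (S ^ 4) 1).re + η * 16 ^ L) + 2) * (1 / 2) ^ l + 8 * η * 8 ^ L) := by
  have hη := hG.nonneg
  have hpos := hG.norm_apply_cfc_slice_le hS hSL (pow_pos two_pos l) (continuous_dyadicSlice l)
    (dyadicSlice_nonneg l) (dyadicSlice_le l) (dyadicSlice_mul_le l) hk hk1
  have hneg := hG.norm_apply_cfc_slice_le hS hSL (pow_pos two_pos l)
    ((continuous_dyadicSlice l).comp continuous_neg) (fun t => dyadicSlice_nonneg l (-t))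
    (fun t => dyadicSlice_le l (-t))
    (fun t => (dyadicSlice_mul_le l (-t)).trans_eq (Even.neg_pow (by decide) t)) hk hk1
  have hinv : ((2 : ℝ) ^ l)⁻¹ = (1 / 2) ^ l := by rw [one_div, inv_pow]
  have hcube : 8 * η * ((2 : ℝ) ^ l) ^ 3 ≤ 8 * η * 8 ^ L := by
    have : ((2 : ℝ) ^ l) ^ 3 = 8 ^ l := by rw [← pow_mul, mul_comm, pow_mul]; norm_num
    rw [this]
    gcongr
    norm_num
  rw [hinv] at hpos hneg
  rw [map_sub, LinearMap.sub_apply]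
  refine (norm_sub_le _ _).trans ?_
  simp only [Function.comp_def] at hneg
  linarith

lemma norm_apply_le_of_norm_le_two_pow (hG : AlmostUnital G η) {S : P} (hS : IsSelfAdjoint S)
    {L : ℕ} (hSL : ‖S‖ ≤ 2 ^ L) {k : Q} (hk : IsSelfAdjoint k) (hk1 : ‖k‖ ≤ 1) :
    ‖G S k‖ ≤ 9 + 16 * (G (S ^ 4) 1).re + η * (16 * 16 ^ L + 16 * L * 8 ^ L) := by
  let _ : PartialOrder P := CStarAlgebra.spectralOrder P
  let _ : StarOrderedRing P := CStarAlgebra.spectralOrderedRing P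
  have hS4 : ‖S‖ ^ 4 ≤ 16 ^ L := by
    calc ‖S‖ ^ 4 ≤ (2 ^ L) ^ 4 := by gcongr
      _ = 16 ^ L := by rw [← pow_mul, mul_comm, pow_mul]; norm_num
  have hclamp : ‖G (cfc clamp S) k‖ ≤ 1 :=
    (hG.norm_apply_le (norm_cfc_le zero_le_one fun t _ => abs_clamp_le_one t) k).trans hk1
  set F := (G (S ^ 4) 1).re + η * 16 ^ L
  have hF0 : 0 ≤ F := by
    have hpos : 0 ≤ S ^ 4 := (hS.pow 2).sq_nonneg.trans_eq (pow_mul S 2 2).symm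
    linarith [hG.neg_mul_le_re_apply_one hpos ((norm_pow_le' S (by norm_num)).trans hS4)]
  have htotal : ‖G S k‖
      ≤ 1 + ∑ l ∈ Finset.range L, 2 * ((4 * F + 2) * (1 / 2) ^ l + 8 * η * 8 ^ L) := by
    conv_lhs => rw [← cfc_clamp_add_sum_dyadicSlice hS hSL]
    rw [map_add, LinearMap.add_apply, map_sum, LinearMap.sum_apply]
    exact (norm_add_le _ _).trans <| add_le_add hclamp <| (norm_sum_le _ _).trans <|
      Finset.sum_le_sum fun l hl =>
        hG.norm_apply_dyadicSlice_sub_le hS hS4 (Finset.mem_range.1 hl) hk hk1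
  refine htotal.trans ?_
  rw [← Finset.mul_sum, Finset.sum_add_distrib, ← Finset.mul_sum, Finset.sum_const,
    Finset.card_range, nsmul_eq_mul]
  have hgeom : (4 * F + 2) * ∑ i ∈ Finset.range L, (1 / 2 : ℝ) ^ i ≤ (4 * F + 2) * 2 := by
    gcongr
    exact sum_geometric_two_le L
  linarith

end AlmostUnital

end DyadicSlices

section Rademacher

variable {n : ℕ} {V W U : Type*}

/-- The sum `∑ ε i • h i` with signs `ε`. -/
def rademacherSum [AddCommGroup V] (h : Fin n → V) (ε : Fin n → ℤˣ) : V := ∑ i, ε i • h i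

/-- The average of `F` over all choices of signs. -/
def signMean [AddCommGroup V] [Module ℝ V] (F : (Fin n → ℤˣ) → V) : V :=
  ((2 : ℝ) ^ n)⁻¹ • ∑ ε, F ε

/-- The `i`-th Rademacher coefficient of `F`, its average against the sign `ε i`. -/
def signCoeff [AddCommGroup V] [Module ℝ V] (F : (Fin n → ℤˣ) → V) (i : Fin n) : V :=
  signMean fun ε => ε i • F ε

section Linear

variable [AddCommGroup V] [AddCommGroup W] [AddCommGroup U]

lemma rademacherSum_cons (h : Fin (n + 1) → V) (s : ℤˣ) (ε : Fin n → ℤˣ) :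
    rademacherSum h (Fin.cons s ε) = s • h 0 + rademacherSum (fun i => h i.succ) ε := by
  simp [rademacherSum, Fin.sum_univ_succ]

variable [Module ℝ V] [Module ℝ W] [Module ℝ U]

lemma signMean_const (x : V) : signMean (fun _ : Fin n → ℤˣ => x) = x := by
  rw [signMean, Finset.sum_const, Finset.card_univ, Fintype.card_fun, Fintype.card_units_int,
    Fintype.card_fin, ← Nat.cast_smul_eq_nsmul ℝ, smul_smul]
  simp

lemma signMean_add (F F' : (Fin n → ℤˣ) → V) :
    signMean (fun ε => F ε + F' ε) = signMean F + signMean F' := by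
  simp only [signMean, Finset.sum_add_distrib, smul_add]

lemma map_signMean {R : Type*} [Semiring R] [Module R V] [Module R W]
    [LinearMap.CompatibleSMul V W ℝ R] (f : V →ₗ[R] W) (F : (Fin n → ℤˣ) → V) :
    f (signMean F) = signMean fun ε => f (F ε) := by
  rw [signMean, signMean, f.map_smul_of_tower, map_sum]

lemma signMean_succ (F : (Fin (n + 1) → ℤˣ) → V) :
    signMean F
      = signMean fun ε => (2 : ℝ)⁻¹ • (F (Fin.cons 1 ε) + F (Fin.cons (-1) ε)) := by
  have hcons : ∑ ε, F ε = ∑ ε : Fin n → ℤˣ, (F (Fin.cons 1 ε) + F (Fin.cons (-1) ε)) := by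
    rw [← (Fin.consEquiv fun _ : Fin (n + 1) => ℤˣ).sum_comp, Fintype.sum_prod_type]
    simp [Fin.consEquiv, Finset.sum_add_distrib, UnitsInt.univ]
  rw [signMean, signMean, hcons, ← Finset.smul_sum, smul_smul, pow_succ, mul_inv]

lemma signMean_smul_smul (i j : Fin n) (x : V) :
    signMean (fun ε => ε i • ε j • x) = if i = j then x else 0 := by
  rcases eq_or_ne i j with rfl | hij
  · simp [smul_smul, signMean_const]
  · have : IsAddTorsionFree V := .of_isTorsionFree ℝ V
    rw [if_neg hij, signMean]
    refine smul_eq_zero_of_right _ (self_eq_neg.1 ?_)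
    rw [← Finset.sum_neg_distrib, ← Equiv.sum_comp (Equiv.mulLeft (Pi.mulSingle i (-1 : ℤˣ)))]
    simp [Pi.mulSingle_eq_of_ne hij.symm]

lemma signCoeff_rademacherSum (h : Fin n → V) (i : Fin n) :
    signCoeff (rademacherSum h) i = h i := by
  have hexpand : signCoeff (rademacherSum h) i = ∑ j, signMean fun ε => ε i • ε j • h j := by
    simp only [signCoeff, rademacherSum, signMean, Finset.smul_sum]
    exact Finset.sum_comm
  simp [hexpand, signMean_smul_smul]

lemma signMean_bilin_rademacherSum (B : V →ₗ[ℝ] W →ₗ[ℝ] U) (h : Fin n → V)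
    (F : (Fin n → ℤˣ) → W) :
    signMean (fun ε => B (rademacherSum h ε) (F ε)) = ∑ i, B (h i) (signCoeff F i) := by
  simp only [signCoeff, rademacherSum, signMean, map_smul, map_sum, LinearMap.sum_apply,
    Units.smul_def, map_zsmul, LinearMap.smul_apply, ← Finset.smul_sum]
  rw [Finset.sum_comm]

end Linear

lemma norm_signMean_le [NormedAddCommGroup V] [NormedSpace ℝ V] (F : (Fin n → ℤˣ) → V) :
    ‖signMean F‖ ≤ signMean fun ε => ‖F ε‖ := by
  rw [signMean, signMean, norm_smul, Real.norm_of_nonneg (by positivity), smul_eq_mul]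
  gcongr
  exact norm_sum_le _ _

lemma signMean_mono [AddCommGroup V] [PartialOrder V] [IsOrderedAddMonoid V] [Module ℝ V]
    [PosSMulMono ℝ V] {F F' : (Fin n → ℤˣ) → V} (hF : ∀ ε, F ε ≤ F' ε) :
    signMean F ≤ signMean F' :=
  smul_le_smul_of_nonneg_left (Finset.sum_le_sum fun ε _ => hF ε) (by positivity)

lemma isSelfAdjoint_units_smul [AddCommGroup V] [StarAddMonoid V] (s : ℤˣ) {x : V}
    (hx : IsSelfAdjoint x) : IsSelfAdjoint (s • x) := by
  rw [IsSelfAdjoint, Units.smul_def, star_zsmul, hx.star_eq]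

lemma isSelfAdjoint_rademacherSum [AddCommGroup V] [StarAddMonoid V] {h : Fin n → V}
    (hh : ∀ i, IsSelfAdjoint (h i)) (ε : Fin n → ℤˣ) : IsSelfAdjoint (rademacherSum h ε) :=
  isSelfAdjoint_sum _ fun i _ => isSelfAdjoint_units_smul (ε i) (hh i)

lemma isSelfAdjoint_signCoeff [AddCommGroup V] [StarAddMonoid V] [Module ℝ V] [StarModule ℝ V]
    {F : (Fin n → ℤˣ) → V} (hF : ∀ ε, IsSelfAdjoint (F ε)) (i : Fin n) :
    IsSelfAdjoint (signCoeff F i) :=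
  (IsSelfAdjoint.all _).smul <| isSelfAdjoint_sum _ fun ε _ =>
    isSelfAdjoint_units_smul (ε i) (hF ε)

section Algebra

variable [Ring V] [Algebra ℝ V]

lemma signMean_rademacherSum_mul_mul (h : Fin n → V) (c : V) :
    signMean (fun ε => rademacherSum h ε * c * rademacherSum h ε) = ∑ i, h i * c * h i := by
  simpa [signCoeff_rademacherSum] using
    signMean_bilin_rademacherSum ((LinearMap.mul ℝ V).comp (LinearMap.mulRight ℝ c)) h
      (rademacherSum h)

lemma signMean_mul_rademacherSum_mul_self_mul (h : Fin n → V) (c d : V) :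
    signMean (fun ε => c * (rademacherSum h ε * rademacherSum h ε) * d)
      = c * (∑ i, h i * h i) * d := by
  have hsq := signMean_rademacherSum_mul_mul h 1
  simp only [mul_one] at hsq
  rw [← hsq]
  exact (map_signMean (LinearMap.mulLeftRight ℝ (c, d)) _).symm

variable [StarRing V] [PartialOrder V] [StarOrderedRing V]

variable [PosSMulMono ℝ V]

lemma half_smul_add_pow_four_add_le {a s : V} (ha : IsSelfAdjoint a) (hs : IsSelfAdjoint s) :
    (2 : ℝ)⁻¹ • ((a + s) ^ 4 + (-a + s) ^ 4)
      ≤ s ^ 4 + 1 * (s * s) * (a * a) + a * a * (s * s) * 1 + s * (2 • (a * a)) * s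
        + 2 • a * (s * s) * a + a ^ 4 := by
  set R := s ^ 4 + 1 * (s * s) * (a * a) + a * a * (s * s) * 1 + s * (2 • (a * a)) * s
    + 2 • a * (s * s) * a + a ^ 4 with hR
  have hdiff : (2 : ℝ) • R - ((a + s) ^ 4 + (-a + s) ^ 4)
      = 2 • (star (a * s - s * a) * (a * s - s * a)) := by
    simp only [hR, two_smul ℝ, star_sub, star_mul, hs.star_eq, ha.star_eq]
    noncomm_ring
  have hle : (a + s) ^ 4 + (-a + s) ^ 4 ≤ (2 : ℝ) • R := by
    rw [← sub_nonneg, hdiff]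
    exact nsmul_nonneg (star_mul_self_nonneg _) 2
  exact (smul_le_smul_of_nonneg_left hle (by positivity)).trans_eq
    (inv_smul_smul₀ two_ne_zero R)

lemma signMean_rademacherSum_pow_four_le {h : Fin n → V} (hh : ∀ i, IsSelfAdjoint (h i)) :
    signMean (fun ε => rademacherSum h ε ^ 4)
      ≤ (∑ i, h i * h i) * (∑ i, h i * h i) + 2 • ∑ i, h i * (∑ j, h j * h j) * h i := by
  induction n with
  | zero => simp [signMean, rademacherSum]
  | succ n ih =>
    simp only [signMean_succ, rademacherSum_cons, Fin.sum_univ_succ, one_smul, Units.neg_smul]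
    set a := h 0
    set h' : Fin n → V := fun i => h i.succ
    set p := ∑ i, h' i * h' i
    have ha : IsSelfAdjoint a := hh 0
    have hmean : signMean (fun ε =>
          (2 : ℝ)⁻¹ • ((a + rademacherSum h' ε) ^ 4 + (-a + rademacherSum h' ε) ^ 4))
        ≤ signMean (fun ε => rademacherSum h' ε ^ 4) + 1 * p * (a * a) + a * a * p * 1
          + ∑ i, h' i * (2 • (a * a)) * h' i + 2 • a * p * a + a ^ 4 := by
      refine (signMean_mono fun ε => half_smul_add_pow_four_add_le ha
        (isSelfAdjoint_rademacherSum (fun i => hh i.succ) ε)).trans_eq ?_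
      simp only [signMean_add, signMean_const, signMean_mul_rademacherSum_mul_self_mul,
        signMean_rademacherSum_mul_mul, p, h']
    have hsplit : 2 • ∑ i, h' i * (a * a + p) * h' i
        = ∑ i, h' i * (2 • (a * a)) * h' i + 2 • ∑ i, h' i * p * h' i := by
      simp only [Finset.smul_sum, ← Finset.sum_add_distrib]
      exact Finset.sum_congr rfl fun i _ => by noncomm_ring
    have hpos : 0 ≤ 2 • (star (a * a) * (a * a)) := nsmul_nonneg (star_mul_self_nonneg _) 2
    refine hmean.trans ?_
    rw [smul_add, hsplit, ← sub_nonneg]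
    refine (add_nonneg hpos (sub_nonneg.2 (ih (h := h') fun i => hh i.succ))).trans_eq ?_
    rw [star_mul, ha.star_eq]
    noncomm_ring

end Algebra

end Rademacher

section CStarRademacher

variable {n : ℕ} {P : Type*} [CStarAlgebra P]

lemma cfc_clamp_add_cfc_sub_clamp {T : P} (hT : IsSelfAdjoint T) :
    cfc clamp T + cfc (fun t => t - clamp t) T = T := by
  rw [← cfc_add T clamp (fun t => t - clamp t) continuous_clamp.continuousOn
    (continuous_id.sub continuous_clamp).continuousOn]
  simp only [add_sub_cancel, cfc_id' ℝ T]

variable [PartialOrder P] [StarOrderedRing P]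

lemma signMean_rademacherSum_pow_four_le_three {h : Fin n → P} (hh : ∀ i, IsSelfAdjoint (h i))
    (h1 : ∑ i, h i * h i ≤ 1) : signMean (fun ε => rademacherSum h ε ^ 4) ≤ 3 := by
  refine (signMean_rademacherSum_pow_four_le hh).trans ?_
  set p := ∑ i, h i * h i
  have hp0 : 0 ≤ p := Finset.sum_nonneg fun i _ => (hh i).mul_self_nonneg
  have hconj : ∑ i, h i * p * h i ≤ 1 := by
    refine (Finset.sum_le_sum fun i _ => ?_).trans h1
    simpa using (hh i).conjugate_le_conjugate h1
  have hpp : p * p ≤ 1 := by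
    rw [← CStarAlgebra.norm_le_one_iff_of_nonneg _ hp0.isSelfAdjoint.mul_self_nonneg]
    have hp1 : ‖p‖ ≤ 1 := (CStarAlgebra.norm_le_one_iff_of_nonneg p hp0).2 h1
    exact (norm_mul_le _ _).trans (mul_le_one₀ hp1 (norm_nonneg _) hp1)
  calc p * p + 2 • ∑ i, h i * p * h i ≤ 1 + 2 • 1 := by gcongr
    _ = 3 := by norm_num

lemma norm_le_one_of_sum_mul_self_le_one {h : Fin n → P} (hh : ∀ i, IsSelfAdjoint (h i))
    (h1 : ∑ i, h i * h i ≤ 1) (i : Fin n) : ‖h i‖ ≤ 1 := by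
  have hpos : ∀ j, 0 ≤ h j * h j := fun j => (hh j).mul_self_nonneg
  have hle : h i * h i ≤ 1 :=
    (Finset.single_le_sum (fun j _ => hpos j) (Finset.mem_univ i)).trans h1
  rw [← CStarAlgebra.norm_le_one_iff_of_nonneg _ (hpos i), (hh i).norm_mul_self] at hle
  exact (sq_le_one_iff₀ (norm_nonneg _)).1 hle

/-- Bessel's inequality for the Rademacher system. -/
lemma sum_signCoeff_mul_self_le {T : (Fin n → ℤˣ) → P} (hT : ∀ ε, IsSelfAdjoint (T ε)) :
    ∑ i, signCoeff T i * signCoeff T i ≤ signMean fun ε => T ε * T ε := by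
  set k := signCoeff T
  have hk : ∀ ε, IsSelfAdjoint (rademacherSum k ε) :=
    isSelfAdjoint_rademacherSum (isSelfAdjoint_signCoeff hT)
  have hleft : signMean (fun ε => rademacherSum k ε * T ε) = ∑ i, k i * k i := by
    simpa using signMean_bilin_rademacherSum (LinearMap.mul ℝ P) k T
  have hright : signMean (fun ε => T ε * rademacherSum k ε) = ∑ i, k i * k i := by
    simpa using signMean_bilin_rademacherSum (LinearMap.mul ℝ P).flip k T
  have hself : signMean (fun ε => rademacherSum k ε * rademacherSum k ε) = ∑ i, k i * k i := by
    simpa using signMean_rademacherSum_mul_mul k 1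
  have hexpand : ∀ ε, T ε * T ε + rademacherSum k ε * rademacherSum k ε
      = (T ε - rademacherSum k ε) * (T ε - rademacherSum k ε)
        + (rademacherSum k ε * T ε + T ε * rademacherSum k ε) := fun ε => by noncomm_ring
  have hmean := signMean_mono fun ε => (hexpand ε).ge.trans' <|
    le_add_of_nonneg_left ((hT ε).sub (hk ε)).mul_self_nonneg
  simp only [signMean_add, hleft, hright, hself] at hmean
  exact le_of_add_le_add_right hmean

lemma cfc_sub_clamp_mul_self_le {T : P} (hT : IsSelfAdjoint T) :
    cfc (fun t => t - clamp t) T * cfc (fun t => t - clamp t) T ≤ (1 / 16 : ℝ) • T ^ 4 := by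
  have hcont : Continuous fun t => t - clamp t := continuous_id.sub continuous_clamp
  rw [← cfc_mul _ _ _ hcont.continuousOn hcont.continuousOn, ← cfc_pow_id (R := ℝ) T 4,
    ← cfc_smul (1 / 16 : ℝ) _ _ (by fun_prop)]
  exact cfc_mono (fun t _ => sub_clamp_mul_self_le t) (hcont.mul hcont).continuousOn (by fun_prop)

lemma sum_signCoeff_cfc_sub_clamp_mul_self_le {k : Fin n → P} (hk : ∀ i, IsSelfAdjoint (k i))
    (k1 : ∑ i, k i * k i ≤ 1) :
    ∑ i, signCoeff (fun ε => cfc (fun t => t - clamp t) (rademacherSum k ε)) i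
        * signCoeff (fun ε => cfc (fun t => t - clamp t) (rademacherSum k ε)) i
      ≤ (1 / 4 : ℝ) • (1 : P) := by
  have hthree : (3 : P) = (3 : ℝ) • 1 := by
    rw [← Algebra.algebraMap_eq_smul_one, map_ofNat]
  calc _ ≤ signMean fun ε => cfc (fun t => t - clamp t) (rademacherSum k ε)
          * cfc (fun t => t - clamp t) (rademacherSum k ε) :=
        sum_signCoeff_mul_self_le fun ε => cfc_predicate _ _
    _ ≤ signMean fun ε => (1 / 16 : ℝ) • rademacherSum k ε ^ 4 :=
        signMean_mono fun ε => cfc_sub_clamp_mul_self_le (isSelfAdjoint_rademacherSum hk ε)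
    _ = (1 / 16 : ℝ) • signMean fun ε => rademacherSum k ε ^ 4 :=
        (map_signMean (LinearMap.lsmul ℝ P (1 / 16 : ℝ)) _).symm
    _ ≤ (1 / 16 : ℝ) • (3 : P) := by
        gcongr
        exact signMean_rademacherSum_pow_four_le_three hk k1
    _ ≤ (1 / 4 : ℝ) • (1 : P) := by
        rw [hthree, smul_smul]
        exact smul_le_smul_of_nonneg_right (by norm_num) zero_le_one

namespace AlmostUnital

variable {Q : Type*} [CStarAlgebra Q] {G : P →ₗ[ℂ] Q →ₗ[ℂ] ℂ} {η : ℝ}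

lemma re_apply_signMean_rademacherSum_pow_four_le (hG : AlmostUnital G η) {h : Fin n → P}
    (hh : ∀ i, IsSelfAdjoint (h i)) (h1 : ∑ i, h i * h i ≤ 1) :
    (G (signMean fun ε => rademacherSum h ε ^ 4) 1).re ≤ 3 := by
  have hle := signMean_rademacherSum_pow_four_le_three hh h1
  have hpos : 0 ≤ signMean fun ε => rademacherSum h ε ^ 4 := by
    rw [← signMean_const (n := n) (0 : P)]
    exact signMean_mono fun ε =>
      ((isSelfAdjoint_rademacherSum hh ε).pow 2).sq_nonneg.trans_eq (pow_mul _ 2 2).symm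
  refine (hG.re_apply_one_le _).trans ((CStarAlgebra.norm_le_iff_le_algebraMap _ ?_ hpos).2 ?_)
  · norm_num
  · rwa [map_ofNat]

lemma norm_signMean_apply_rademacherSum_le (hG : AlmostUnital G η)
    (hη : η * (16 * 16 ^ n + 16 * n * 8 ^ n) ≤ 1) {h : Fin n → P}
    (hh : ∀ i, IsSelfAdjoint (h i)) (h1 : ∑ i, h i * h i ≤ 1) {T : (Fin n → ℤˣ) → Q}
    (hT : ∀ ε, IsSelfAdjoint (T ε)) (hT1 : ∀ ε, ‖T ε‖ ≤ 1) :
    ‖signMean fun ε => G (rademacherSum h ε) (T ε)‖ ≤ 60 := by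
  have hnorm : ∀ ε, ‖rademacherSum h ε‖ ≤ 2 ^ n := fun ε => by
    calc ‖rademacherSum h ε‖ ≤ ∑ _i : Fin n, (1 : ℝ) := by
          refine norm_sum_le_of_le _ fun i _ => ?_
          rcases Int.units_eq_one_or (ε i) with hε | hε <;>
            simpa [hε] using norm_le_one_of_sum_mul_self_le_one hh h1 i
      _ = n := by simp
      _ ≤ 2 ^ n := by exact_mod_cast Nat.lt_two_pow_self.le
  have hfour : signMean (fun ε => (G (rademacherSum h ε ^ 4) 1).re)
      = (G (signMean fun ε => rademacherSum h ε ^ 4) 1).re :=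
    (map_signMean (Complex.reLm ∘ₗ (G.flip 1).restrictScalars ℝ) _).symm
  calc _ ≤ signMean fun ε => ‖G (rademacherSum h ε) (T ε)‖ := norm_signMean_le _
    _ ≤ signMean fun ε => 10 + 16 * (G (rademacherSum h ε ^ 4) 1).re :=
        signMean_mono fun ε => by
          linarith [hG.norm_apply_le_of_norm_le_two_pow (isSelfAdjoint_rademacherSum hh ε)
            (hnorm ε) (hT ε) (hT1 ε)]
    _ = 10 + 16 * (G (signMean fun ε => rademacherSum h ε ^ 4) 1).re := by
        rw [signMean_add, signMean_const, ← hfour]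
        exact congrArg _ (map_signMean (LinearMap.mul ℝ ℝ 16) _).symm
    _ ≤ 60 := by linarith [hG.re_apply_signMean_rademacherSum_pow_four_le hh h1]

variable [PartialOrder Q] [StarOrderedRing Q]

/-- One step of the bootstrap: truncation gains a factor `1 / 2` at the cost of a constant. -/
lemma norm_sum_apply_le_half_add (hG : AlmostUnital G η)
    (hη : η * (16 * 16 ^ n + 16 * n * 8 ^ n) ≤ 1) {h : Fin n → P}
    (hh : ∀ i, IsSelfAdjoint (h i)) (h1 : ∑ i, h i * h i ≤ 1) {B : ℝ}
    (hB : ∀ k : Fin n → Q, (∀ i, IsSelfAdjoint (k i)) → ∑ i, k i * k i ≤ 1 →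
      ‖∑ i, G (h i) (k i)‖ ≤ B)
    {k : Fin n → Q} (hk : ∀ i, IsSelfAdjoint (k i)) (k1 : ∑ i, k i * k i ≤ 1) :
    ‖∑ i, G (h i) (k i)‖ ≤ 60 + B / 2 := by
  set tail : (Fin n → ℤˣ) → Q := fun ε => cfc (fun t => t - clamp t) (rademacherSum k ε)
  have hsplit : ∑ i, G (h i) (k i)
      = signMean (fun ε => G (rademacherSum h ε) (cfc clamp (rademacherSum k ε)))
        + ∑ i, G (h i) (signCoeff tail i) := by
    have hbilin := signMean_bilin_rademacherSum (G.restrictScalars₁₂ ℝ ℝ) h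
    simp only [LinearMap.restrictScalars₁₂_apply_apply] at hbilin
    rw [← hbilin, ← signMean_add]
    have hcoeff := hbilin (rademacherSum k)
    simp only [signCoeff_rademacherSum] at hcoeff
    rw [← hcoeff]
    congr with ε : 1
    rw [← map_add, cfc_clamp_add_cfc_sub_clamp (isSelfAdjoint_rademacherSum hk ε)]
  have htail : ‖∑ i, G (h i) ((2 : ℝ) • signCoeff tail i)‖ ≤ B := by
    refine hB _ (fun i => (IsSelfAdjoint.all (2 : ℝ)).smul
      (isSelfAdjoint_signCoeff (fun ε => cfc_predicate _ _) i)) ?_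
    simp only [smul_mul_smul_comm, ← Finset.smul_sum]
    refine (smul_le_smul_of_nonneg_left (sum_signCoeff_cfc_sub_clamp_mul_self_le hk k1)
      (by norm_num)).trans_eq ?_
    rw [smul_smul]
    norm_num
  simp only [LinearMap.map_smul_of_tower, ← Finset.smul_sum, norm_smul, Real.norm_ofNat] at htail
  rw [hsplit]
  refine (norm_add_le _ _).trans (add_le_add ?_ (by linarith))
  exact hG.norm_signMean_apply_rademacherSum_le hη hh h1 (fun ε => cfc_predicate _ _)
    fun ε => norm_cfc_le zero_le_one fun t _ => abs_clamp_le_one t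

theorem norm_sum_apply_le (hG : AlmostUnital G η)
    (hη : η * (16 * 16 ^ n + 16 * n * 8 ^ n) ≤ 1) {h : Fin n → P}
    (hh : ∀ i, IsSelfAdjoint (h i)) (h1 : ∑ i, h i * h i ≤ 1) {k : Fin n → Q}
    (hk : ∀ i, IsSelfAdjoint (k i)) (k1 : ∑ i, k i * k i ≤ 1) :
    ‖∑ i, G (h i) (k i)‖ ≤ 120 := by
  have hiterate : ∀ m : ℕ, ∀ k : Fin n → Q, (∀ i, IsSelfAdjoint (k i)) → ∑ i, k i * k i ≤ 1 →
      ‖∑ i, G (h i) (k i)‖ ≤ n * (1 / 2) ^ m + 120 := by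
    intro m
    induction m with
    | zero =>
      intro k hk k1
      calc ‖∑ i, G (h i) (k i)‖ ≤ ∑ _i : Fin n, (1 : ℝ) :=
            norm_sum_le_of_le _ fun i _ =>
              (hG.norm_apply_le (norm_le_one_of_sum_mul_self_le_one hh h1 i) _).trans
                (norm_le_one_of_sum_mul_self_le_one hk k1 i)
        _ ≤ n * (1 / 2) ^ 0 + 120 := by simp
    | succ m ih =>
      intro k hk k1
      refine (hG.norm_sum_apply_le_half_add hη hh h1 ih hk k1).trans_eq ?_
      rw [pow_succ]
      ring
  have hlim : Filter.Tendsto (fun m : ℕ => (n : ℝ) * (1 / 2) ^ m + 120) Filter.atTop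
      (nhds (n * 0 + 120)) :=
    ((tendsto_pow_atTop_nhds_zero_of_lt_one (by norm_num) (by norm_num)).const_mul _).add_const _
  simpa using ge_of_tendsto' hlim fun m => hiterate m k hk k1

end AlmostUnital

end CStarRademacher

section RussoDye

variable {P : Type*} [CStarAlgebra P]

lemma exists_unitary_add_self_eq {y : P} (hy : IsUnit y) (hy1 : ‖y‖ ≤ 1) :
    ∃ u₁ ∈ unitary P, ∃ u₂ ∈ unitary P, y + y = u₁ + u₂ := by
  let _ : PartialOrder P := CStarAlgebra.spectralOrder P
  let _ : StarOrderedRing P := CStarAlgebra.spectralOrderedRing P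
  have habs : IsUnit (CFC.abs y) :=
    (CFC.isUnit_sqrt_iff _ (star_mul_self_nonneg y)).2 (hy.star.mul hy)
  have hsa : IsSelfAdjoint (CFC.abs y) := (CFC.abs_nonneg y).isSelfAdjoint
  set w : P := y * (habs.unit⁻¹ : Pˣ) with hw
  have hw_mem : w ∈ unitary P := by
    refine (Units.mul_inv_mem_unitary hy.unit habs.unit).2 (Units.ext ?_)
    change star y * y = star (CFC.abs y) * CFC.abs y
    rw [hsa.star_eq, CFC.abs_mul_abs]
  have hpolar : y = w * CFC.abs y := by rw [hw, mul_assoc, habs.val_inv_mul, mul_one]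
  have habs1 : ‖CFC.abs y‖ ≤ 1 := CFC.norm_abs.trans_le hy1
  let v := selfAdjoint.unitarySelfAddISMul ⟨CFC.abs y, hsa⟩ habs1
  have hv : (v : P) + star (v : P) = CFC.abs y + CFC.abs y := by
    have hre := congrArg (fun a : selfAdjoint P => (2 : ℝ) • (a : P))
      (selfAdjoint.realPart_unitarySelfAddISMul ⟨CFC.abs y, hsa⟩ habs1)
    simpa only [realPart_apply_coe, smul_inv_smul₀ (two_ne_zero' ℝ), two_smul] using hre
  refine ⟨w * v, mul_mem hw_mem v.2, w * star (v : P),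
    mul_mem hw_mem (Unitary.star_mem v.2), ?_⟩
  rw [← mul_add, hv, mul_add, ← hpolar]

lemma exists_unitary_add_eq {v : P} (hv : v ∈ unitary P) {x : P} (hx : ‖x‖ < 1) :
    ∃ u₁ ∈ unitary P, ∃ u₂ ∈ unitary P, v + x = u₁ + u₂ := by
  have hnorm : ‖star v * x‖ < 1 := by
    rwa [CStarRing.norm_mem_unitary_mul _ (Unitary.star_mem hv)]
  have hunit : IsUnit (1 + star v * x) := by
    simpa using isUnit_one_sub_of_norm_lt_one (x := -(star v * x)) (by rwa [norm_neg])
  obtain ⟨u₁, hu₁, u₂, hu₂, hsum⟩ :=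
    exists_unitary_add_self_eq (y := (2⁻¹ : ℂ) • (1 + star v * x))
      (hunit.smul (Units.mk0 (2⁻¹ : ℂ) (by norm_num))) <| by
      rw [norm_smul, norm_inv, RCLike.norm_ofNat]
      linarith [norm_add_le (1 : P) (star v * x), norm_one_le_of_cstarRing P]
  refine ⟨v * u₁, mul_mem hv hu₁, v * u₂, mul_mem hv hu₂, ?_⟩
  rw [← mul_add, ← hsum, ← two_smul ℂ, smul_inv_smul₀ two_ne_zero, mul_add, mul_one, ← mul_assoc,
    Unitary.mul_star_self_of_mem hv, one_mul]

variable {φ : P →ₗ[ℂ] ℂ} {s : ℝ}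

lemma norm_apply_unitary_add_nsmul_le (hφ : ∀ u ∈ unitary P, ‖φ u‖ ≤ s) {x : P} (hx : ‖x‖ < 1)
    (n : ℕ) {v : P} (hv : v ∈ unitary P) : ‖φ (v + n • x)‖ ≤ (n + 1) * s := by
  induction n generalizing v with
  | zero => simpa using hφ v hv
  | succ n ih =>
    obtain ⟨u₁, hu₁, u₂, hu₂, hsum⟩ := exists_unitary_add_eq hv hx
    have hsplit : v + (n + 1) • x = (u₁ + n • x) + u₂ := by
      rw [succ_nsmul', ← add_assoc, hsum]
      abel
    rw [hsplit, map_add]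
    push_cast
    linarith [norm_add_le (φ (u₁ + n • x)) (φ u₂), ih hu₁, hφ u₂ hu₂]

lemma norm_apply_le_of_norm_lt_one (hφ : ∀ u ∈ unitary P, ‖φ u‖ ≤ s) {x : P} (hx : ‖x‖ < 1) :
    ‖φ x‖ ≤ s := by
  by_contra! hlt
  obtain ⟨n, hn⟩ := exists_nat_gt (2 * s / (‖φ x‖ - s))
  rw [div_lt_iff₀ (by linarith)] at hn
  have hle := norm_apply_unitary_add_nsmul_le hφ hx n (one_mem _)
  have hsub : n * ‖φ x‖ ≤ ‖φ (1 + n • x)‖ + ‖φ 1‖ := by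
    calc n * ‖φ x‖ = ‖φ (1 + n • x) - φ 1‖ := by
          rw [← map_sub, add_sub_cancel_left, map_nsmul, nsmul_eq_mul, norm_mul,
            RCLike.norm_natCast]
      _ ≤ ‖φ (1 + n • x)‖ + ‖φ 1‖ := norm_sub_le _ _
  linarith [hφ 1 (one_mem _)]

/-- The Russo–Dye theorem, in dual form. -/
theorem norm_apply_le_of_unitary (hφ : ∀ u ∈ unitary P, ‖φ u‖ ≤ s) (x : P) :
    ‖φ x‖ ≤ s * ‖x‖ := by
  refine le_mul_of_forall_lt₀ fun s' hs' r hr => ?_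
  have hr0 : 0 < r := (norm_nonneg x).trans_lt hr
  have hle := norm_apply_le_of_norm_lt_one hφ (x := (r⁻¹ : ℂ) • x) <| by
    rwa [norm_smul, norm_inv, Complex.norm_of_nonneg hr0.le, inv_mul_lt_iff₀ hr0, mul_one]
  rw [map_smul, norm_smul, norm_inv, Complex.norm_of_nonneg hr0.le, inv_mul_le_iff₀ hr0,
    mul_comm] at hle
  exact hle.trans (by gcongr)

end RussoDye

section Side

/-- The two ways in which a finite family in a C⋆-algebra can be regarded as an operator: as a row
`[a₁ ⋯ aₙ]`, measured by `∑ aₖ aₖ⋆`, or as a column, measured by `∑ aₖ⋆ aₖ`. -/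
inductive Side
  | row
  | col

/-- The opposite side. -/
def Side.op : Side → Side
  | row => col
  | col => row

@[simp] lemma Side.op_op (σ : Side) : σ.op.op = σ := by cases σ <;> rfl

instance : Finite Side :=
  .of_surjective (fun b : Bool => bif b then Side.row else Side.col)
    fun | .row => ⟨true, rfl⟩ | .col => ⟨false, rfl⟩

/-- The family obtained from `a` by applying a rectangular scalar matrix. -/
def linComb {V : Type*} [AddCommGroup V] [Module ℂ V] {m n : Type*} [Fintype n]
    (T : Matrix m n ℂ) (a : n → V) : m → V := fun i => ∑ k, T i k • a k

section LinComb

variable {V W : Type*} [AddCommGroup V] [Module ℂ V] [AddCommGroup W] [Module ℂ W]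
  {l m n : Type*} [Fintype n]

lemma linComb_linComb [Fintype m] (S : Matrix l m ℂ) (T : Matrix m n ℂ) (a : n → V) :
    linComb S (linComb T a) = linComb (S * T) a := by
  funext i
  simp only [linComb, Finset.smul_sum, Matrix.mul_apply, Finset.sum_smul, mul_smul]
  exact Finset.sum_comm

lemma linComb_one [DecidableEq n] (a : n → V) : linComb (1 : Matrix n n ℂ) a = a := by
  funext i
  simp [linComb, Matrix.one_apply]

lemma sum_linComb_tmul [Fintype m] (T : Matrix m n ℂ) (a : n → V) (b : m → W) :
    ∑ i, linComb T a i ⊗ₜ[ℂ] b i = ∑ k, a k ⊗ₜ[ℂ] linComb T.transpose b k := by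
  simp only [linComb, TensorProduct.sum_tmul, TensorProduct.tmul_sum, Matrix.transpose_apply,
    TensorProduct.tmul_smul, TensorProduct.smul_tmul']
  exact Finset.sum_comm

end LinComb

lemma star_dotProduct_self {n : Type*} [Fintype n] (z : n → ℂ) :
    star z ⬝ᵥ z = ((∑ i, ‖z i‖ ^ 2 : ℝ) : ℂ) := by
  push_cast
  exact Finset.sum_congr rfl fun i _ => Complex.conj_mul' _

open scoped ComplexOrder in
lemma posSemidef_smul_one_sub {m n : Type*} [Fintype m] [Fintype n] [DecidableEq n]
    {T : Matrix m n ℂ} {C : ℝ} (hT : ∀ x, ∑ i, ‖T.mulVec x i‖ ^ 2 ≤ C * ∑ k, ‖x k‖ ^ 2) :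
    ((C : ℂ) • (1 : Matrix n n ℂ) - T.conjTranspose * T).PosSemidef := by
  refine Matrix.PosSemidef.of_dotProduct_mulVec_nonneg ?_ fun x => ?_
  · simp [Matrix.IsHermitian]
  · rw [Matrix.sub_mulVec, dotProduct_sub, Matrix.smul_mulVec, Matrix.one_mulVec,
      ← Matrix.mulVec_mulVec, Matrix.dotProduct_mulVec, ← Matrix.star_mulVec, dotProduct_smul,
      star_dotProduct_self, star_dotProduct_self, smul_eq_mul, ← Complex.ofReal_mul,
      ← Complex.ofReal_sub, Complex.zero_le_real]
    exact sub_nonneg.2 (hT x)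

namespace Side

variable {A : Type*} [NonUnitalCStarAlgebra A] {m n : Type*} [Fintype m] [Fintype n] (σ : Side)

/-- The `A`-valued sesquilinear form of a side, conjugate-linear in the first variable. -/
def form (a b : A) : A :=
  match σ with
  | row => b * star a
  | col => star a * b

/-- The `A`-valued quadratic form `∑ Mₖₗ form(aₖ, aₗ)` with scalar coefficients `M`. -/
def quadForm (M : Matrix n n ℂ) (a : n → A) : A := ∑ k, ∑ l, M k l • σ.form (a k) (a l)

/-- The sum of squares `∑ aₖ aₖ⋆` (row) or `∑ aₖ⋆ aₖ` (column). -/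
def squareSum (a : n → A) : A := ∑ k, σ.form (a k) (a k)

/-- The norm of a family regarded as a row or as a column. -/
def sideNorm (a : n → A) : ℝ := √‖σ.squareSum a‖

lemma form_star_star (a : A) : σ.form (star a) (star a) = σ.op.form a a := by
  cases σ <;> simp [form, op]

lemma form_sum_smul_sum_smul (c d : n → ℂ) (a : n → A) :
    σ.form (∑ k, c k • a k) (∑ l, d l • a l) =
      ∑ k, ∑ l, (star (c k) * d l) • σ.form (a k) (a l) := by
  cases σ <;> simp only [form, star_sum, star_smul, Finset.sum_mul, Finset.mul_sum,
    smul_mul_smul_comm, mul_comm]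
  exact Finset.sum_comm

lemma form_smul_smul (c : ℂ) (a : A) : σ.form (c • a) (c • a) = (star c * c) • σ.form a a := by
  cases σ <;> simp [form, smul_mul_smul_comm, mul_comm]

lemma norm_form_self (a : A) : ‖σ.form a a‖ = ‖a‖ ^ 2 := by
  cases σ <;> simp [form, CStarRing.norm_self_mul_star, CStarRing.norm_star_mul_self, sq]

lemma form_zero_zero : σ.form (0 : A) 0 = 0 := by
  cases σ <;> simp [form]

lemma continuous_form_self : Continuous fun a : A => σ.form a a := by
  cases σ
  · exact continuous_id.mul continuous_id.star
  · exact continuous_id.star.mul continuous_id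

lemma squareSum_smul (c : ℂ) (a : n → A) :
    σ.squareSum (fun i => c • a i) = (star c * c) • σ.squareSum a := by
  simp only [squareSum, form_smul_smul, Finset.smul_sum]

lemma norm_squareSum_smul (c : ℂ) (a : n → A) :
    ‖σ.squareSum (fun i => c • a i)‖ = ‖c‖ ^ 2 * ‖σ.squareSum a‖ := by
  rw [squareSum_smul, norm_smul, norm_mul, norm_star, sq]

lemma squareSum_comp_equiv (e : m ≃ n) (a : n → A) : σ.squareSum (a ∘ e) = σ.squareSum a :=
  e.sum_comp fun i => σ.form (a i) (a i)

lemma squareSum_star (a : n → A) : σ.squareSum (star a) = σ.op.squareSum a := by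
  simp only [squareSum, Pi.star_apply, form_star_star]

lemma quadForm_diagonal [DecidableEq n] (t : n → ℂ) (a : n → A) :
    σ.quadForm (Matrix.diagonal t) a = ∑ i, t i • σ.form (a i) (a i) := by
  simp [quadForm, Matrix.diagonal_apply]

lemma quadForm_one [DecidableEq n] (a : n → A) :
    σ.quadForm (1 : Matrix n n ℂ) a = σ.squareSum a := by
  simp [quadForm, squareSum, Matrix.one_apply]

lemma quadForm_sub (M N : Matrix n n ℂ) (a : n → A) :
    σ.quadForm (M - N) a = σ.quadForm M a - σ.quadForm N a := by
  simp only [quadForm, Matrix.sub_apply, sub_smul, Finset.sum_sub_distrib]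

lemma quadForm_smul (c : ℂ) (M : Matrix n n ℂ) (a : n → A) :
    σ.quadForm (c • M) a = c • σ.quadForm M a := by
  simp only [quadForm, Matrix.smul_apply, smul_eq_mul, mul_smul, Finset.smul_sum]

lemma quadForm_linComb (M : Matrix m m ℂ) (T : Matrix m n ℂ) (a : n → A) :
    σ.quadForm M (linComb T a) = σ.quadForm (T.conjTranspose * M * T) a := by
  simp only [quadForm, linComb, form_sum_smul_sum_smul, Matrix.mul_apply,
    Matrix.conjTranspose_apply, Finset.sum_smul, Finset.smul_sum, Finset.sum_mul, smul_smul]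
  rw [Finset.sum_congr rfl fun _ _ => Finset.sum_comm, Finset.sum_comm]
  refine Finset.sum_congr rfl fun k _ => ?_
  rw [Finset.sum_congr rfl fun _ _ => Finset.sum_comm, Finset.sum_comm]
  refine Finset.sum_congr rfl fun l _ => Finset.sum_comm.trans ?_
  simp only [mul_left_comm, mul_assoc]

lemma squareSum_linComb (T : Matrix m n ℂ) (a : n → A) :
    σ.squareSum (linComb T a) = σ.quadForm (T.conjTranspose * T) a := by
  classical
  rw [← quadForm_one, quadForm_linComb, Matrix.mul_one]

lemma squareSum_linComb_of_isometry [DecidableEq n] {T : Matrix m n ℂ}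
    (hT : T.conjTranspose * T = 1) (a : n → A) : σ.squareSum (linComb T a) = σ.squareSum a := by
  rw [squareSum_linComb, hT, quadForm_one]

lemma sideNorm_nonneg (a : n → A) : 0 ≤ σ.sideNorm a := Real.sqrt_nonneg _

lemma sq_sideNorm (a : n → A) : σ.sideNorm a ^ 2 = ‖σ.squareSum a‖ := Real.sq_sqrt (norm_nonneg _)

lemma continuous_sideNorm : Continuous fun a : n → A => σ.sideNorm a :=
  (continuous_finsetSum _ fun i _ =>
    σ.continuous_form_self.comp (continuous_apply i)).norm.sqrt

lemma sideNorm_star (a : n → A) : σ.sideNorm (star a) = σ.op.sideNorm a := by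
  rw [sideNorm, squareSum_star, sideNorm]

section Order

variable [PartialOrder A] [StarOrderedRing A]

lemma form_self_nonneg (a : A) : 0 ≤ σ.form a a := by
  cases σ
  · exact mul_star_self_nonneg a
  · exact star_mul_self_nonneg a

lemma squareSum_nonneg (a : n → A) : 0 ≤ σ.squareSum a :=
  Finset.sum_nonneg fun _ _ => σ.form_self_nonneg _

lemma norm_squareSum_tail_le {n : ℕ} (a : Fin (n + 1) → A) :
    ‖σ.squareSum (Fin.tail a)‖ ≤ ‖σ.squareSum a‖ := by
  refine CStarAlgebra.norm_le_norm_of_nonneg_of_le (σ.squareSum_nonneg _) ?_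
  rw [squareSum, squareSum, Fin.sum_univ_succ (n := n)]
  exact le_add_of_nonneg_left (σ.form_self_nonneg _)

lemma norm_le_sideNorm (a : n → A) (i : n) : ‖a i‖ ≤ σ.sideNorm a := by
  refine Real.le_sqrt_of_sq_le ?_
  rw [← σ.norm_form_self]
  refine CStarAlgebra.norm_le_norm_of_nonneg_of_le (σ.form_self_nonneg _) ?_
  exact Finset.single_le_sum (f := fun i => σ.form (a i) (a i))
    (fun i _ => σ.form_self_nonneg _) (Finset.mem_univ i)

open WithCStarModule in
-- For a row this is the triangle inequality in the Hilbert C⋆-module `Aⁿ`.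
lemma sideNorm_add_le (a b : n → A) : σ.sideNorm (a + b) ≤ σ.sideNorm a + σ.sideNorm b := by
  have hrow (a b : n → A) : row.sideNorm (a + b) ≤ row.sideNorm a + row.sideNorm b := by
    have hnorm (a : n → A) : row.sideNorm a =
        ‖((equiv A (n → A)).symm a : C⋆ᵐᵒᵈ(A, n → A))‖ := by
      rw [pi_norm]
      rfl
    simp only [hnorm]
    exact norm_add_le _ _
  cases σ
  · exact hrow a b
  · change row.op.sideNorm (a + b) ≤ row.op.sideNorm a + row.op.sideNorm b
    simp only [← sideNorm_star, star_add]
    exact hrow _ _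

lemma sideNorm_sum_le {ι : Type*} (f : ι → n → A) (F : Finset ι) :
    σ.sideNorm (∑ k ∈ F, f k) ≤ ∑ k ∈ F, σ.sideNorm (f k) :=
  Finset.le_sum_of_subadditive _ (by simp [sideNorm, squareSum, form_zero_zero])
    σ.sideNorm_add_le _ _

open scoped ComplexOrder MatrixOrder Matrix.Norms.L2Operator in
lemma quadForm_nonneg {M : Matrix n n ℂ} (hM : M.PosSemidef) (a : n → A) :
    0 ≤ σ.quadForm M a := by
  classical
  obtain ⟨T, rfl⟩ := CStarAlgebra.nonneg_iff_eq_star_mul_self.mp hM.nonneg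
  rw [Matrix.star_eq_conjTranspose, ← squareSum_linComb]
  exact σ.squareSum_nonneg _

lemma sideNorm_linComb_le {T : Matrix m n ℂ} {C : ℝ} (hC : 0 ≤ C)
    (hT : ∀ x, ∑ i, ‖T.mulVec x i‖ ^ 2 ≤ C ^ 2 * ∑ k, ‖x k‖ ^ 2) (a : n → A) :
    σ.sideNorm (linComb T a) ≤ C * σ.sideNorm a := by
  classical
  have hle : σ.squareSum (linComb T a) ≤ ((C ^ 2 : ℝ) : ℂ) • σ.squareSum a := by
    have := σ.quadForm_nonneg (posSemidef_smul_one_sub hT) a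
    rwa [quadForm_sub, quadForm_smul, quadForm_one, ← squareSum_linComb, sub_nonneg] at this
  rw [sideNorm, Real.sqrt_le_left (mul_nonneg hC (σ.sideNorm_nonneg a)), mul_pow, sq_sideNorm]
  refine (CStarAlgebra.norm_le_norm_of_nonneg_of_le (σ.squareSum_nonneg _) hle).trans_eq ?_
  rw [norm_smul, Complex.norm_of_nonneg (sq_nonneg C)]

lemma norm_sum_smul_le (c : n → ℂ) (a : n → A) :
    ‖∑ i, c i • a i‖ ≤ √(∑ i, ‖c i‖ ^ 2) * σ.sideNorm a := by
  refine (σ.norm_le_sideNorm (linComb (Matrix.replicateRow Unit c) a) ()).trans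
    (σ.sideNorm_linComb_le (Real.sqrt_nonneg _) (fun x => ?_) a)
  rw [Real.sq_sqrt (by positivity), Fintype.sum_unique]
  calc ‖∑ i, c i * x i‖ ^ 2 ≤ (∑ i, ‖c i‖ * ‖x i‖) ^ 2 := by
        gcongr
        exact norm_sum_le_of_le _ fun i _ => norm_mul_le _ _
    _ ≤ (∑ i, ‖c i‖ ^ 2) * ∑ i, ‖x i‖ ^ 2 := Finset.sum_mul_sq_le_sq_mul_sq _ _ _

lemma sqrt_sum_norm_sq_apply_le (ψ : A →L[ℂ] ℂ) (a : n → A) :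
    √(∑ i, ‖ψ (a i)‖ ^ 2) ≤ ‖ψ‖ * σ.sideNorm a := by
  set S := √(∑ i, ‖ψ (a i)‖ ^ 2)
  have hsq : S * S = ‖ψ (∑ i, star (ψ (a i)) • a i)‖ := by
    have hsum : ψ (∑ i, star (ψ (a i)) • a i) = ((∑ i, ‖ψ (a i)‖ ^ 2 : ℝ) : ℂ) := by
      rw [map_sum]
      push_cast
      exact Finset.sum_congr rfl fun i _ => (map_smul _ _ _).trans (Complex.conj_mul' _)
    rw [hsum, Complex.norm_of_nonneg (by positivity), Real.mul_self_sqrt (by positivity)]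
  have hle : S * S ≤ S * (‖ψ‖ * σ.sideNorm a) := by
    calc S * S ≤ ‖ψ‖ * ‖∑ i, star (ψ (a i)) • a i‖ := hsq.trans_le (ψ.le_opNorm _)
      _ ≤ ‖ψ‖ * (S * σ.sideNorm a) := by
        gcongr
        simpa only [norm_star] using σ.norm_sum_smul_le (fun i => star (ψ (a i))) a
      _ = S * (‖ψ‖ * σ.sideNorm a) := by ring
  rcases (Real.sqrt_nonneg _ : 0 ≤ S).eq_or_lt with h0 | hpos
  · exact h0.symm.trans_le <| mul_nonneg (norm_nonneg _) (σ.sideNorm_nonneg a)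
  · exact le_of_mul_le_mul_left hle hpos

end Order

end Side

end Side

section Grothendieck

variable {P Q : Type*} [CStarAlgebra P] [CStarAlgebra Q]

open ComplexStarModule in
lemma sum_realPart_sq_add_sum_imaginaryPart_sq_le_one [PartialOrder P] [StarOrderedRing P]
    {n : Type*} [Fintype n] {a : n → P} (ha : ∀ σ : Side, ‖σ.squareSum a‖ ≤ 1) :
    ∑ i, (ℜ (a i) * ℜ (a i) : P) + ∑ i, (ℑ (a i) * ℑ (a i) : P) ≤ 1 := by
  have hle (σ : Side) : σ.squareSum a ≤ 1 :=
    (CStarAlgebra.norm_le_one_iff_of_nonneg _ (σ.squareSum_nonneg a)).1 (ha σ)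
  have hdouble : (2 : ℝ) • (∑ i, (ℜ (a i) * ℜ (a i) : P) + ∑ i, (ℑ (a i) * ℑ (a i) : P)) =
      Side.col.squareSum a + Side.row.squareSum a := by
    simp only [Side.squareSum, Side.form, ← Finset.sum_add_distrib, Finset.smul_sum,
      star_mul_self_add_self_mul_star, ofNat_smul_eq_nsmul]
  calc _ = (2⁻¹ : ℝ) • (Side.col.squareSum a + Side.row.squareSum a) := by
        rw [← hdouble, inv_smul_smul₀ two_ne_zero]
    _ ≤ (2⁻¹ : ℝ) • (1 + 1 : P) := by
        gcongr
        exacts [hle _, hle _]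
    _ = 1 := by rw [← two_smul ℝ (1 : P), inv_smul_smul₀ two_ne_zero]

lemma norm_squareSum_mul_star_unitary {n : Type*} [Fintype n] {a : n → P} {U : P}
    (hU : U ∈ unitary P) (σ : Side) :
    ‖σ.squareSum fun i => a i * star U‖ = ‖σ.squareSum a‖ := by
  cases σ
  · have hrow (i : n) : a i * star U * star (a i * star U) = a i * star (a i) := by
      rw [star_mul, star_star, mul_assoc, ← mul_assoc (star U), Unitary.star_mul_self_of_mem hU,
        one_mul]
    simp only [Side.squareSum, Side.form, hrow]
  · have hconj : (Side.col.squareSum fun i => a i * star U) =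
        U * Side.col.squareSum a * star U := by
      simp only [Side.squareSum, Side.form, star_mul, star_star, Finset.mul_sum, Finset.sum_mul,
        mul_assoc]
    rw [hconj, CStarRing.norm_mul_mem_unitary _ (Unitary.star_mem hU),
      CStarRing.norm_mem_unitary_mul _ hU]

open ComplexStarModule in
lemma AlmostUnital.norm_sum_apply_le_of_squareSum_le {G : P →ₗ[ℂ] Q →ₗ[ℂ] ℂ} {η : ℝ}
    (hG : AlmostUnital G η) {n : ℕ} (hη : η * (16 * 16 ^ n + 16 * n * 8 ^ n) ≤ 1)
    {a : Fin n → P} {b : Fin n → Q} (ha : ∀ σ : Side, ‖σ.squareSum a‖ ≤ 1)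
    (hb : ∀ σ : Side, ‖σ.squareSum b‖ ≤ 1) : ‖∑ i, G (a i) (b i)‖ ≤ 480 := by
  let _ : PartialOrder P := CStarAlgebra.spectralOrder P
  let _ : StarOrderedRing P := CStarAlgebra.spectralOrderedRing P
  let _ : PartialOrder Q := CStarAlgebra.spectralOrder Q
  let _ : StarOrderedRing Q := CStarAlgebra.spectralOrderedRing Q
  have hpartsP := sum_realPart_sq_add_sum_imaginaryPart_sq_le_one ha
  have hpartsQ := sum_realPart_sq_add_sum_imaginaryPart_sq_le_one hb
  have hsqP (f : Fin n → selfAdjoint P) : 0 ≤ ∑ i, (f i * f i : P) :=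
    Finset.sum_nonneg fun i _ => (f i).2.mul_self_nonneg
  have hsqQ (f : Fin n → selfAdjoint Q) : 0 ≤ ∑ i, (f i * f i : Q) :=
    Finset.sum_nonneg fun i _ => (f i).2.mul_self_nonneg
  have hbound (f : Fin n → selfAdjoint P) (hf : ∑ i, (f i * f i : P) ≤ 1)
      (g : Fin n → selfAdjoint Q) (hg : ∑ i, (g i * g i : Q) ≤ 1) :
      ‖∑ i, G (f i) (g i)‖ ≤ 120 :=
    hG.norm_sum_apply_le hη (fun i => (f i).2) hf (fun i => (g i).2) hg
  have hre_a := (le_add_of_nonneg_right (hsqP _)).trans hpartsP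
  have him_a := (le_add_of_nonneg_left (hsqP _)).trans hpartsP
  have hre_b := (le_add_of_nonneg_right (hsqQ _)).trans hpartsQ
  have him_b := (le_add_of_nonneg_left (hsqQ _)).trans hpartsQ
  have hexpand : ∑ i, G (a i) (b i) =
      (∑ i, G (ℜ (a i)) (ℜ (b i)) + Complex.I * ∑ i, G (ℜ (a i)) (ℑ (b i))) +
      (Complex.I * ∑ i, G (ℑ (a i)) (ℜ (b i)) - ∑ i, G (ℑ (a i)) (ℑ (b i))) := by
    simp only [Finset.mul_sum, ← Finset.sum_add_distrib, ← Finset.sum_sub_distrib]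
    refine Finset.sum_congr rfl fun i _ => ?_
    conv_lhs => rw [← realPart_add_I_smul_imaginaryPart (a i),
      ← realPart_add_I_smul_imaginaryPart (b i)]
    simp only [map_add, LinearMap.add_apply, map_smul, LinearMap.smul_apply, smul_eq_mul]
    linear_combination G (ℑ (a i)) (ℑ (b i)) * Complex.I_mul_I
  rw [hexpand]
  refine (norm_add_le_of_le (norm_add_le_of_le (hbound _ hre_a _ hre_b) ?_)
    (norm_sub_le_of_le ?_ (hbound _ him_a _ him_b))).trans_eq
    (by norm_num : (120 + 120 + (120 + 120) : ℝ) = 480) <;>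
  rw [norm_mul, Complex.norm_I, one_mul]
  exacts [hbound _ hre_a _ him_b, hbound _ him_a _ hre_b]

-- By Russo–Dye the norm is almost attained at a pair of unitaries, which are rotated to `(1, 1)`.
lemma exists_almostUnital_compl₁₂ {u : P →ₗ[ℂ] Q →ₗ[ℂ] ℂ} {s : ℝ} (hs : 0 < s)
    (hu : ∀ x y, ‖u x y‖ ≤ s * (‖x‖ * ‖y‖)) {η : ℝ} (hη : η ≤ 1) {x : P} {y : Q} (hx : ‖x‖ ≤ 1)
    (hy : ‖y‖ ≤ 1) (hxy : s * (1 - η) < ‖u x y‖) :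
    ∃ U ∈ unitary P, ∃ V ∈ unitary Q, ∃ c : ℂ, ‖c‖ = s⁻¹ ∧
      AlmostUnital (c • u.compl₁₂ (LinearMap.mulRight ℂ U) (LinearMap.mulRight ℂ V)) η := by
  have hs0 : 0 ≤ s * (1 - η) := mul_nonneg hs.le (by linarith)
  obtain ⟨U, hU, hUy⟩ : ∃ U ∈ unitary P, s * (1 - η) < ‖u U y‖ := by
    by_contra! hcon
    exact hxy.not_ge ((norm_apply_le_of_unitary (φ := u.flip y) hcon x).trans
      (mul_le_of_le_one_right hs0 hx))
  obtain ⟨V, hV, hUV⟩ : ∃ V ∈ unitary Q, s * (1 - η) < ‖u U V‖ := by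
    by_contra! hcon
    exact hUy.not_ge ((norm_apply_le_of_unitary hcon y).trans (mul_le_of_le_one_right hs0 hy))
  have hz : 0 < ‖u U V‖ := hs0.trans_lt hUV
  set c : ℂ := (starRingEnd ℂ (u U V) / ‖u U V‖) * (s⁻¹ : ℝ)
  have hc : ‖c‖ = s⁻¹ := by
    rw [norm_mul, norm_div, RCLike.norm_conj, Complex.norm_real, norm_norm, div_self hz.ne',
      one_mul, Complex.norm_of_nonneg (inv_nonneg.2 hs.le)]
  have hcUV : c * u U V = ((‖u U V‖ * s⁻¹ : ℝ) : ℂ) := by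
    rw [mul_right_comm, div_mul_eq_mul_div, Complex.conj_mul', sq, mul_div_assoc,
      div_self (Complex.ofReal_ne_zero.2 hz.ne'), mul_one, Complex.ofReal_mul]
  refine ⟨U, hU, V, hV, c, hc, fun X Y => ?_, ?_⟩
  · have := hu (X * U) (Y * V)
    rw [CStarRing.norm_mul_mem_unitary _ hU, CStarRing.norm_mul_mem_unitary _ hV] at this
    simpa [hc, inv_mul_le_iff₀ hs] using this
  · simp only [LinearMap.smul_apply, LinearMap.compl₁₂_apply, LinearMap.mulRight_apply, one_mul,
      smul_eq_mul, hcUV, Complex.ofReal_re]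
    rw [← div_eq_mul_inv, le_div_iff₀ hs, mul_comm]
    exact hUV.le

lemma norm_sum_apply_le_of_norm_almost_attained {u : P →ₗ[ℂ] Q →ₗ[ℂ] ℂ} {s : ℝ} (hs : 0 < s)
    (hu : ∀ x y, ‖u x y‖ ≤ s * (‖x‖ * ‖y‖)) {n : ℕ} {η : ℝ}
    (hη : η * (16 * 16 ^ n + 16 * n * 8 ^ n) ≤ 1) {x : P} {y : Q} (hx : ‖x‖ ≤ 1) (hy : ‖y‖ ≤ 1)
    (hxy : s * (1 - η) < ‖u x y‖) {a : Fin n → P} {b : Fin n → Q}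
    (ha : ∀ σ : Side, ‖σ.squareSum a‖ ≤ 1) (hb : ∀ σ : Side, ‖σ.squareSum b‖ ≤ 1) :
    ‖∑ i, u (a i) (b i)‖ ≤ 480 * s := by
  have hη1 : η ≤ 1 := by
    have h1 : (1 : ℝ) ≤ 16 ^ n := one_le_pow₀ (by norm_num)
    have h2 : (0 : ℝ) ≤ 16 * n * 8 ^ n := by positivity
    by_contra! hlt
    nlinarith
  obtain ⟨U, hU, V, hV, c, hc, hG⟩ := exists_almostUnital_compl₁₂ hs hu hη1 hx hy hxy
  have hle := hG.norm_sum_apply_le_of_squareSum_le hη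
    (fun σ => (norm_squareSum_mul_star_unitary hU σ).trans_le (ha σ))
    (fun σ => (norm_squareSum_mul_star_unitary hV σ).trans_le (hb σ))
  simp only [LinearMap.smul_apply, LinearMap.compl₁₂_apply, LinearMap.mulRight_apply, mul_assoc,
    Unitary.star_mul_self_of_mem hU, Unitary.star_mul_self_of_mem hV, mul_one] at hle
  rwa [← Finset.smul_sum, norm_smul, hc, inv_mul_le_iff₀ hs, mul_comm] at hle

end Grothendieck

section NonUnital

variable {M N : Type*} [NonUnitalCStarAlgebra M] [NonUnitalCStarAlgebra N]

/-- Right multiplication by `e ∈ M`, as a map from the unitization of `M` into `M`. -/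
def unitizationMulRight (e : M) : Unitization ℂ M →ₗ[ℂ] M where
  toFun X := X.fst • e + X.snd * e
  map_add' X Y := by
    simp only [Unitization.fst_add, Unitization.snd_add, add_smul, add_mul]
    abel
  map_smul' c X := by simp [mul_smul, smul_add, smul_mul_assoc]

lemma unitizationMulRight_inr (e x : M) : unitizationMulRight e (x : Unitization ℂ M) = x * e := by
  simp [unitizationMulRight]

lemma norm_unitizationMulRight_le {e : M} (he : ‖e‖ ≤ 1) (X : Unitization ℂ M) :
    ‖unitizationMulRight e X‖ ≤ ‖X‖ := by
  have hinr : (↑(unitizationMulRight e X) : Unitization ℂ M) = X * e := by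
    apply Unitization.ext <;> simp [unitizationMulRight]
  rw [← Unitization.norm_inr (𝕜 := ℂ), hinr]
  refine (norm_mul_le _ _).trans (mul_le_of_le_one_right (norm_nonneg _) ?_)
  rwa [Unitization.norm_inr]

lemma norm_squareSum_inr {n : Type*} [Fintype n] (a : n → M) (σ : Side) :
    ‖σ.squareSum fun i => (a i : Unitization ℂ M)‖ = ‖σ.squareSum a‖ := by
  have hinr : σ.squareSum (fun i => (a i : Unitization ℂ M)) = (σ.squareSum a : M) := by
    rw [Side.squareSum, Side.squareSum, ← Unitization.inrHom_apply ℂ ℂ M, map_sum]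
    cases σ <;> simp [Side.form]
  rw [hinr, Unitization.norm_inr]

open Filter in
lemma tendsto_apply_mul_approximateUnit [PartialOrder M] [StarOrderedRing M] [PartialOrder N]
    [StarOrderedRing N] (u : M →L[ℂ] N →L[ℂ] ℂ) (p : M) (q : N) :
    Tendsto (fun z : M × N => u (p * z.1) (q * z.2))
      (CStarAlgebra.approximateUnit M ×ˢ CStarAlgebra.approximateUnit N) (nhds (u p q)) := by
  have hp := ((CStarAlgebra.increasingApproximateUnit M).tendsto_mul_left p).comp
    (tendsto_fst (g := CStarAlgebra.approximateUnit N))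
  have hq := ((CStarAlgebra.increasingApproximateUnit N).tendsto_mul_left q).comp
    (tendsto_snd (f := CStarAlgebra.approximateUnit M))
  have hcont : Continuous fun z : M × N => u z.1 z.2 := by fun_prop
  exact (hcont.tendsto (p, q)).comp (hp.prodMk_nhds hq)

lemma norm_sum_apply_mul_le {u : M →L[ℂ] N →L[ℂ] ℂ} (hu : 0 < ‖u‖) {n : ℕ} {η : ℝ}
    (hη : η * (16 * 16 ^ n + 16 * n * 8 ^ n) ≤ 1) {e : M} {f : N} (he : ‖e‖ ≤ 1) (hf : ‖f‖ ≤ 1)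
    {x : M} {y : N} (hx : ‖x‖ ≤ 1) (hy : ‖y‖ ≤ 1) (hxy : ‖u‖ * (1 - η) < ‖u (x * e) (y * f)‖)
    {a : Fin n → M} {b : Fin n → N} (ha : ∀ σ : Side, ‖σ.squareSum a‖ ≤ 1)
    (hb : ∀ σ : Side, ‖σ.squareSum b‖ ≤ 1) : ‖∑ i, u (a i * e) (b i * f)‖ ≤ 480 * ‖u‖ := by
  let v := u.toLinearMap₁₂.compl₁₂ (unitizationMulRight e) (unitizationMulRight f)
  have hv (X Y) : ‖v X Y‖ ≤ ‖u‖ * (‖X‖ * ‖Y‖) := by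
    rw [← mul_assoc]
    exact (u.le_opNorm₂ _ _).trans (by
      gcongr
      exacts [norm_unitizationMulRight_le he X, norm_unitizationMulRight_le hf Y])
  have hv_inr (p : M) (q : N) : v p q = u (p * e) (q * f) := by
    rw [← unitizationMulRight_inr, ← unitizationMulRight_inr]
    rfl
  simpa only [hv_inr] using norm_sum_apply_le_of_norm_almost_attained hu hv hη
    (by rwa [Unitization.norm_inr]) (by rwa [Unitization.norm_inr]) (by rwa [hv_inr])
    (fun σ => (norm_squareSum_inr a σ).trans_le (ha σ))
    (fun σ => (norm_squareSum_inr b σ).trans_le (hb σ))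

lemma norm_sum_apply_le_of_squareSum_le_fin (u : M →L[ℂ] N →L[ℂ] ℂ) {n : ℕ} {a : Fin n → M}
    {b : Fin n → N} (ha : ∀ σ : Side, ‖σ.squareSum a‖ ≤ 1) (hb : ∀ σ : Side, ‖σ.squareSum b‖ ≤ 1) :
    ‖∑ i, u (a i) (b i)‖ ≤ 480 * ‖u‖ := by
  let _ : PartialOrder M := CStarAlgebra.spectralOrder M
  let _ : StarOrderedRing M := CStarAlgebra.spectralOrderedRing M
  let _ : PartialOrder N := CStarAlgebra.spectralOrder N
  let _ : StarOrderedRing N := CStarAlgebra.spectralOrderedRing N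
  rcases (norm_nonneg u).eq_or_lt with h0 | hpos
  · have hu : u = 0 := (ContinuousLinearMap.opNorm_zero_iff u).1 h0.symm
    rw [← h0, mul_zero, Finset.sum_eq_zero fun i _ => by simp [hu], norm_zero]
  set η : ℝ := (16 * 16 ^ n + 16 * n * 8 ^ n)⁻¹
  have hη0 : 0 < η := by positivity
  have hη : η * (16 * 16 ^ n + 16 * n * 8 ^ n) ≤ 1 := (inv_mul_cancel₀ (by positivity)).le
  obtain ⟨x, hx, hux⟩ :=
    u.exists_lt_apply_of_lt_opNorm (show ‖u‖ * (1 - η) < ‖u‖ by nlinarith)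
  obtain ⟨y, hy, huxy⟩ := (u x).exists_lt_apply_of_lt_opNorm hux
  have hM := CStarAlgebra.increasingApproximateUnit M
  have hN := CStarAlgebra.increasingApproximateUnit N
  have := hM.neBot
  have := hN.neBot
  refine le_of_tendsto (tendsto_finsetSum Finset.univ fun i _ =>
    tendsto_apply_mul_approximateUnit u (a i) (b i)).norm ?_
  filter_upwards [(tendsto_apply_mul_approximateUnit u x y).norm.eventually (lt_mem_nhds huxy),
    hM.eventually_norm.prod_mk hN.eventually_norm] with z hz ⟨he, hf⟩
  exact norm_sum_apply_mul_le hpos hη he hf hx.le hy.le hz ha hb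

/-- The noncommutative Grothendieck inequality, with a crude constant. -/
theorem norm_sum_apply_le_of_squareSum_le (u : M →L[ℂ] N →L[ℂ] ℂ) {n : Type*} [Fintype n]
    {a : n → M} {b : n → N} (ha : ∀ σ : Side, ‖σ.squareSum a‖ ≤ 1)
    (hb : ∀ σ : Side, ‖σ.squareSum b‖ ≤ 1) : ‖∑ i, u (a i) (b i)‖ ≤ 480 * ‖u‖ := by
  let e := (Fintype.equivFin n).symm
  rw [← e.sum_comp]
  exact norm_sum_apply_le_of_squareSum_le_fin u (a := a ∘ e) (b := b ∘ e)
    (fun σ => by rw [σ.squareSum_comp_equiv]; exact ha σ)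
    (fun σ => by rw [σ.squareSum_comp_equiv]; exact hb σ)

end NonUnital

section Embezzlement

/-- A matrix `m` of transition weights of speed `t`: nonnegative, with row sums at most `1` and
column sums at most `t`. -/
structure IsTransitionWeight {d : Type*} [Fintype d] (t : ℝ) (m : d → d → ℝ) : Prop where
  nonneg : ∀ s s', 0 ≤ m s s'
  row_sum_le : ∀ s, ∑ s', m s s' ≤ 1
  col_sum_le : ∀ s', ∑ s, m s s' ≤ t

/-- The quantity `∑ m(s, s') √ρ(s) √ρ(s')` measuring how much of the mass of `ρ` is preserved by
the transition `m`. -/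
def overlap {d : Type*} [Fintype d] (ρ : d → ℝ) (m : d → d → ℝ) : ℝ :=
  ∑ s, ∑ s', m s s' * (√(ρ s) * √(ρ s'))

section Transition

variable {d e : Type*} [Fintype d] [Fintype e] {t : ℝ} {ρ : d → ℝ} {m : d → d → ℝ}

lemma IsTransitionWeight.mono {t' : ℝ} (hm : IsTransitionWeight t m) (h : t ≤ t') :
    IsTransitionWeight t' m :=
  ⟨hm.nonneg, hm.row_sum_le, fun s' => (hm.col_sum_le s').trans h⟩

lemma IsTransitionWeight.smul {c : ℝ} (hm : IsTransitionWeight t m) (ht : 0 ≤ t) (hc : 0 ≤ c)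
    (hc' : c ≤ 1) : IsTransitionWeight t (c • m) where
  nonneg s s' := mul_nonneg hc (hm.nonneg s s')
  row_sum_le s := by
    simp only [Pi.smul_apply, smul_eq_mul, ← Finset.mul_sum]
    exact mul_le_one₀ hc' (Finset.sum_nonneg fun _ _ => hm.nonneg _ _) (hm.row_sum_le s)
  col_sum_le s' := by
    simp only [Pi.smul_apply, smul_eq_mul, ← Finset.mul_sum]
    exact (mul_le_mul_of_nonneg_left (hm.col_sum_le s') hc).trans (mul_le_of_le_one_left ht hc')

lemma IsTransitionWeight.comp_equiv (hm : IsTransitionWeight t m) (f : e ≃ d) :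
    IsTransitionWeight t fun s s' => m (f s) (f s') where
  nonneg _ _ := hm.nonneg _ _
  row_sum_le s := (f.sum_comp (m (f s))).trans_le (hm.row_sum_le _)
  col_sum_le s' := (f.sum_comp fun s => m s (f s')).trans_le (hm.col_sum_le _)

lemma overlap_smul (c : ℝ) : overlap ρ (c • m) = c * overlap ρ m := by
  simp only [overlap, Pi.smul_apply, smul_eq_mul, mul_assoc, Finset.mul_sum]

lemma overlap_comp_equiv (f : e ≃ d) :
    overlap (ρ ∘ f) (fun s s' => m (f s) (f s')) = overlap ρ m := by
  simp only [overlap, Function.comp_apply]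
  rw [← f.sum_comp]
  exact Finset.sum_congr rfl fun s _ =>
    f.sum_comp fun s' => m (f s) s' * (√(ρ (f s)) * √(ρ s'))

end Transition

/-- The disjoint union of `N` dyadic levels, the `j`-th of which has `2 ^ j` points. -/
abbrev DyadicIndex (N : ℕ) := Σ j : Fin N, Fin (2 ^ (j : ℕ))

/-- The probability weight on `DyadicIndex N` giving all levels the same mass. -/
def dyadicWeight (N : ℕ) (s : DyadicIndex N) : ℝ := (2 ^ (s.1 : ℕ))⁻¹ / N

/-- The indicator function of the pairs `(j, j')` with `j = j' + r`. -/
def shiftIndicator {N : ℕ} (r : ℤ) (j j' : Fin N) : ℝ := if (j : ℤ) = j' + r then 1 else 0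

/-- The transition of `DyadicIndex N` spreading level `j' + r` uniformly over level `j'`. -/
def dyadicShift {N : ℕ} (r : ℤ) (s s' : DyadicIndex N) : ℝ :=
  (2 ^ (s'.1 : ℕ))⁻¹ * shiftIndicator r s.1 s'.1

variable {N : ℕ}

lemma sum_dyadicIndex (f : Fin N → ℝ) :
    ∑ s : DyadicIndex N, f s.1 = ∑ j : Fin N, 2 ^ (j : ℕ) * f j := by
  rw [Fintype.sum_sigma]
  simp

lemma dyadicWeight_nonneg (s : DyadicIndex N) : 0 ≤ dyadicWeight N s := by
  unfold dyadicWeight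
  positivity

lemma sum_dyadicWeight_le_one : ∑ s, dyadicWeight N s ≤ 1 := by
  have hlevel (j : Fin N) : (2 : ℝ) ^ (j : ℕ) * ((2 ^ (j : ℕ))⁻¹ / N) = (N : ℝ)⁻¹ := by
    field_simp
  simp only [dyadicWeight]
  rw [sum_dyadicIndex fun j => (2 ^ (j : ℕ))⁻¹ / (N : ℝ), Finset.sum_congr rfl fun j _ => hlevel j,
    Finset.sum_const, Finset.card_univ, Fintype.card_fin, nsmul_eq_mul]
  exact mul_inv_le_one

section ShiftIndicator

variable (r : ℤ)

lemma shiftIndicator_nonneg (j j' : Fin N) : 0 ≤ shiftIndicator r j j' := by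
  unfold shiftIndicator
  split_ifs <;> norm_num

lemma sum_shiftIndicator_right_le_one (j : Fin N) : ∑ j', shiftIndicator r j j' ≤ 1 := by
  simp only [shiftIndicator]
  rw [Finset.sum_boole]
  exact_mod_cast Finset.card_le_one.2 (by simp only [Finset.mem_filter_univ]; omega)

lemma sum_shiftIndicator_left_le_one (j' : Fin N) : ∑ j, shiftIndicator r j j' ≤ 1 := by
  simp only [shiftIndicator]
  rw [Finset.sum_boole]
  exact_mod_cast Finset.card_le_one.2 (by simp only [Finset.mem_filter_univ]; omega)

lemma sub_natAbs_le_sum_shiftIndicator :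
    (N : ℝ) - r.natAbs ≤ ∑ j : Fin N, ∑ j', shiftIndicator r j j' := by
  simp only [shiftIndicator]
  rw [← Finset.sum_product', Finset.sum_boole, sub_le_iff_le_add]
  norm_cast
  rw [← Nat.sub_le_iff_le_add, ← Finset.card_fin (N - r.natAbs)]
  refine Finset.card_le_card_of_injOn
    (fun k : Fin (N - r.natAbs) => ((⟨k + r.toNat, by omega⟩ : Fin N),
      (⟨k + (-r).toNat, by omega⟩ : Fin N))) (fun k _ => ?_) fun a _ b _ hab => ?_
  · simp only [Finset.univ_product_univ, Finset.coe_filter, Finset.mem_univ, true_and,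
      Set.mem_ofPred_eq]
    omega
  · simp only [Prod.mk.injEq, Fin.mk.injEq] at hab
    ext
    omega

lemma mul_shiftIndicator (j j' : Fin N) :
    2 ^ (j : ℕ) * (2 ^ (j' : ℕ))⁻¹ * shiftIndicator r j j' = 2 ^ r * shiftIndicator r j j' := by
  unfold shiftIndicator
  split_ifs with h
  · rw [eq_sub_of_add_eq' h.symm, zpow_sub₀ two_ne_zero, zpow_natCast, zpow_natCast,
      div_eq_mul_inv]
  · simp

lemma isTransitionWeight_dyadicShift :
    IsTransitionWeight (2 ^ r) (dyadicShift r : DyadicIndex N → DyadicIndex N → ℝ) where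
  nonneg s s' := mul_nonneg (by positivity) (shiftIndicator_nonneg r _ _)
  row_sum_le s := by
    simp only [dyadicShift]
    rw [sum_dyadicIndex fun j' => (2 ^ (j' : ℕ))⁻¹ * shiftIndicator r s.1 j']
    simp only [mul_inv_cancel_left₀ (pow_ne_zero _ (two_ne_zero (α := ℝ)))]
    exact sum_shiftIndicator_right_le_one r s.1
  col_sum_le s' := by
    simp only [dyadicShift]
    rw [sum_dyadicIndex fun j => (2 ^ (s'.1 : ℕ))⁻¹ * shiftIndicator r j s'.1]
    simp only [← mul_assoc, mul_shiftIndicator, ← Finset.mul_sum]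
    exact mul_le_of_le_one_right (by positivity) (sum_shiftIndicator_left_le_one r _)

lemma overlap_dyadicShift :
    overlap (dyadicWeight N) (dyadicShift r) =
      √(2 ^ r) / N * ∑ j : Fin N, ∑ j', shiftIndicator r j j' := by
  have hterm (j j' : Fin N) : (2 : ℝ) ^ (j : ℕ) * (2 ^ (j' : ℕ) * ((2 ^ (j' : ℕ))⁻¹ *
      shiftIndicator r j j' * (√((2 ^ (j : ℕ))⁻¹ / N) * √((2 ^ (j' : ℕ))⁻¹ / N)))) =
      √(2 ^ r) / N * shiftIndicator r j j' := by
    unfold shiftIndicator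
    split_ifs with h
    · have hr : (2 : ℝ) ^ r = (√(2 ^ (j : ℕ)) / √(2 ^ (j' : ℕ))) ^ 2 := by
        rw [div_pow, Real.sq_sqrt (by positivity), Real.sq_sqrt (by positivity),
          eq_sub_of_add_eq' h.symm, zpow_sub₀ two_ne_zero, zpow_natCast, zpow_natCast]
      have hN : (0 : ℝ) < N := by exact_mod_cast j.pos
      rw [hr, Real.sqrt_sq (by positivity), Real.sqrt_div (by positivity),
        Real.sqrt_div (by positivity), Real.sqrt_inv, Real.sqrt_inv]
      field_simp
      rw [Real.sq_sqrt (by positivity), Real.sq_sqrt (by positivity)]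
    · simp
  have hinner (s : DyadicIndex N) :=
    sum_dyadicIndex fun j' => (2 ^ (j' : ℕ))⁻¹ * shiftIndicator r s.1 j' *
      (√((2 ^ (s.1 : ℕ))⁻¹ / N) * √((2 ^ (j' : ℕ))⁻¹ / N))
  simp only [overlap, dyadicShift, dyadicWeight, hinner]
  rw [sum_dyadicIndex fun j => ∑ j' : Fin N, 2 ^ (j' : ℕ) * ((2 ^ (j' : ℕ))⁻¹ *
    shiftIndicator r j j' * (√((2 ^ (j : ℕ))⁻¹ / N) * √((2 ^ (j' : ℕ))⁻¹ / N)))]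
  simp only [Finset.mul_sum, hterm]

end ShiftIndicator

lemma exists_isTransitionWeight_overlap_eq {t : ℝ} {r : ℤ} (ht : t ∈ Set.Ico (2 ^ r) (2 ^ (r + 1)))
    (hN : 2 * r.natAbs < N) : ∃ m, IsTransitionWeight t m ∧
      overlap (dyadicWeight N) m = √t / 4 := by
  have hpos : 0 < t := lt_of_lt_of_le (by positivity) ht.1
  have hN0 : (0 : ℝ) < N := by exact_mod_cast hN.pos
  set c := overlap (dyadicWeight N) (dyadicShift r)
  have hsqrt : √t ≤ √(2 ^ r) * 2 := by
    rw [Real.sqrt_le_left (by positivity), mul_pow, Real.sq_sqrt (by positivity)]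
    have := ht.2
    rw [zpow_add_one₀ two_ne_zero] at this
    linarith
  have hcount : (N : ℝ) / 2 ≤ ∑ j : Fin N, ∑ j', shiftIndicator r j j' := by
    have : (2 : ℝ) * r.natAbs ≤ N := by exact_mod_cast hN.le
    linarith [sub_natAbs_le_sum_shiftIndicator (N := N) r]
  have hle : √t / 4 ≤ c := by
    calc √t / 4 ≤ √(2 ^ r) / N * (N / 2) := by field_simp; linarith
      _ ≤ c := by
        rw [show c = _ from overlap_dyadicShift r]
        gcongr
  have hc : 0 < c := lt_of_lt_of_le (by positivity) hle
  refine ⟨(√t / 4 / c) • dyadicShift r, ((isTransitionWeight_dyadicShift r).mono ht.1).smul hpos.le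
    (by positivity) ((div_le_one hc).2 hle), ?_⟩
  rw [overlap_smul, div_mul_cancel₀ _ hc.ne']

lemma exists_isTransitionWeight_family {k : Type*} [Finite k] {t : k → ℝ} (ht : ∀ i, 0 < t i) :
    ∃ (d : ℕ) (ρ : Fin d → ℝ) (m : k → Fin d → Fin d → ℝ), (∀ s, 0 ≤ ρ s) ∧ ∑ s, ρ s ≤ 1 ∧
      ∀ i, IsTransitionWeight (t i) (m i) ∧ overlap ρ (m i) = √(t i) / 4 := by
  cases nonempty_fintype k
  choose r hr using fun i => exists_mem_Ico_zpow (ht i) one_lt_two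
  set N : ℕ := 2 * (∑ i, (r i).natAbs) + 1
  have hlt (i) : 2 * (r i).natAbs < N := by
    have := Finset.single_le_sum (f := fun i => (r i).natAbs) (fun _ _ => Nat.zero_le _)
      (Finset.mem_univ i)
    omega
  choose m hm using fun i => exists_isTransitionWeight_overlap_eq (hr i) (hlt i)
  let e := (Fintype.equivFin (DyadicIndex N)).symm
  exact ⟨_, dyadicWeight N ∘ e, fun i s s' => m i (e s) (e s'), fun s => dyadicWeight_nonneg _,
    (e.sum_comp _).trans_le sum_dyadicWeight_le_one,
    fun i => ⟨(hm i).1.comp_equiv e, (overlap_comp_equiv e).trans (hm i).2⟩⟩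

end Embezzlement

section WeightedBound

variable {A B : Type*} [NonUnitalCStarAlgebra A] [NonUnitalCStarAlgebra B]

section MatrixUnits

variable {d : Type*} [DecidableEq d]

/-- The matrix with single entry `a`, as an element of the C⋆-algebra of matrices. -/
def cstarSingle (s s' : d) (a : A) : CStarMatrix d d A :=
  CStarMatrix.ofMatrix (Matrix.single s s' a)

lemma star_cstarSingle (s s' : d) (a : A) :
    star (cstarSingle s s' a) = cstarSingle s' s (star a) :=
  congrArg CStarMatrix.ofMatrix (Matrix.conjTranspose_single s s' a)

/-- The family `√w(i, s, s') z(i) ⊗ e(s, s')` of matrices over `A`. -/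
def amplify {k : Type*} (w : k → d → d → ℝ) (z : k → A) (p : k × d × d) : CStarMatrix d d A :=
  cstarSingle p.2.1 p.2.2 ((√(w p.1 p.2.1 p.2.2) : ℂ) • z p.1)

variable [Fintype d]

/-- Diagonal matrices, as a homomorphism of C⋆-algebras. -/
def cstarDiagonal : (d → A) →⋆ₙₐ[ℂ] CStarMatrix d d A where
  toFun a := CStarMatrix.ofMatrix (Matrix.diagonal a)
  map_smul' c a := congrArg CStarMatrix.ofMatrix (Matrix.diagonal_smul c a)
  map_zero' := congrArg CStarMatrix.ofMatrix Matrix.diagonal_zero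
  map_add' a b := congrArg CStarMatrix.ofMatrix (Matrix.diagonal_add a b).symm
  map_mul' a b := congrArg CStarMatrix.ofMatrix (Matrix.diagonal_mul_diagonal a b).symm
  map_star' a := congrArg CStarMatrix.ofMatrix (Matrix.diagonal_conjTranspose a).symm

lemma cstarSingle_mul_star (s s' : d) (a : A) :
    cstarSingle s s' a * star (cstarSingle s s' a) = cstarDiagonal (Pi.single s (a * star a)) := by
  rw [star_cstarSingle]
  exact congrArg CStarMatrix.ofMatrix
    ((Matrix.single_mul_single_same ..).trans (Matrix.diagonal_single s _).symm)

end MatrixUnits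

section Order

variable [PartialOrder A] [StarOrderedRing A]

lemma norm_sum_smul_le_norm_sum_smul {k : Type*} [Fintype k] {w q : k → ℝ} {p : k → A}
    (hp : ∀ i, 0 ≤ p i) (hw : ∀ i, 0 ≤ w i) (hwq : ∀ i, w i ≤ q i) :
    ‖∑ i, (w i : ℂ) • p i‖ ≤ ‖∑ i, (q i : ℂ) • p i‖ := by
  simp only [Complex.coe_smul]
  refine CStarAlgebra.norm_le_norm_of_nonneg_of_le
    (Finset.sum_nonneg fun i _ => smul_nonneg (hw i) (hp i))
    (Finset.sum_le_sum fun i _ => smul_le_smul_of_nonneg_right (hwq i) (hp i))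

variable {d : Type*} [Fintype d] [DecidableEq d]

lemma norm_cstarDiagonal_le {a : d → A} {C : ℝ} (hC : 0 ≤ C) (ha : ∀ i, ‖a i‖ ≤ C) :
    ‖cstarDiagonal a‖ ≤ C :=
  (NonUnitalStarAlgHom.norm_apply_le cstarDiagonal a).trans ((pi_norm_le_iff_of_nonneg hC).2 ha)

variable {k : Type*} [Fintype k] [DecidableEq k]

lemma norm_row_squareSum_amplify_le {w : k → d → d → ℝ} {q : k → ℝ} (hw : ∀ i s s', 0 ≤ w i s s')
    (hq : ∀ i s, ∑ s', w i s s' ≤ q i) (z : k → A) :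
    ‖Side.row.squareSum (amplify w z)‖ ≤
      ‖Side.row.quadForm (Matrix.diagonal fun i => (q i : ℂ)) z‖ := by
  have hdiag : Side.row.squareSum (amplify w z) =
      cstarDiagonal fun s => ∑ i, ((∑ s', w i s s' : ℝ) : ℂ) • (z i * star (z i)) := by
    have hsq (i s s') : (√(w i s s') : ℂ) • z i * star ((√(w i s s') : ℂ) • z i) =
        (w i s s' : ℂ) • (z i * star (z i)) := by
      rw [star_smul, smul_mul_smul_comm, Complex.star_def, Complex.conj_ofReal,
        ← Complex.ofReal_mul, Real.mul_self_sqrt (hw i s s')]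
    simp only [Side.squareSum, Side.form, amplify, cstarSingle_mul_star, hsq, ← map_sum]
    congr 1
    funext s
    simp [Fintype.sum_prod_type, Finset.sum_apply, Pi.single_apply, Finset.sum_smul]
  rw [hdiag, Side.quadForm_diagonal]
  exact norm_cstarDiagonal_le (norm_nonneg _) fun s =>
    norm_sum_smul_le_norm_sum_smul (fun i => mul_star_self_nonneg (z i))
      (fun i => Finset.sum_nonneg fun _ _ => hw i _ _) fun i => hq i s

lemma norm_col_squareSum_amplify_le {w : k → d → d → ℝ} {q : k → ℝ} (hw : ∀ i s s', 0 ≤ w i s s')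
    (hq : ∀ i s', ∑ s, w i s s' ≤ q i) (z : k → A) :
    ‖Side.col.squareSum (amplify w z)‖ ≤
      ‖Side.col.quadForm (Matrix.diagonal fun i => (q i : ℂ)) z‖ := by
  have hstar : star (amplify w z) = amplify (fun i s s' => w i s' s) (star z) ∘
      (Equiv.refl k).prodCongr (Equiv.prodComm d d) := by
    funext p
    simp [amplify, star_cstarSingle]
  have hquad : Side.col.quadForm (Matrix.diagonal fun i => (q i : ℂ)) z =
      Side.row.quadForm (Matrix.diagonal fun i => (q i : ℂ)) (star z) := by
    simp only [Side.quadForm_diagonal, Pi.star_apply, Side.form_star_star]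
    rfl
  rw [show Side.col = Side.row.op from rfl, ← Side.squareSum_star, hstar, Side.squareSum_comp_equiv,
    show Side.row.op = Side.col from rfl, hquad]
  exact norm_row_squareSum_amplify_le (fun i s s' => hw i s' s) hq (star z)

end Order

section MatrixForm

variable {d : Type*} [Fintype d]

/-- The bilinear form `(S, T) ↦ ∑ √ρ(s) √ρ(s') u(S(s, s') ⊗ T(s, s'))` on matrices. -/
def matrixForm (u : A ⊗[ℂ] B →ₗ[ℂ] ℂ) (ρ : d → ℝ) :
    CStarMatrix d d A →ₗ[ℂ] CStarMatrix d d B →ₗ[ℂ] ℂ :=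
  ∑ s, ∑ s', ((√(ρ s) * √(ρ s') : ℝ) : ℂ) • ((TensorProduct.mk ℂ A B).compr₂ u).compl₁₂
    (Matrix.entryLinearMap ℂ A s s' ∘ₗ (CStarMatrix.ofMatrixₗ (R := ℂ)).symm.toLinearMap)
    (Matrix.entryLinearMap ℂ B s s' ∘ₗ (CStarMatrix.ofMatrixₗ (R := ℂ)).symm.toLinearMap)

lemma matrixForm_apply (u : A ⊗[ℂ] B →ₗ[ℂ] ℂ) (ρ : d → ℝ) (S : CStarMatrix d d A)
    (T : CStarMatrix d d B) : matrixForm u ρ S T =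
      u (∑ s, ∑ s', ((√(ρ s) * √(ρ s') : ℝ) : ℂ) • (S s s' ⊗ₜ[ℂ] T s s')) := by
  simp only [matrixForm, LinearMap.sum_apply, LinearMap.smul_apply, map_sum, map_smul]
  rfl

lemma matrixForm_cstarSingle [DecidableEq d] (u : A ⊗[ℂ] B →ₗ[ℂ] ℂ) (ρ : d → ℝ) (s s' : d) (a : A)
    (b : B) : matrixForm u ρ (cstarSingle s s' a) (cstarSingle s s' b) =
      ((√(ρ s) * √(ρ s') : ℝ) : ℂ) * u (a ⊗ₜ b) := by
  rw [matrixForm_apply, Finset.sum_eq_single s, Finset.sum_eq_single s'] <;>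
  simp +contextual [cstarSingle, Matrix.single_apply, Ne.symm]

end MatrixForm

lemma sum_matrixForm_amplify {k d : Type*} [Fintype k] [Fintype d] [DecidableEq d]
    (u : A ⊗[ℂ] B →ₗ[ℂ] ℂ) {ρ : d → ℝ} {t : k → ℝ} {m : k → d → d → ℝ}
    (hm : ∀ i, IsTransitionWeight (t i) (m i)) (ht : ∀ i, 0 < t i)
    (hρ : ∀ i, overlap ρ (m i) = √(t i) / 4) (x : k → A) (y : k → B) :
    ∑ p, matrixForm u ρ (amplify m x p) (amplify (fun i s s' => m i s s' / t i) y p) =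
      (1 / 4 : ℝ) * u (∑ i, x i ⊗ₜ[ℂ] y i) := by
  have hterm (i s s') : ((√(ρ s) * √(ρ s') : ℝ) : ℂ) *
      u (((√(m i s s') : ℂ) • x i) ⊗ₜ[ℂ] ((√(m i s s' / t i) : ℂ) • y i)) =
      (((√(t i))⁻¹ * (m i s s' * (√(ρ s) * √(ρ s'))) : ℝ) : ℂ) * u (x i ⊗ₜ[ℂ] y i) := by
    rw [TensorProduct.smul_tmul_smul, map_smul, smul_eq_mul, ← mul_assoc, ← Complex.ofReal_mul,
      ← Complex.ofReal_mul, Real.sqrt_div ((hm i).nonneg s s'), mul_div_assoc',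
      Real.mul_self_sqrt ((hm i).nonneg s s')]
    ring_nf
  have hquarter (i) : (√(t i))⁻¹ * ∑ s, ∑ s', m i s s' * (√(ρ s) * √(ρ s')) = 1 / 4 := by
    have := (Real.sqrt_pos.2 (ht i)).ne'
    rw [← overlap, hρ]
    field_simp
  simp only [amplify, matrixForm_cstarSingle, hterm, Fintype.sum_prod_type, ← Finset.sum_mul,
    ← Complex.ofReal_sum, ← Finset.mul_sum, hquarter, map_sum]

variable [PartialOrder A] [StarOrderedRing A] [PartialOrder B] [StarOrderedRing B]

/-- Contractivity of a functional for the operator space projective norm, tested only on the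
elements `α (S ⊗ T) α⋆` with `α` supported on the diagonal of the index set and nonnegative. -/
def IsDiagonallyContractive (u : A ⊗[ℂ] B →ₗ[ℂ] ℂ) : Prop :=
  ∀ (d : ℕ) (ρ : Fin d → ℝ), (∀ s, 0 ≤ ρ s) → ∑ s, ρ s ≤ 1 →
    ∀ (S : CStarMatrix (Fin d) (Fin d) A) (T : CStarMatrix (Fin d) (Fin d) B),
      ‖u (∑ s, ∑ s', ((√(ρ s) * √(ρ s') : ℝ) : ℂ) • (S s s' ⊗ₜ[ℂ] T s s'))‖ ≤ ‖S‖ * ‖T‖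

-- A transition weight of speed `t i` lets the matrix units absorb the weight `t i`, so that the
-- amplified families satisfy the unweighted hypotheses of the Grothendieck inequality.
theorem norm_apply_sum_tmul_le {u : A ⊗[ℂ] B →ₗ[ℂ] ℂ} (hu : IsDiagonallyContractive u)
    {k : Type*} [Fintype k] [DecidableEq k] {x : k → A} {y : k → B} {t : k → ℝ}
    (ht : ∀ i, 0 < t i) (hx : ‖Side.row.squareSum x‖ ≤ 1)
    (htx : ‖Side.col.quadForm (Matrix.diagonal fun i => (t i : ℂ)) x‖ ≤ 1)
    (hy : ‖Side.col.squareSum y‖ ≤ 1)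
    (hty : ‖Side.row.quadForm (Matrix.diagonal fun i => (((t i)⁻¹ : ℝ) : ℂ)) y‖ ≤ 1) :
    ‖u (∑ i, x i ⊗ₜ[ℂ] y i)‖ ≤ 1920 := by
  obtain ⟨d, ρ, m, hρ, hρ_sum, hm⟩ := exists_isTransitionWeight_family ht
  have hm_div (i s s') : 0 ≤ m i s s' / t i := div_nonneg ((hm i).1.nonneg s s') (ht i).le
  let F : CStarMatrix (Fin d) (Fin d) A →L[ℂ] CStarMatrix (Fin d) (Fin d) B →L[ℂ] ℂ :=
    (matrixForm u ρ).mkContinuous₂ 1 fun S T => by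
      rw [matrixForm_apply, one_mul]
      exact hu d ρ hρ hρ_sum S T
  have hF : ‖F‖ ≤ 1 := LinearMap.mkContinuous₂_norm_le _ zero_le_one _
  have hgroth := norm_sum_apply_le_of_squareSum_le F (a := amplify m x)
    (b := amplify (fun i s s' => m i s s' / t i) y) ?_ ?_
  · have hsum : ∑ p, F (amplify m x p) (amplify (fun i s s' => m i s s' / t i) y p) =
        (1 / 4 : ℝ) * u (∑ i, x i ⊗ₜ[ℂ] y i) :=
      sum_matrixForm_amplify u (fun i => (hm i).1) ht (fun i => (hm i).2) x y
    rw [hsum, norm_mul, Complex.norm_of_nonneg (by norm_num)] at hgroth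
    linarith
  · rintro (_ | _)
    · refine (norm_row_squareSum_amplify_le (q := 1) (fun i => (hm i).1.nonneg)
        (fun i => (hm i).1.row_sum_le) x).trans ?_
      simpa [Side.quadForm_one] using hx
    · exact (norm_col_squareSum_amplify_le (fun i => (hm i).1.nonneg)
        (fun i => (hm i).1.col_sum_le) x).trans htx
  · rintro (_ | _)
    · refine (norm_row_squareSum_amplify_le hm_div (fun i s => ?_) y).trans hty
      rw [← Finset.sum_div, div_le_iff₀ (ht i), inv_mul_cancel₀ (ht i).ne']
      exact (hm i).1.row_sum_le s
    · refine (norm_col_squareSum_amplify_le (q := 1) hm_div (fun i s' => ?_) y).trans ?_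
      · rw [← Finset.sum_div, Pi.one_apply, div_le_one (ht i)]
        exact (hm i).1.col_sum_le s'
      · simpa [Side.quadForm_one] using hy

end WeightedBound

section UnitaryMatrices

open Matrix

lemma conjTranspose_map_star {n m : Type*} (U : Matrix n m ℂ) :
    (U.map star).conjTranspose = U.transpose := by
  ext
  simp

variable {n m : Type*} [Fintype n] [DecidableEq n]

lemma transpose_mul_map_star {U : Matrix n n ℂ} (hU : U ∈ unitaryGroup n ℂ) :
    U.transpose * U.map star = 1 :=
  (transpose_mul U.conjTranspose U).symm.trans <| by
    rw [← star_eq_conjTranspose, mem_unitaryGroup_iff'.1 hU, transpose_one]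

lemma exists_unitary_row_eq_smul (i : n) {c : n → ℂ} (hc : c ≠ 0) :
    ∃ U ∈ unitaryGroup n ℂ, ∃ r : ℂ, ∀ j, U i j = r * c j := by
  set v : EuclideanSpace ℂ n := WithLp.toLp 2 c
  have hv : v ≠ 0 := fun h => hc (congrArg WithLp.ofLp h)
  have hnorm : ‖((‖v‖⁻¹ : ℝ) : ℂ) • v‖ = 1 := by
    rw [norm_smul, Complex.norm_real, norm_inv, norm_norm, inv_mul_cancel₀ (norm_ne_zero_iff.2 hv)]
  have horth : Orthonormal ℂ (({i} : Set n).domRestrict fun _ => ((‖v‖⁻¹ : ℝ) : ℂ) • v) :=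
    ⟨fun _ => hnorm, fun j k hjk => absurd (Subsingleton.elim j k) hjk⟩
  obtain ⟨b, hb⟩ := horth.exists_orthonormalBasis_extension_of_card_eq (by simp)
  refine ⟨of fun i j => b i j, mem_unitaryGroup_iff.2 ?_, ((‖v‖⁻¹ : ℝ) : ℂ), fun j => ?_⟩
  · ext j k
    refine (?_ : _ = inner ℂ (b k) (b j)).trans ?_
    · rw [PiLp.inner_apply, mul_apply]
      rfl
    · simp only [orthonormal_iff_ite.1 b.orthonormal, one_apply, eq_comm]
  · rw [of_apply, hb i rfl]
    rfl

open scoped ComplexOrder in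
lemma exists_unitary_mul_mul_conjTranspose_eq_diagonal [Fintype m] (S : Matrix n m ℂ) :
    ∃ V ∈ unitaryGroup n ℂ, ∃ t : n → ℝ, (∀ i, 0 ≤ t i) ∧
      (V * S) * (V * S).conjTranspose = diagonal fun i => (t i : ℂ) := by
  have hS : (S * S.conjTranspose).PosSemidef := posSemidef_self_mul_conjTranspose S
  set W : Matrix n n ℂ := hS.isHermitian.eigenvectorUnitary.1
  refine ⟨star W, Unitary.star_mem hS.isHermitian.eigenvectorUnitary.2, hS.isHermitian.eigenvalues,
    hS.eigenvalues_nonneg, ?_⟩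
  have hspec := hS.isHermitian.spectral_theorem
  rw [Unitary.conjStarAlgAut_apply] at hspec
  have hW : star W * W = 1 := Unitary.coe_star_mul_self _
  calc star W * S * (star W * S).conjTranspose
      = star W * (S * S.conjTranspose) * W := by
        simp only [conjTranspose_mul, star_eq_conjTranspose, conjTranspose_conjTranspose,
          Matrix.mul_assoc]
    _ = star W * (W * (diagonal fun i => (hS.isHermitian.eigenvalues i : ℂ)) * star W) * W :=
        congrArg (star W * · * W) hspec
    _ = diagonal fun i => (hS.isHermitian.eigenvalues i : ℂ) := by
        simp only [← Matrix.mul_assoc, hW, Matrix.one_mul]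
        rw [Matrix.mul_assoc, hW, Matrix.mul_one]

lemma pos_and_conjTranspose_mul_diagonal_inv_mul [Fintype m] [DecidableEq m]
    {T : Matrix n m ℂ} {R : Matrix m n ℂ} (hTR : T * R = 1) (hRT : R * T = 1) {t : n → ℝ}
    (ht : ∀ i, 0 ≤ t i) (hT : T * T.conjTranspose = diagonal fun i => (t i : ℂ)) :
    (∀ i, 0 < t i) ∧
      T.conjTranspose * (diagonal fun i => (((t i)⁻¹ : ℝ) : ℂ)) * T = 1 := by
  have hRT' : T.conjTranspose * R.conjTranspose = 1 := by
    rw [← conjTranspose_mul, hRT, conjTranspose_one]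
  have hinv : (diagonal fun i => (t i : ℂ)) * (R.conjTranspose * R) = 1 := by
    rw [← hT, Matrix.mul_assoc, ← Matrix.mul_assoc _ _ R, hRT', Matrix.one_mul, hTR]
  have ht0 (i : n) : t i ≠ 0 := fun h0 => by
    simpa [h0] using congrFun₂ hinv i i
  have hdiag : (diagonal fun i => (((t i)⁻¹ : ℝ) : ℂ)) * (T * T.conjTranspose) = 1 := by
    rw [hT, diagonal_mul_diagonal, ← diagonal_one]
    congr 1
    funext i
    rw [← Complex.ofReal_mul, inv_mul_cancel₀ (ht0 i), Complex.ofReal_one]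
  refine ⟨fun i => (ht i).lt_of_ne' (ht0 i), ?_⟩
  calc T.conjTranspose * (diagonal fun i => (((t i)⁻¹ : ℝ) : ℂ)) * T
      = T.conjTranspose * ((diagonal fun i => (((t i)⁻¹ : ℝ) : ℂ)) * (T * T.conjTranspose)) *
          R.conjTranspose := by
        simp only [Matrix.mul_assoc, hRT', Matrix.mul_one]
    _ = 1 := by rw [hdiag, Matrix.mul_one, hRT']

end UnitaryMatrices

section LinearIndependentTensors

variable {V W : Type*} [AddCommGroup V] [Module ℂ V] [AddCommGroup W] [Module ℂ W]
  {m n : Type*} [Fintype m]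

lemma exists_dual_family [DecidableEq n] {v : n → V} (hv : LinearIndependent ℂ v) :
    ∃ ψ : n → V →ₗ[ℂ] ℂ, ∀ i j, ψ i (v j) = if i = j then 1 else 0 := by
  choose ψ hψ using fun i =>
    LinearMap.exists_extend (Finsupp.lapply (R := ℂ) (M := ℂ) i ∘ₗ hv.repr)
  refine ⟨ψ, fun i j => ?_⟩
  have := LinearMap.congr_fun (hψ i) ⟨v j, Submodule.subset_span ⟨j, rfl⟩⟩
  rw [LinearMap.comp_apply, LinearMap.comp_apply, hv.repr_eq_single j _ rfl] at this
  simpa [Finsupp.single_apply, eq_comm] using this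

variable [Fintype n]

lemma eq_one_of_linComb_eq_self [DecidableEq n] {v : n → V} (hv : LinearIndependent ℂ v)
    {T : Matrix n n ℂ} (hT : linComb T v = v) : T = 1 := by
  ext i k
  refine sub_eq_zero.1
    (Fintype.linearIndependent_iff.1 hv (fun k => T i k - (1 : Matrix n n ℂ) i k) ?_ k)
  have h := congrFun hT i
  have h1 := congrFun (linComb_one v) i
  simp only [sub_smul, Finset.sum_sub_distrib]
  exact sub_eq_zero.2 (h.trans h1.symm)

variable {a : m → V} {b : m → W} {c : n → V} {d : n → W}

lemma exists_eq_linComb_transpose (hd : LinearIndependent ℂ d)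
    (h : ∑ i, a i ⊗ₜ[ℂ] b i = ∑ k, c k ⊗ₜ[ℂ] d k) :
    ∃ S : Matrix m n ℂ, c = linComb S.transpose a := by
  classical
  obtain ⟨ψ, hψ⟩ := exists_dual_family hd
  refine ⟨Matrix.of fun i k => ψ k (b i), funext fun k => ?_⟩
  simpa [linComb, hψ, Matrix.transpose_apply] using
    (congrArg ((TensorProduct.rid ℂ V).toLinearMap ∘ₗ TensorProduct.map LinearMap.id (ψ k)) h).symm

lemma exists_eq_linComb (ha : LinearIndependent ℂ a) (hd : LinearIndependent ℂ d)
    (h : ∑ i, a i ⊗ₜ[ℂ] b i = ∑ k, c k ⊗ₜ[ℂ] d k) :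
    ∃ S : Matrix m n ℂ, c = linComb S.transpose a ∧ b = linComb S d := by
  classical
  obtain ⟨S, hc⟩ := exists_eq_linComb_transpose hd h
  obtain ⟨φ, hφ⟩ := exists_dual_family ha
  refine ⟨S, hc, funext fun i => ?_⟩
  rw [hc, sum_linComb_tmul, Matrix.transpose_transpose] at h
  simpa [hφ] using
    congrArg ((TensorProduct.lid ℂ W).toLinearMap ∘ₗ TensorProduct.map (φ i) LinearMap.id) h

lemma exists_eq_linComb_of_linearIndependent [DecidableEq m] [DecidableEq n]
    (ha : LinearIndependent ℂ a) (hb : LinearIndependent ℂ b) (hc : LinearIndependent ℂ c)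
    (hd : LinearIndependent ℂ d)
    (h : ∑ i, a i ⊗ₜ[ℂ] b i = ∑ k, c k ⊗ₜ[ℂ] d k) :
    ∃ (S : Matrix m n ℂ) (R : Matrix n m ℂ), S * R = 1 ∧ R * S = 1 ∧
      c = linComb S.transpose a ∧ b = linComb S d := by
  obtain ⟨S, hcS, hbS⟩ := exists_eq_linComb ha hd h
  obtain ⟨R, -, hdR⟩ := exists_eq_linComb hc hb h.symm
  refine ⟨S, R, eq_one_of_linComb_eq_self hb ?_, eq_one_of_linComb_eq_self hd ?_, hcS, hbS⟩
  · rw [← linComb_linComb, ← hdR, ← hbS]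
  · rw [← linComb_linComb, ← hbS, ← hdR]

end LinearIndependentTensors

section SideRep

variable {A B : Type*} [NonUnitalCStarAlgebra A] [NonUnitalCStarAlgebra B]

theorem exists_simultaneous_representation {n m : Type*} [Fintype n] [Fintype m] [DecidableEq n]
    (σ : Side) {a : n → A} {b : n → B} {c : m → A} {d : m → B}
    (ha : LinearIndependent ℂ a) (hb : LinearIndependent ℂ b) (hc : LinearIndependent ℂ c)
    (hd : LinearIndependent ℂ d) (h : ∑ i, a i ⊗ₜ[ℂ] b i = ∑ k, c k ⊗ₜ[ℂ] d k) :
    ∃ (x : n → A) (y : n → B) (t : n → ℝ), (∀ i, 0 < t i) ∧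
      ∑ i, x i ⊗ₜ[ℂ] y i = ∑ i, a i ⊗ₜ[ℂ] b i ∧
      σ.squareSum x = σ.squareSum a ∧ σ.op.squareSum y = σ.op.squareSum b ∧
      σ.op.quadForm (Matrix.diagonal fun i => (t i : ℂ)) x = σ.op.squareSum c ∧
      σ.quadForm (Matrix.diagonal fun i => (((t i)⁻¹ : ℝ) : ℂ)) y = σ.squareSum d := by
  classical
  obtain ⟨S, R, hSR, hRS, rfl, rfl⟩ := exists_eq_linComb_of_linearIndependent ha hb hc hd h
  obtain ⟨V, hV, t, ht, hdiag⟩ := exists_unitary_mul_mul_conjTranspose_eq_diagonal S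
  have hVV : V.conjTranspose * V = 1 := Matrix.mem_unitaryGroup_iff'.1 hV
  have hVt : V.transpose * V.map star = 1 := transpose_mul_map_star hV
  obtain ⟨ht, hinv⟩ := pos_and_conjTranspose_mul_diagonal_inv_mul (T := V * S)
    (R := R * V.conjTranspose)
    (by rw [Matrix.mul_assoc, ← Matrix.mul_assoc S, hSR, Matrix.one_mul]
        exact Matrix.mem_unitaryGroup_iff.1 hV)
    (by rw [Matrix.mul_assoc, ← Matrix.mul_assoc _ V, hVV, Matrix.one_mul, hRS]) ht hdiag
  refine ⟨linComb (V.map star) a, linComb V (linComb S d), t, ht, ?_, ?_, ?_, ?_, ?_⟩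
  · rw [sum_linComb_tmul, linComb_linComb]
    exact congrArg (fun M => ∑ i, a i ⊗ₜ[ℂ] linComb M (linComb S d) i) hVV |>.trans
      (by rw [linComb_one])
  · exact σ.squareSum_linComb_of_isometry (by rw [conjTranspose_map_star, hVt]) a
  · exact σ.op.squareSum_linComb_of_isometry hVV _
  · have hT : S.transpose = (V * S).transpose * V.map star := by
      rw [Matrix.transpose_mul, Matrix.mul_assoc, hVt, Matrix.mul_one]
    rw [hT, ← linComb_linComb, Side.squareSum_linComb]
    congr 1
    have h := congrArg Matrix.transpose hdiag
    rw [Matrix.transpose_mul, Matrix.diagonal_transpose] at h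
    exact h.symm
  · rw [linComb_linComb, Side.quadForm_linComb, hinv, Side.quadForm_one]

/-- The tensor `w` is a sum `∑ aᵢ ⊗ bᵢ` with the family `a` bounded by `√δ` on the side `σ` and the
family `b` bounded by `√δ` on the opposite side. This encodes that the Haagerup norm of `w`, or of
its flip, is at most `δ`. -/
def HasSideRep (σ : Side) (δ : ℝ) (w : A ⊗[ℂ] B) : Prop :=
  ∃ (n : ℕ) (a : Fin n → A) (b : Fin n → B),
    ∑ i, a i ⊗ₜ[ℂ] b i = w ∧ ‖σ.squareSum a‖ ≤ δ ∧ ‖σ.op.squareSum b‖ ≤ δ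

lemma HasSideRep.smul {σ : Side} {δ c : ℝ} (hc : 0 ≤ c) {w : A ⊗[ℂ] B} (hw : HasSideRep σ δ w) :
    HasSideRep σ (c * δ) ((c : ℂ) • w) := by
  obtain ⟨n, a, b, rfl, ha, hb⟩ := hw
  have hsq : ‖((√c : ℝ) : ℂ)‖ ^ 2 = c := by
    rw [Complex.norm_of_nonneg (Real.sqrt_nonneg c), Real.sq_sqrt hc]
  refine ⟨n, fun i => (√c : ℂ) • a i, fun i => (√c : ℂ) • b i, ?_, ?_, ?_⟩
  · simp only [TensorProduct.smul_tmul_smul, ← Finset.smul_sum, ← Complex.ofReal_mul,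
      Real.mul_self_sqrt hc]
  · rw [Side.norm_squareSum_smul, hsq]
    exact mul_le_mul_of_nonneg_left ha hc
  · rw [Side.norm_squareSum_smul, hsq]
    exact mul_le_mul_of_nonneg_left hb hc

variable [PartialOrder A] [StarOrderedRing A] [PartialOrder B] [StarOrderedRing B]

-- A unitary change of families turns a linear relation among the `aᵢ` into the vanishing of one.
lemma exists_shorter_of_not_linearIndependent (σ τ : Side) {n : ℕ} {a : Fin (n + 1) → A}
    (b : Fin (n + 1) → B) (ha : ¬LinearIndependent ℂ a) :
    ∃ (a' : Fin n → A) (b' : Fin n → B), ∑ i, a' i ⊗ₜ[ℂ] b' i = ∑ i, a i ⊗ₜ[ℂ] b i ∧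
      ‖σ.squareSum a'‖ ≤ ‖σ.squareSum a‖ ∧ ‖τ.squareSum b'‖ ≤ ‖τ.squareSum b‖ := by
  obtain ⟨c, hca, i, hi⟩ := Fintype.not_linearIndependent_iff.1 ha
  obtain ⟨U, hU, r, hUr⟩ := exists_unitary_row_eq_smul 0 (Function.ne_iff.2 ⟨i, hi⟩ : c ≠ 0)
  have hUt := transpose_mul_map_star hU
  have hzero : linComb U a 0 = 0 := by
    simp only [linComb, hUr, mul_smul, ← Finset.smul_sum, hca, smul_zero]
  refine ⟨Fin.tail (linComb U a), Fin.tail (linComb (U.map star) b), ?_, ?_, ?_⟩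
  · have hsum : ∑ i, linComb U a i ⊗ₜ[ℂ] linComb (U.map star) b i = ∑ i, a i ⊗ₜ[ℂ] b i := by
      rw [sum_linComb_tmul, linComb_linComb, hUt, linComb_one]
    rw [← hsum, Fin.sum_univ_succ, hzero, TensorProduct.zero_tmul, zero_add]
    rfl
  · rw [← σ.squareSum_linComb_of_isometry (Matrix.mem_unitaryGroup_iff'.1 hU) a]
    exact σ.norm_squareSum_tail_le _
  · rw [← τ.squareSum_linComb_of_isometry (T := U.map star) (by rwa [conjTranspose_map_star]) b]
    exact τ.norm_squareSum_tail_le _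

lemma HasSideRep.exists_linearIndependent {σ : Side} {δ : ℝ} {w : A ⊗[ℂ] B}
    (hw : HasSideRep σ δ w) :
    ∃ (n : ℕ) (a : Fin n → A) (b : Fin n → B), LinearIndependent ℂ a ∧ LinearIndependent ℂ b ∧
      ∑ i, a i ⊗ₜ[ℂ] b i = w ∧ ‖σ.squareSum a‖ ≤ δ ∧ ‖σ.op.squareSum b‖ ≤ δ := by
  obtain ⟨n, a, b, hab, ha, hb⟩ := hw
  induction n with
  | zero => exact ⟨0, a, b, linearIndependent_empty_type, linearIndependent_empty_type, hab, ha, hb⟩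
  | succ n ih =>
    by_cases hla : LinearIndependent ℂ a
    · by_cases hlb : LinearIndependent ℂ b
      · exact ⟨n + 1, a, b, hla, hlb, hab, ha, hb⟩
      · obtain ⟨b', a', hba', hb', ha'⟩ :=
          exists_shorter_of_not_linearIndependent σ.op σ a hlb
        refine ih a' b' ?_ (ha'.trans ha) (hb'.trans hb)
        simpa using (congrArg (TensorProduct.comm ℂ B A) hba').trans (by simpa using hab)
    · obtain ⟨a', b', hab', ha', hb'⟩ :=
        exists_shorter_of_not_linearIndependent σ σ.op b hla
      exact ih a' b' (hab'.trans hab) (ha'.trans ha) (hb'.trans hb)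

theorem IsDiagonallyContractive.norm_apply_le {u : A ⊗[ℂ] B →ₗ[ℂ] ℂ}
    (hu : IsDiagonallyContractive u) {δ : ℝ} (hδ : 0 < δ) {w : A ⊗[ℂ] B}
    (hrow : HasSideRep .row δ w) (hcol : HasSideRep .col δ w) : ‖u w‖ ≤ 1920 * δ := by
  suffices h : ‖u (((δ⁻¹ : ℝ) : ℂ) • w)‖ ≤ 1920 by
    rwa [map_smul, norm_smul, Complex.norm_of_nonneg (inv_nonneg.2 hδ.le), inv_mul_le_iff₀' hδ] at h
  have hrow' := hrow.smul (inv_nonneg.2 hδ.le)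
  have hcol' := hcol.smul (inv_nonneg.2 hδ.le)
  rw [inv_mul_cancel₀ hδ.ne'] at hrow' hcol'
  obtain ⟨n, a, b, hla, hlb, hab, ha, hb⟩ := hrow'.exists_linearIndependent
  obtain ⟨m, c, d, hlc, hld, hcd, hc, hd⟩ := hcol'.exists_linearIndependent
  obtain ⟨x, y, t, ht, hxy, hx, hy, hxt, hyt⟩ :=
    exists_simultaneous_representation .row hla hlb hlc hld (hab.trans hcd.symm)
  rw [← hab, ← hxy]
  exact norm_apply_sum_tmul_le hu ht (hx ▸ ha) (hxt ▸ hc) (hy ▸ hb) (hyt ▸ hd)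

end SideRep

section MatrixNorms

variable {A : Type*} [NonUnitalCStarAlgebra A] {d m n : Type*} [Fintype m] [Fintype n]

lemma Side.norm_squareSum_prod_le (σ : Side) (a : m × n → A) :
    ‖σ.squareSum a‖ ≤ ∑ i, ‖σ.squareSum fun k => a (i, k)‖ := by
  rw [squareSum, Fintype.sum_prod_type]
  exact norm_sum_le _ _

section RowMatrix

variable [DecidableEq d]

/-- The matrix whose row `s` is `x` and whose other entries vanish. -/
def rowMatrix (s : d) (x : d → A) : CStarMatrix d d A :=
  CStarMatrix.ofMatrix (Matrix.updateRow 0 s x)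

lemma rowMatrix_apply (s : d) (x : d → A) (i j : d) :
    rowMatrix s x i j = if i = s then x j else 0 := by
  simp [rowMatrix, Matrix.updateRow_apply]

lemma rowMatrix_sum_smul (s : d) (α : m → ℂ) (x : m → d → A) :
    rowMatrix s (fun j => ∑ i, α i • x i j) = ∑ i, α i • rowMatrix s (x i) := by
  ext i j
  refine Eq.trans ?_ (Matrix.sum_apply i j _ _).symm
  simp only [CStarMatrix.smul_apply, rowMatrix_apply]
  split_ifs <;> simp

variable [Fintype d]

lemma rowMatrix_mul_star_apply_self (s : d) (x : d → A) :
    (rowMatrix s x * star (rowMatrix s x)) s s = Side.row.squareSum x := by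
  simp [rowMatrix_apply, CStarMatrix.mul_apply, CStarMatrix.star_apply, Side.squareSum, Side.form]

end RowMatrix

variable [Fintype d] [PartialOrder A] [StarOrderedRing A]

lemma IsCStarNorm.eq_norm_ofMatrix {N : Matrix d d A → ℝ} (hN : IsCStarNorm N) (v : Matrix d d A) :
    N v = ‖CStarMatrix.ofMatrix v‖ := by
  have h : IsCStarNorm fun M : CStarMatrix d d A => N (CStarMatrix.ofMatrix.symm M) :=
    ⟨fun x y => hN.add_le _ _, fun c x => hN.smul_eq _ _, fun x hx => hN.eq_zero_of _ hx,
      fun x y => hN.mul_le _ _, fun x => hN.star_mul_self _⟩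
  exact h.eq_norm (CStarMatrix.ofMatrix v)

lemma squareSum_rowMatrix [DecidableEq d] (s : d) (v : Matrix d d A) :
    Side.col.squareSum (fun i => rowMatrix s (v i)) =
      star (CStarMatrix.ofMatrix v) * CStarMatrix.ofMatrix v := by
  ext j k
  refine (Matrix.sum_apply j k _ _).trans ?_
  simp [rowMatrix_apply, CStarMatrix.mul_apply, CStarMatrix.star_apply, Side.form]

lemma row_sideNorm_le_norm_rowMatrix [DecidableEq d] (s : d) (x : d → A) :
    Side.row.sideNorm x ≤ ‖rowMatrix s x‖ := by
  refine Real.sqrt_le_iff.2 ⟨norm_nonneg _, ?_⟩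
  rw [← rowMatrix_mul_star_apply_self s, sq, ← CStarRing.norm_self_mul_star]
  exact CStarMatrix.norm_entry_le_norm

theorem row_sideNorm_sum_smul_le (v : Matrix d d A) (α : d → ℂ) :
    Side.row.sideNorm (fun j => ∑ i, α i • v i j) ≤
      √(∑ i, ‖α i‖ ^ 2) * ‖CStarMatrix.ofMatrix v‖ := by
  classical
  rcases isEmpty_or_nonempty d with hd | ⟨⟨s⟩⟩
  · simp [Side.sideNorm, Side.squareSum]
  calc Side.row.sideNorm (fun j => ∑ i, α i • v i j)
      ≤ ‖∑ i, α i • rowMatrix s (v i)‖ :=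
        rowMatrix_sum_smul s α v ▸ row_sideNorm_le_norm_rowMatrix s _
    _ ≤ √(∑ i, ‖α i‖ ^ 2) * Side.col.sideNorm (fun i => rowMatrix s (v i)) :=
        Side.col.norm_sum_smul_le α _
    _ = √(∑ i, ‖α i‖ ^ 2) * ‖CStarMatrix.ofMatrix v‖ := by
        rw [Side.sideNorm, squareSum_rowMatrix, CStarRing.norm_star_mul_self,
          Real.sqrt_mul_self (norm_nonneg _)]

theorem col_sideNorm_sum_smul_le (v : Matrix d d A) (β : d → ℂ) :
    Side.col.sideNorm (fun i => ∑ j, β j • v i j) ≤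
      √(∑ j, ‖β j‖ ^ 2) * ‖CStarMatrix.ofMatrix v‖ := by
  have hstar : star (fun j => ∑ i, star β i • v.conjTranspose i j) = fun i => ∑ j, β j • v i j := by
    ext i
    simp
  have hnorm : ‖CStarMatrix.ofMatrix v.conjTranspose‖ = ‖CStarMatrix.ofMatrix v‖ :=
    norm_star (CStarMatrix.ofMatrix v)
  rw [← hstar, Side.sideNorm_star, ← hnorm]
  simpa only [Pi.star_apply, norm_star, Side.op] using
    row_sideNorm_sum_smul_le v.conjTranspose (star β)

lemma row_sideNorm_prod_sum_smul_le (v : Matrix d d A) (α : d × n → ℂ) :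
    Side.row.sideNorm (fun jk : d × n => ∑ i, α (i, jk.2) • v i jk.1) ≤
      √(∑ ik, ‖α ik‖ ^ 2) * ‖CStarMatrix.ofMatrix v‖ := by
  rw [Side.sideNorm, Real.sqrt_le_left (by positivity), mul_pow, Real.sq_sqrt (by positivity),
    Fintype.sum_prod_type_right, Finset.sum_mul, ← Side.squareSum_comp_equiv _ (Equiv.prodComm n d)]
  refine (Side.norm_squareSum_prod_le _ _).trans (Finset.sum_le_sum fun k _ => ?_)
  rw [← Side.sq_sideNorm, ← Real.sq_sqrt (x := ∑ i, ‖α (i, k)‖ ^ 2) (by positivity), ← mul_pow]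
  gcongr
  · exact Side.sideNorm_nonneg _ _
  · exact row_sideNorm_sum_smul_le v fun i => α (i, k)

lemma col_sideNorm_prod_sum_smul_le (w : Matrix d d A) (β : n × d → ℂ) :
    Side.col.sideNorm (fun jk : n × d => ∑ l, β (jk.1, l) • w jk.2 l) ≤
      √(∑ jl, ‖β jl‖ ^ 2) * ‖CStarMatrix.ofMatrix w‖ := by
  rw [Side.sideNorm, Real.sqrt_le_left (by positivity), mul_pow, Real.sq_sqrt (by positivity),
    Fintype.sum_prod_type, Finset.sum_mul]
  refine (Side.norm_squareSum_prod_le _ _).trans (Finset.sum_le_sum fun j _ => ?_)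
  rw [← Side.sq_sideNorm, ← Real.sq_sqrt (x := ∑ l, ‖β (j, l)‖ ^ 2) (by positivity), ← mul_pow]
  gcongr
  · exact Side.sideNorm_nonneg _ _
  · exact col_sideNorm_sum_smul_le w fun l => β (j, l)

end MatrixNorms

section SideRepOfNorm

variable {A B : Type*} [NonUnitalCStarAlgebra A] [NonUnitalCStarAlgebra B] {σ : Side} {δ ε : ℝ}
  {w w' : A ⊗[ℂ] B}

lemma HasSideRep.symm (hw : HasSideRep σ δ w) : HasSideRep σ.op δ (TensorProduct.comm ℂ A B w) := by
  obtain ⟨n, a, b, rfl, ha, hb⟩ := hw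
  exact ⟨n, b, a, by simp, hb, by cases σ <;> exact ha⟩

lemma HasSideRep.of_fintype {n : Type*} [Fintype n] (a : n → A) (b : n → B)
    (ha : ‖σ.squareSum a‖ ≤ δ) (hb : ‖σ.op.squareSum b‖ ≤ δ) :
    HasSideRep σ δ (∑ i, a i ⊗ₜ[ℂ] b i) := by
  let e := (Fintype.equivFin n).symm
  refine ⟨_, a ∘ e, b ∘ e, e.sum_comp fun i => a i ⊗ₜ[ℂ] b i, ?_, ?_⟩
  · rwa [Side.squareSum_comp_equiv]
  · rwa [Side.squareSum_comp_equiv]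

lemma HasSideRep.add (hw : HasSideRep σ δ w) (hw' : HasSideRep σ ε w') :
    HasSideRep σ (δ + ε) (w + w') := by
  obtain ⟨n, a, b, rfl, ha, hb⟩ := hw
  obtain ⟨m, c, d, rfl, hc, hd⟩ := hw'
  have h := HasSideRep.of_fintype (σ := σ) (δ := δ + ε) (Sum.elim a c) (Sum.elim b d)
  simp only [Side.squareSum, Fintype.sum_sum_type, Sum.elim_inl, Sum.elim_inr] at h
  exact h (norm_add_le_of_le ha hc) (norm_add_le_of_le hb hd)

lemma exists_pos_sq_mul_sq_le {x y δ : ℝ} (hx : 0 ≤ x) (hy : 0 ≤ y) (h : x * y < δ) :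
    ∃ s : ℝ, 0 < s ∧ s ^ 2 * x ^ 2 ≤ δ ∧ s⁻¹ ^ 2 * y ^ 2 ≤ δ := by
  have hδ : 0 < δ := (mul_nonneg hx hy).trans_lt h
  rcases hx.eq_or_lt with rfl | hx
  · refine ⟨y / √δ + 1, by positivity, by simpa using hδ.le, ?_⟩
    rw [← mul_pow, inv_mul_eq_div]
    refine (pow_le_pow_left₀ (by positivity) ?_ 2).trans_eq (Real.sq_sqrt hδ.le)
    rw [div_le_iff₀ (by positivity), mul_add, mul_div_cancel₀ _ (by positivity)]
    linarith [Real.sqrt_nonneg δ]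
  · refine ⟨√δ / x, by positivity, ?_, ?_⟩
    · rw [← mul_pow, div_mul_cancel₀ _ hx.ne', Real.sq_sqrt hδ.le]
    · rw [inv_div, div_pow, Real.sq_sqrt hδ.le, div_mul_eq_mul_div, div_le_iff₀ hδ, ← mul_pow, ← sq]
      gcongr

lemma hasSideRep_of_sideNorm_mul_lt {n : Type*} [Fintype n] {a : n → A} {b : n → B}
    (h : σ.sideNorm a * σ.op.sideNorm b < δ) : HasSideRep σ δ (∑ i, a i ⊗ₜ[ℂ] b i) := by
  obtain ⟨s, hs, ha, hb⟩ :=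
    exists_pos_sq_mul_sq_le (σ.sideNorm_nonneg a) (σ.op.sideNorm_nonneg b) h
  have hsum : ∑ i, a i ⊗ₜ[ℂ] b i = ∑ i, ((s : ℂ) • a i) ⊗ₜ[ℂ] ((s⁻¹ : ℂ) • b i) := by
    have hs' : (s : ℂ) ≠ 0 := mod_cast hs.ne'
    simp only [TensorProduct.smul_tmul_smul, mul_inv_cancel₀ hs', one_smul]
  rw [hsum]
  refine HasSideRep.of_fintype _ _ ?_ ?_
  · rwa [Side.norm_squareSum_smul, ← Side.sq_sideNorm, Complex.norm_of_nonneg hs.le]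
  · rwa [Side.norm_squareSum_smul, ← Side.sq_sideNorm, norm_inv, Complex.norm_of_nonneg hs.le]

end SideRepOfNorm

section Sandwich

variable {A B : Type*} [AddCommGroup A] [Module ℂ A] [AddCommGroup B] [Module ℂ B] {m n d : Type*}
  [Fintype m] [Fintype n] [Fintype d]

/-- The tensor `α (v ⊗ w) β` for scalar vectors `α`, `β` and matrices `v`, `w`, whose
representations of a given tensor enter the definition of `osProjNorm`. -/
def sandwich (α : m × n → ℂ) (v : Matrix m m A) (w : Matrix n n B) (β : m × n → ℂ) : A ⊗[ℂ] B :=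
  ∑ ik : m × n, ∑ jl : m × n, (α ik * β jl) • (v ik.1 jl.1 ⊗ₜ[ℂ] w ik.2 jl.2)

lemma sandwich_eq_sum_tmul (α : m × n → ℂ) (v : Matrix m m A) (w : Matrix n n B)
    (β : m × n → ℂ) :
    sandwich α v w β =
      ∑ jk : m × n, (∑ i, α (i, jk.2) • v i jk.1) ⊗ₜ[ℂ] (∑ l, β (jk.1, l) • w jk.2 l) := by
  simp only [sandwich, TensorProduct.sum_tmul, TensorProduct.tmul_sum,
    TensorProduct.smul_tmul_smul, Fintype.sum_prod_type]
  rw [Finset.sum_congr rfl fun i _ => Finset.sum_comm, Finset.sum_comm]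
  refine Finset.sum_congr rfl fun j _ => ?_
  rw [Finset.sum_comm]
  exact Finset.sum_congr rfl fun k _ => Finset.sum_comm

lemma comm_sandwich (α : m × n → ℂ) (v : Matrix m m A) (w : Matrix n n B) (β : m × n → ℂ) :
    TensorProduct.comm ℂ A B (sandwich α v w β) =
      sandwich (α ∘ Prod.swap) w v (β ∘ Prod.swap) := by
  simp only [sandwich, map_sum, map_smul, TensorProduct.comm_tmul, Function.comp_apply]
  rw [← (Equiv.prodComm n m).sum_comp]
  refine Finset.sum_congr rfl fun ik _ => ?_
  rw [← (Equiv.prodComm n m).sum_comp]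
  rfl

lemma sandwich_diagonal [DecidableEq d] (c c' : d → ℂ) (S : Matrix d d A) (T : Matrix d d B) :
    sandwich (fun ik => Matrix.diagonal c ik.1 ik.2) S T
        (fun jl => Matrix.diagonal c' jl.1 jl.2) =
      ∑ s, ∑ s', (c s * c' s') • (S s s' ⊗ₜ[ℂ] T s s') := by
  simp [sandwich, Fintype.sum_prod_type, Matrix.diagonal_apply]

lemma sum_norm_sq_diagonal [DecidableEq d] (c : d → ℂ) :
    ∑ ik : d × d, ‖Matrix.diagonal c ik.1 ik.2‖ ^ 2 = ∑ s, ‖c s‖ ^ 2 := by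
  rw [Fintype.sum_prod_type]
  refine Finset.sum_congr rfl fun s _ => ?_
  rw [Finset.sum_eq_single s] <;> simp +contextual [eq_comm]

lemma exists_eq_sandwich (u : A ⊗[ℂ] B) :
    ∃ (n : ℕ) (α : Fin n × Fin n → ℂ) (v : Matrix (Fin n) (Fin n) A)
      (w : Matrix (Fin n) (Fin n) B) (β : Fin n × Fin n → ℂ), u = sandwich α v w β := by
  obtain ⟨S, rfl⟩ := TensorProduct.exists_finset u
  let e := S.equivFin.symm
  refine ⟨S.card, fun ik => Matrix.diagonal 1 ik.1 ik.2, Matrix.diagonal fun i => (e i).1.1,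
    Matrix.diagonal fun i => (e i).1.2, fun jl => Matrix.diagonal 1 jl.1 jl.2, ?_⟩
  rw [sandwich_diagonal, ← Finset.sum_coe_sort, ← e.sum_comp]
  simp [Matrix.diagonal_apply, TensorProduct.ite_tmul, TensorProduct.tmul_ite]

end Sandwich

section ProjectiveNorm

variable {A B : Type u} [NonUnitalCStarAlgebra A] [PartialOrder A] [StarOrderedRing A]
  [NonUnitalCStarAlgebra B] [PartialOrder B] [StarOrderedRing B] {m n : Type*} [Fintype m]
  [Fintype n]

lemma hasSideRep_row_sandwich {α : m × n → ℂ} {v : Matrix m m A} {w : Matrix n n B}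
    {β : m × n → ℂ} {δ : ℝ} (h : √(∑ ik, ‖α ik‖ ^ 2) * ‖CStarMatrix.ofMatrix v‖ *
      ‖CStarMatrix.ofMatrix w‖ * √(∑ jl, ‖β jl‖ ^ 2) < δ) :
    HasSideRep .row δ (sandwich α v w β) := by
  rw [sandwich_eq_sum_tmul]
  refine hasSideRep_of_sideNorm_mul_lt (lt_of_le_of_lt ?_ h)
  rw [mul_assoc _ _ (√_), mul_comm ‖CStarMatrix.ofMatrix w‖]
  exact mul_le_mul (row_sideNorm_prod_sum_smul_le v α) (col_sideNorm_prod_sum_smul_le w β)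
    (Side.sideNorm_nonneg _ _) (by positivity)

lemma hasSideRep_sandwich (σ : Side) {α : m × n → ℂ} {v : Matrix m m A} {w : Matrix n n B}
    {β : m × n → ℂ} {δ : ℝ} (h : √(∑ ik, ‖α ik‖ ^ 2) * ‖CStarMatrix.ofMatrix v‖ *
      ‖CStarMatrix.ofMatrix w‖ * √(∑ jl, ‖β jl‖ ^ 2) < δ) :
    HasSideRep σ δ (sandwich α v w β) := by
  cases σ
  · exact hasSideRep_row_sandwich h
  · have hflip : HasSideRep .row δ (sandwich (α ∘ Prod.swap) w v (β ∘ Prod.swap)) := by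
      refine hasSideRep_row_sandwich ?_
      have hswap (γ : m × n → ℂ) : ∑ ki, ‖(γ ∘ Prod.swap) ki‖ ^ 2 = ∑ ik, ‖γ ik‖ ^ 2 :=
        (Equiv.prodComm n m).sum_comp fun ik => ‖γ ik‖ ^ 2
      rwa [hswap, hswap, mul_right_comm √_]
    rw [← comm_sandwich] at hflip
    simpa [Side.op] using hflip.symm

variable {NA : ∀ p : ℕ, Matrix (Fin p) (Fin p) A → ℝ}
  {NB : ∀ q : ℕ, Matrix (Fin q) (Fin q) B → ℝ} {δ : ℝ}

lemma osProjNorm_sandwich_le (hNA : ∀ p, IsCStarNorm (NA p)) (hNB : ∀ q, IsCStarNorm (NB q))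
    {p q : ℕ} (α : Fin p × Fin q → ℂ) (v : Matrix (Fin p) (Fin p) A)
    (w : Matrix (Fin q) (Fin q) B) (β : Fin p × Fin q → ℂ) :
    osProjNorm NA NB (sandwich α v w β) ≤ √(∑ ik, ‖α ik‖ ^ 2) * ‖CStarMatrix.ofMatrix v‖ *
      ‖CStarMatrix.ofMatrix w‖ * √(∑ jl, ‖β jl‖ ^ 2) := by
  rw [← (hNA p).eq_norm_ofMatrix, ← (hNB q).eq_norm_ofMatrix]
  refine csInf_le ⟨0, ?_⟩ ⟨p, q, α, v, w, β, rfl, rfl⟩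
  rintro r ⟨p, q, α, v, w, β, -, rfl⟩
  rw [(hNA p).eq_norm_ofMatrix, (hNB q).eq_norm_ofMatrix]
  positivity

theorem hasSideRep_of_osProjNorm_lt (hNA : ∀ p, IsCStarNorm (NA p))
    (hNB : ∀ q, IsCStarNorm (NB q)) (σ : Side) {u : A ⊗[ℂ] B} (h : osProjNorm NA NB u < δ) :
    HasSideRep σ δ u := by
  obtain ⟨n, α, v, w, β, hu⟩ := exists_eq_sandwich u
  obtain ⟨_, ⟨p, q, α, v, w, β, rfl, rfl⟩, hr⟩ :=
    exists_lt_of_csInf_lt (by exact ⟨_, n, n, α, v, w, β, hu, rfl⟩) h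
  rw [(hNA p).eq_norm_ofMatrix, (hNB q).eq_norm_ofMatrix] at hr
  exact hasSideRep_sandwich σ hr

variable {X : Type*} [NormedAddCommGroup X] [NormedSpace ℂ X] {ι : A ⊗[ℂ] B →ₗ[ℂ] X}

lemma isDiagonallyContractive_comp (hNA : ∀ p, IsCStarNorm (NA p))
    (hNB : ∀ q, IsCStarNorm (NB q)) (hι : ∀ u, ‖ι u‖ ≤ osProjNorm NA NB u) {ℓ : X →L[ℂ] ℂ}
    (hℓ : ‖ℓ‖ ≤ 1) : IsDiagonallyContractive (ℓ.toLinearMap ∘ₗ ι) := by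
  intro d ρ hρ hρ1 S T
  set c : Fin d → ℂ := fun s => (√(ρ s) : ℝ)
  set γ : Fin d × Fin d → ℂ := fun ik => Matrix.diagonal c ik.1 ik.2
  have hγ : √(∑ ik, ‖γ ik‖ ^ 2) ≤ 1 := by
    simpa [γ, sum_norm_sq_diagonal, c, Real.sq_sqrt (hρ _)] using hρ1
  have hsum : ∑ s, ∑ s', ((√(ρ s) * √(ρ s') : ℝ) : ℂ) • (S s s' ⊗ₜ[ℂ] T s s') =
      sandwich γ (CStarMatrix.ofMatrix.symm S) (CStarMatrix.ofMatrix.symm T) γ := by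
    simp only [Complex.ofReal_mul]
    exact (sandwich_diagonal c c S T).symm
  rw [hsum]
  calc _ ≤ 1 * osProjNorm NA NB (sandwich γ _ _ γ) :=
        (ℓ.le_opNorm _).trans (mul_le_mul hℓ (hι _) (norm_nonneg _) zero_le_one)
    _ ≤ 1 * (1 * ‖S‖ * ‖T‖ * 1) := by
        gcongr
        refine (osProjNorm_sandwich_le hNA hNB _ _ _ _).trans ?_
        simp only [Equiv.apply_symm_apply]
        gcongr
    _ = ‖S‖ * ‖T‖ := by ring

theorem norm_le_of_hasSideRep (hNA : ∀ p, IsCStarNorm (NA p)) (hNB : ∀ q, IsCStarNorm (NB q))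
    (hι : ∀ u, ‖ι u‖ ≤ osProjNorm NA NB u) (hδ : 0 < δ) {w : A ⊗[ℂ] B}
    (hw : ∀ σ, HasSideRep σ δ w) : ‖ι w‖ ≤ 1920 * δ := by
  obtain ⟨ℓ, hℓ, hℓw⟩ := exists_dual_vector'' ℂ (ι w)
  have h := (isDiagonallyContractive_comp hNA hNB hι hℓ).norm_apply_le hδ (hw .row) (hw .col)
  rwa [LinearMap.comp_apply, ContinuousLinearMap.coe_coe, hℓw, RCLike.norm_ofReal, abs_norm] at h

end ProjectiveNorm

section OrthonormalFamilies

variable {H : Type*} [NormedAddCommGroup H] [InnerProductSpace ℂ H] {n : Type*} [Fintype n]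
  {e : n → H}

lemma sqrt_sum_norm_inner_sq_le (he : Orthonormal ℂ e) (x : H) :
    √(∑ i, ‖inner ℂ (e i) x‖ ^ 2) ≤ ‖x‖ :=
  (Real.sqrt_le_left (norm_nonneg _)).2 <| he.sum_inner_products_le x (s := Finset.univ)

lemma norm_sum_smul_orthonormal (he : Orthonormal ℂ e) (c : n → ℂ) :
    ‖∑ i, c i • e i‖ = √(∑ i, ‖c i‖ ^ 2) := by
  have h := he.inner_sum c c Finset.univ
  simp only [inner_self_eq_norm_sq_to_K, Complex.conj_mul'] at h
  rw [← Real.sqrt_sq (norm_nonneg (∑ i, c i • e i))]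
  exact congrArg _ <| Complex.ofReal_injective <| by push_cast; exact h

end OrthonormalFamilies

section CoordinateOperators

variable {A H : Type*} [NonUnitalCStarAlgebra A] [NormedAddCommGroup H] [InnerProductSpace ℂ H]
  {m n : Type*} [Fintype m] [Fintype n]

/-- The finite-rank operator `x ↦ ∑ i, ⟪e i, x⟫ • a i`, which for orthonormal `e` sends `e i` to
`a i`. -/
def coordOperator (e : n → H) (a : n → A) : H →L[ℂ] A :=
  ∑ i, (innerSL ℂ (e i)).smulRight (a i)

lemma coordOperator_apply (e : n → H) (a : n → A) (x : H) :
    coordOperator e a x = ∑ i, (inner ℂ (e i) x : ℂ) • a i := by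
  simp [coordOperator, sum_apply]

lemma coordOperator_apply_self {e : n → H} (he : Orthonormal ℂ e) (a : n → A) (i : n) :
    coordOperator e a (e i) = a i := by
  classical
  simp [coordOperator_apply, orthonormal_iff_ite.1 he]

lemma coordOperator_apply_of_orthogonal {e : n → H} {x : H} (h : ∀ i, inner ℂ (e i) x = (0 : ℂ))
    (a : n → A) : coordOperator e a x = 0 := by
  simp [coordOperator_apply, h]

lemma sum_coordOperator_tmul {B : Type*} [NonUnitalCStarAlgebra B] (e : n → H) (a : n → A)
    (g : m → H) (b : m → B) :
    ∑ j, coordOperator e a (g j) ⊗ₜ[ℂ] b j =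
      ∑ i, a i ⊗ₜ[ℂ] ∑ j, (inner ℂ (e i) (g j) : ℂ) • b j := by
  simp only [coordOperator_apply, TensorProduct.sum_tmul, TensorProduct.tmul_sum,
    TensorProduct.tmul_smul, TensorProduct.smul_tmul']
  exact Finset.sum_comm

variable [PartialOrder A] [StarOrderedRing A] {e : n → H}

lemma norm_coordOperator_le (σ : Side) (he : Orthonormal ℂ e) (a : n → A) :
    ‖coordOperator e a‖ ≤ σ.sideNorm a := by
  refine ContinuousLinearMap.opNorm_le_bound _ (σ.sideNorm_nonneg a) fun x => ?_
  rw [coordOperator_apply, mul_comm]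
  exact (σ.norm_sum_smul_le _ a).trans <|
    mul_le_mul_of_nonneg_right (sqrt_sum_norm_inner_sq_le he x) (σ.sideNorm_nonneg a)

lemma sideNorm_coordOperator_comp_le [CompleteSpace H] (σ : Side) (he : Orthonormal ℂ e)
    {g : m → H} (hg : Orthonormal ℂ g) {Q : H →L[ℂ] H} (hQ : ‖Q‖ ≤ 1) (a : n → A) :
    σ.sideNorm (fun j => coordOperator e a (Q (g j))) ≤ σ.sideNorm a := by
  set T : Matrix m n ℂ := fun j i => inner ℂ (e i) (Q (g j))
  have hT (x : n → ℂ) : ∑ j, ‖T.mulVec x j‖ ^ 2 ≤ 1 ^ 2 * ∑ i, ‖x i‖ ^ 2 := by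
    set y : H := ∑ i, star (x i) • e i
    have hTx (j : m) : T.mulVec x j = inner ℂ (Q.adjoint y) (g j) := by
      simp [T, y, Matrix.mulVec, dotProduct, mul_comm,
        ContinuousLinearMap.adjoint_inner_left]
    have hy : ‖y‖ ^ 2 = ∑ i, ‖x i‖ ^ 2 := by
      rw [norm_sum_smul_orthonormal he, Real.sq_sqrt (by positivity)]
      simp only [norm_star]
    calc ∑ j, ‖T.mulVec x j‖ ^ 2 = ∑ j, ‖(inner ℂ (g j) (Q.adjoint y) : ℂ)‖ ^ 2 := by
          simp only [hTx, norm_inner_symm]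
      _ ≤ ‖Q.adjoint y‖ ^ 2 := hg.sum_inner_products_le _ (s := Finset.univ)
      _ ≤ (1 * ‖y‖) ^ 2 := by
          gcongr
          exact Q.adjoint.le_of_opNorm_le (by rwa [LinearIsometryEquiv.norm_map]) y
      _ = 1 ^ 2 * ∑ i, ‖x i‖ ^ 2 := by rw [mul_pow, hy]
  simpa only [coordOperator_apply, one_mul] using! σ.sideNorm_linComb_le zero_le_one hT a

end CoordinateOperators

section FirstBlocks

variable {m : ℕ → Type*} {H : Type*} [NormedAddCommGroup H] [InnerProductSpace ℂ H]
  {e : ∀ k, m k → H}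

/-- The members of a family that lie in its first `N` blocks. -/
def firstBlocks {V : Type*} (N : ℕ) (f : ∀ k, m k → V) : (Σ k : Fin N, m k) → V :=
  fun p => f p.1 p.2

lemma orthonormal_block (he : Orthonormal ℂ fun p : Σ k, m k => e p.1 p.2) (k : ℕ) :
    Orthonormal ℂ (e k) :=
  he.comp (Sigma.mk k) sigma_mk_injective

lemma orthonormal_firstBlocks (he : Orthonormal ℂ fun p : Σ k, m k => e p.1 p.2) (N : ℕ) :
    Orthonormal ℂ (firstBlocks N e) :=
  he.comp (Sigma.map Fin.val fun _ => id)
    (Fin.val_injective.sigma_map fun _ => Function.injective_id)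

lemma sum_firstBlocks {V : Type*} [AddCommMonoid V] [∀ k, Fintype (m k)] (N : ℕ)
    (f : ∀ k, m k → V) : ∑ p, firstBlocks N f p = ∑ k ∈ Finset.range N, ∑ j, f k j :=
  (Fintype.sum_sigma _).trans <| Fin.sum_univ_eq_sum_range (fun k => ∑ j, f k j) N

end FirstBlocks

section SeriesOperators

variable {A H : Type*} [NonUnitalCStarAlgebra A] [NormedAddCommGroup H] [InnerProductSpace ℂ H]
  {m : ℕ → Type*} [∀ k, Fintype (m k)] {σ : Side} {e : ∀ k, m k → H} {a : ∀ k, m k → A} {s : ℕ → ℝ}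

/-- The sum of the operators `coordOperator (e k) (a k)` over the blocks `k` of an infinite
family. -/
def seriesOperator (e : ∀ k, m k → H) (a : ∀ k, m k → A) : H →L[ℂ] A :=
  ∑' k, coordOperator (e k) (a k)

lemma sideNorm_firstBlocks_le (hs : Summable s) (ha : ∀ k, σ.sideNorm (a k) ≤ s k) (N : ℕ) :
    σ.sideNorm (firstBlocks N a) ≤ ∑' k, s k := by
  have hs0 (k : ℕ) : 0 ≤ s k := (σ.sideNorm_nonneg _).trans (ha k)
  refine (Real.sqrt_le_left (tsum_nonneg hs0)).2 ?_
  calc ‖σ.squareSum (firstBlocks N a)‖ = ‖∑ k ∈ Finset.range N, σ.squareSum (a k)‖ :=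
        congrArg _ <| sum_firstBlocks N fun k j => σ.form (a k j) (a k j)
    _ ≤ ∑ k ∈ Finset.range N, s k ^ 2 := norm_sum_le_of_le _ fun k _ => by
        rw [← σ.sq_sideNorm]
        exact pow_le_pow_left₀ (σ.sideNorm_nonneg _) (ha k) 2
    _ ≤ (∑ k ∈ Finset.range N, s k) ^ 2 := Finset.sum_sq_le_sq_sum_of_nonneg fun k _ => hs0 k
    _ ≤ (∑' k, s k) ^ 2 := pow_le_pow_left₀ (Finset.sum_nonneg fun k _ => hs0 k)
        (hs.sum_le_tsum _ fun k _ => hs0 k) 2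

variable [PartialOrder A] [StarOrderedRing A]

lemma summable_coordOperator (hs : Summable s) (he : ∀ k, Orthonormal ℂ (e k))
    (ha : ∀ k, σ.sideNorm (a k) ≤ s k) : Summable fun k => coordOperator (e k) (a k) :=
  .of_norm_bounded hs fun k => (norm_coordOperator_le σ (he k) (a k)).trans (ha k)

lemma hasSum_coordOperator_apply (hs : Summable s) (he : ∀ k, Orthonormal ℂ (e k))
    (ha : ∀ k, σ.sideNorm (a k) ≤ s k) (x : H) :
    HasSum (fun k => coordOperator (e k) (a k) x) (seriesOperator e a x) :=
  (summable_coordOperator hs he ha).hasSum.mapL (ContinuousLinearMap.apply ℂ A x)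

lemma seriesOperator_apply_self (hs : Summable s)
    (he : Orthonormal ℂ fun p : Σ k, m k => e p.1 p.2) (ha : ∀ k, σ.sideNorm (a k) ≤ s k)
    (k : ℕ) (j : m k) : seriesOperator e a (e k j) = a k j := by
  refine (hasSum_coordOperator_apply hs (orthonormal_block he) ha (e k j)).unique ?_
  rw [← coordOperator_apply_self (orthonormal_block he k) (a k) j]
  refine hasSum_single k fun l hl => coordOperator_apply_of_orthogonal (fun i => ?_) (a l)
  exact he.inner_eq_zero (i := ⟨l, i⟩) (j := ⟨k, j⟩) fun h => hl (congrArg Sigma.fst h)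

lemma coordOperator_firstBlocks_add_seriesOperator (hs : Summable s)
    (he : ∀ k, Orthonormal ℂ (e k)) (ha : ∀ k, σ.sideNorm (a k) ≤ s k) (M : ℕ) :
    coordOperator (firstBlocks M e) (firstBlocks M a) +
      seriesOperator (fun k => e (k + M)) (fun k => a (k + M)) = seriesOperator e a := by
  rw [seriesOperator, seriesOperator, ← (summable_coordOperator hs he ha).sum_add_tsum_nat_add M]
  exact congrArg (· + _) <| sum_firstBlocks M fun k j => (innerSL ℂ (e k j)).smulRight (a k j)

lemma sideNorm_seriesOperator_comp_le [CompleteSpace H] {n : Type*} [Fintype n] (hs : Summable s)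
    (he : ∀ k, Orthonormal ℂ (e k)) (ha : ∀ k, σ.sideNorm (a k) ≤ s k) {g : n → H}
    (hg : Orthonormal ℂ g) {Q : H →L[ℂ] H} (hQ : ‖Q‖ ≤ 1) :
    σ.sideNorm (fun i => seriesOperator e a (Q (g i))) ≤ ∑' k, s k := by
  have hs0 (k : ℕ) : 0 ≤ s k := (σ.sideNorm_nonneg _).trans (ha k)
  have hlim : Filter.Tendsto
      (fun N => ∑ k ∈ Finset.range N, fun i => coordOperator (e k) (a k) (Q (g i)))
      Filter.atTop (nhds fun i => seriesOperator e a (Q (g i))) := by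
    refine tendsto_pi_nhds.2 fun i => ?_
    simp only [Finset.sum_apply]
    exact (hasSum_coordOperator_apply hs he ha (Q (g i))).tendsto_sum_nat
  refine le_of_tendsto ((σ.continuous_sideNorm.tendsto _).comp hlim) (.of_forall fun N => ?_)
  calc σ.sideNorm (∑ k ∈ Finset.range N, fun i => coordOperator (e k) (a k) (Q (g i)))
      ≤ ∑ k ∈ Finset.range N, s k :=
        (σ.sideNorm_sum_le _ _).trans <| Finset.sum_le_sum fun k _ =>
          (sideNorm_coordOperator_comp_le σ (he k) hg hQ (a k)).trans (ha k)
    _ ≤ ∑' k, s k := hs.sum_le_tsum _ fun k _ => hs0 k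

end SeriesOperators

section SliceApproximation

/-- The algebraic product `S ⊗ T` inside `A ⊗ B`, whose closure is the product ideal `S ⊗̂ T`. -/
def tmulSpan {A B : Type*} [AddCommGroup A] [Module ℂ A] [AddCommGroup B] [Module ℂ B] (S : Set A)
    (T : Set B) : Submodule ℂ (A ⊗[ℂ] B) :=
  Submodule.span ℂ (Set.image2 (fun a b => a ⊗ₜ[ℂ] b) S T)

variable {A B H : Type*} [NonUnitalCStarAlgebra A] [PartialOrder A] [StarOrderedRing A]
  [NonUnitalCStarAlgebra B] [NormedAddCommGroup H] [InnerProductSpace ℂ H] [CompleteSpace H]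
  {m : ℕ → Type*} [∀ k, Fintype (m k)] {σ : Side} {e : ∀ k, m k → H} {a : ∀ k, m k → A}
  {b : ∀ k, m k → B} {s : ℕ → ℝ} {I : Submodule ℂ A} {ε : ℝ}

lemma exists_hasSideRep_sub_of_sideNorm_lt (hs : Summable s)
    (he : Orthonormal ℂ fun p : Σ k, m k => e p.1 p.2) (ha : ∀ k, σ.sideNorm (a k) ≤ s k)
    (hb : ∀ k, σ.op.sideNorm (b k) ≤ s k) {Q : H →L[ℂ] H} (hQ : ‖Q‖ ≤ 1)
    (hQI : ∀ x, seriesOperator e a (x - Q x) ∈ I) {M N : ℕ} {δ : ℝ}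
    (hM : (∑' k, s (k + M)) * ∑' k, s k < δ)
    (hN : (∑' k, s k) * σ.op.sideNorm (fun i => ∑ p, (inner ℂ (firstBlocks M e i)
      (Q (firstBlocks N e p)) : ℂ) • firstBlocks N b p) < ε) :
    ∃ y ∈ tmulSpan (I : Set A) (Set.univ : Set B),
      HasSideRep σ (ε + δ) (∑ p, firstBlocks N a p ⊗ₜ[ℂ] firstBlocks N b p - y) := by
  refine ⟨∑ p, seriesOperator e a (firstBlocks N e p - Q (firstBlocks N e p)) ⊗ₜ firstBlocks N b p,
    Submodule.sum_mem _ fun p _ => Submodule.subset_span ⟨_, hQI _, _, trivial, rfl⟩, ?_⟩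
  have hblock := orthonormal_block he
  have hsplit (p : Σ k : Fin N, m k) :
      firstBlocks N a p - seriesOperator e a (firstBlocks N e p - Q (firstBlocks N e p)) =
        coordOperator (firstBlocks M e) (firstBlocks M a) (Q (firstBlocks N e p)) +
          seriesOperator (fun k => e (k + M)) (fun k => a (k + M)) (Q (firstBlocks N e p)) := by
    rw [← add_apply,
      coordOperator_firstBlocks_add_seriesOperator hs hblock ha, map_sub,
      show firstBlocks N a p = _ from (seriesOperator_apply_self hs he ha p.1 p.2).symm]
    exact sub_sub_cancel _ _
  simp only [← Finset.sum_sub_distrib, ← TensorProduct.sub_tmul, hsplit, TensorProduct.add_tmul,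
    Finset.sum_add_distrib, sum_coordOperator_tmul]
  refine .add (hasSideRep_of_sideNorm_mul_lt (lt_of_le_of_lt ?_ hN))
    (hasSideRep_of_sideNorm_mul_lt (lt_of_le_of_lt ?_ hM))
  · exact mul_le_mul_of_nonneg_right (sideNorm_firstBlocks_le hs ha M) (Side.sideNorm_nonneg _ _)
  · exact mul_le_mul
      (sideNorm_seriesOperator_comp_le ((summable_nat_add_iff M).2 hs) (fun k => hblock (k + M))
        (fun k => ha (k + M)) (orthonormal_firstBlocks he N) hQ)
      (sideNorm_firstBlocks_le hs hb N) (Side.sideNorm_nonneg _ _)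
      (tsum_nonneg fun k => (Side.sideNorm_nonneg _ _).trans (ha (k + M)))

variable [PartialOrder B] [StarOrderedRing B]

lemma summable_sum_apply_smul (hs : Summable s) (he : ∀ k, Orthonormal ℂ (e k))
    (hb : ∀ k, σ.sideNorm (b k) ≤ s k) (ψ : B →L[ℂ] ℂ) :
    Summable fun k => ∑ j, ψ (b k j) • e k j := by
  refine .of_norm_bounded (hs.mul_left ‖ψ‖) fun k => ?_
  rw [norm_sum_smul_orthonormal (he k)]
  exact (σ.sqrt_sum_norm_sq_apply_le ψ (b k)).trans <|
    mul_le_mul_of_nonneg_left (hb k) (norm_nonneg ψ)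

lemma hasSum_sum_inner_smul_eq_zero (hs : Summable s) (he : ∀ k, Orthonormal ℂ (e k))
    (hb : ∀ k, σ.sideNorm (b k) ≤ s k) {x : H}
    (hx : ∀ ψ : B →L[ℂ] ℂ, inner ℂ x (∑' k, ∑ j, ψ (b k j) • e k j) = (0 : ℂ)) :
    HasSum (fun k => ∑ j, (inner ℂ x (e k j) : ℂ) • b k j) 0 := by
  have hsum : Summable fun k => ∑ j, (inner ℂ x (e k j) : ℂ) • b k j := by
    refine .of_norm_bounded (hs.mul_left ‖x‖) fun k => (σ.norm_sum_smul_le _ (b k)).trans ?_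
    simp only [norm_inner_symm x]
    exact mul_le_mul (sqrt_sum_norm_inner_sq_le (he k) x) (hb k) (σ.sideNorm_nonneg _)
      (norm_nonneg x)
  have hzero : ∑' k, ∑ j, (inner ℂ x (e k j) : ℂ) • b k j = 0 := by
    refine SeparatingDual.eq_zero_of_forall_dual_eq_zero (R := ℂ) fun ψ => ?_
    rw [← hx ψ, ← innerSL_apply_apply, ContinuousLinearMap.map_tsum _
      (summable_sum_apply_smul hs he hb ψ), ContinuousLinearMap.map_tsum _ hsum]
    simp only [map_sum, map_smul, innerSL_apply_apply, smul_eq_mul, mul_comm]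
  exact hzero ▸ hsum.hasSum

lemma tsum_sum_apply_smul_mem_comap (hs : Summable s)
    (he : Orthonormal ℂ fun p : Σ k, m k => e p.1 p.2) (ha : ∀ k, σ.sideNorm (a k) ≤ s k)
    (hb : ∀ k, σ.op.sideNorm (b k) ≤ s k) {ψ : B →L[ℂ] ℂ}
    (hψ : ∑' k, ∑ j, ψ (b k j) • a k j ∈ I) :
    ∑' k, ∑ j, ψ (b k j) • e k j ∈ I.comap (seriesOperator e a).toLinearMap := by
  have hsum := summable_sum_apply_smul hs (orthonormal_block he) hb ψ
  rw [Submodule.mem_comap, ContinuousLinearMap.coe_coe, ContinuousLinearMap.map_tsum _ hsum]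
  simpa only [map_sum, map_smul, seriesOperator_apply_self hs he ha] using hψ

lemma eventually_sideNorm_sum_inner_smul_lt {W : Submodule ℂ H} [W.HasOrthogonalProjection]
    (hs : Summable s) (he : ∀ k, Orthonormal ℂ (e k)) (hb : ∀ k, σ.sideNorm (b k) ≤ s k)
    (hW : ∀ ψ : B →L[ℂ] ℂ, ∑' k, ∑ j, ψ (b k j) • e k j ∈ W) {n : Type*} [Fintype n] (g : n → H)
    (hε : 0 < ε) : ∀ᶠ N in Filter.atTop, σ.sideNorm (fun i => ∑ p, (inner ℂ (g i)
      (Wᗮ.starProjection (firstBlocks N e p)) : ℂ) • firstBlocks N b p) < ε := by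
  have hlim : Filter.Tendsto (fun N i => ∑ p, (inner ℂ (g i)
      (Wᗮ.starProjection (firstBlocks N e p)) : ℂ) • firstBlocks N b p) Filter.atTop (nhds 0) := by
    refine tendsto_pi_nhds.2 fun i => ?_
    have horth (ψ : B →L[ℂ] ℂ) : inner ℂ (Wᗮ.starProjection (g i))
        (∑' k, ∑ j, ψ (b k j) • e k j) = (0 : ℂ) :=
      Submodule.inner_left_of_mem_orthogonal (hW ψ) (Wᗮ.starProjection_apply_mem (g i))
    have h := (hasSum_sum_inner_smul_eq_zero hs he hb horth).tendsto_sum_nat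
    simp only [Submodule.inner_starProjection_left_eq_right] at h
    exact h.congr fun N => (sum_firstBlocks N fun k j =>
      (inner ℂ (g i) (Wᗮ.starProjection (e k j)) : ℂ) • b k j).symm
  have hzero : σ.sideNorm (0 : n → B) = 0 := by
    simp [Side.sideNorm, Side.squareSum, Side.form_zero_zero]
  have h := (σ.continuous_sideNorm.tendsto 0).comp hlim
  rw [hzero] at h
  exact h.eventually_lt_const hε

lemma eventually_exists_hasSideRep_firstBlocks_sub (hI : IsClosed (I : Set A)) (hs : Summable s)
    (he : Orthonormal ℂ fun p : Σ k, m k => e p.1 p.2) (ha : ∀ k, σ.sideNorm (a k) ≤ s k)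
    (hb : ∀ k, σ.op.sideNorm (b k) ≤ s k)
    (hslice : ∀ ψ : B →L[ℂ] ℂ, ∑' k, ∑ j, ψ (b k j) • a k j ∈ I) (hε : 0 < ε) :
    ∀ᶠ N in Filter.atTop, ∃ y ∈ tmulSpan (I : Set A) (Set.univ : Set B),
      HasSideRep σ ε (∑ p, firstBlocks N a p ⊗ₜ[ℂ] firstBlocks N b p - y) := by
  set W : Submodule ℂ H := I.comap (seriesOperator e a).toLinearMap
  have hW : IsClosed (W : Set H) := hI.preimage (seriesOperator e a).continuous
  have : CompleteSpace W := hW.completeSpace_coe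
  have hQI (x : H) : seriesOperator e a (x - Wᗮ.starProjection x) ∈ I := by
    rw [Submodule.starProjection_orthogonal_val, sub_sub_cancel]
    exact W.starProjection_apply_mem x
  set S : ℝ := ∑' k, s k
  have hS : 0 ≤ S := tsum_nonneg fun k => (Side.sideNorm_nonneg _ _).trans (ha k)
  obtain ⟨η, hη, hSη⟩ : ∃ η > 0, S * η < ε / 2 :=
    ⟨ε / (4 * (S + 1)), by positivity, by
      rw [mul_div_assoc', div_lt_div_iff₀ (by positivity) (by positivity)]
      nlinarith⟩
  obtain ⟨M, hM⟩ := ((tendsto_sum_nat_add s).eventually_lt_const hη).exists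
  filter_upwards [eventually_sideNorm_sum_inner_smul_lt hs (orthonormal_block he) hb
    (fun ψ => tsum_sum_apply_smul_mem_comap hs he ha hb (hslice ψ)) (firstBlocks M e) hη] with N hN
  rw [← add_halves ε]
  refine exists_hasSideRep_sub_of_sideNorm_lt hs he ha hb
    (Wᗮ.starProjection_norm_le) hQI (M := M) ?_ ?_
  · exact (mul_comm _ S).trans_lt <| (mul_le_mul_of_nonneg_left hM.le hS).trans_lt hSη
  · exact (mul_le_mul_of_nonneg_left hN.le hS).trans_lt hSη

lemma eventually_exists_hasSideRep_sum_sub (hI : IsClosed (I : Set A)) {z : ℕ → A ⊗[ℂ] B}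
    {δ : ℕ → ℝ} (hδ : Summable fun k => √(δ k)) (hz : ∀ k, HasSideRep σ (δ k) (z k))
    (hslice : ∀ ψ : B →L[ℂ] ℂ,
      ∑' k, TensorProduct.rid ℂ A (TensorProduct.map LinearMap.id ψ.toLinearMap (z k)) ∈ I)
    (hε : 0 < ε) :
    ∀ᶠ N in Filter.atTop, ∃ y ∈ tmulSpan (I : Set A) (Set.univ : Set B),
      HasSideRep σ ε (∑ k ∈ Finset.range N, z k - y) := by
  choose n a b hab ha hb using hz
  let e : HilbertBasis (Σ k, Fin (n k)) ℂ (lp (fun _ : Σ k, Fin (n k) => ℂ) 2) :=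
    .ofRepr (LinearIsometryEquiv.refl ℂ _)
  simp only [← hab, map_sum, TensorProduct.map_tmul, TensorProduct.rid_tmul, LinearMap.id_apply]
    at hslice
  have h := eventually_exists_hasSideRep_firstBlocks_sub (e := fun k j => e ⟨k, j⟩) hI hδ
    e.orthonormal (fun k => Real.sqrt_le_sqrt (ha k)) (fun k => Real.sqrt_le_sqrt (hb k)) hslice hε
  refine h.mono fun N hN => ?_
  simpa only [← hab, ← sum_firstBlocks] using! hN

end SliceApproximation

section ApproximateUnit

lemma abs_mul_one_sub_sq_le {κ : ℝ} (hκ : 0 < κ) (t : ℝ) :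
    |t * (1 - t ^ 2 / (t ^ 2 + κ ^ 2)) ^ 2| ≤ κ := by
  have hpos : 0 < t ^ 2 + κ ^ 2 := by positivity
  have hsub : 1 - t ^ 2 / (t ^ 2 + κ ^ 2) = κ ^ 2 / (t ^ 2 + κ ^ 2) := by
    rw [one_sub_div hpos.ne', add_sub_cancel_left]
  have habs : |t| * κ ≤ t ^ 2 + κ ^ 2 := by
    rw [← sq_abs t]
    nlinarith [sq_nonneg (|t| - κ), sq_abs t]
  rw [hsub, abs_mul, abs_of_nonneg (by positivity : 0 ≤ (κ ^ 2 / (t ^ 2 + κ ^ 2)) ^ 2), div_pow,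
    mul_div_assoc', div_le_iff₀ (by positivity)]
  calc |t| * (κ ^ 2) ^ 2 = κ * (|t| * κ * κ ^ 2) := by ring
    _ ≤ κ * ((t ^ 2 + κ ^ 2) * (t ^ 2 + κ ^ 2)) := by gcongr; nlinarith
    _ = κ * (t ^ 2 + κ ^ 2) ^ 2 := by ring

variable {A : Type*} [NonUnitalCStarAlgebra A]

lemma exists_mul_norm_sub_le_of_isSelfAdjoint {h : A} (hh : IsSelfAdjoint h) {κ : ℝ}
    (hκ : 0 < κ) :
    ∃ a, IsSelfAdjoint (h * a) ∧ ‖h * a‖ ≤ 1 ∧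
      ‖(h - h * a * h) - (h - h * a * h) * (h * a)‖ ≤ κ := by
  set f : ℝ → ℝ := fun t => t ^ 2 / (t ^ 2 + κ ^ 2)
  set g : ℝ → ℝ := fun t => t / (t ^ 2 + κ ^ 2)
  have hden (t : ℝ) : t ^ 2 + κ ^ 2 ≠ 0 := by positivity
  have hf : Continuous f := Continuous.div (by fun_prop) (by fun_prop) hden
  have hg : Continuous g := Continuous.div (by fun_prop) (by fun_prop) hden
  have hf0 : f 0 = 0 := by simp [f]
  have he : h * cfcₙ g h = cfcₙ f h := by
    nth_rewrite 1 [← cfcₙ_id' ℝ h]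
    rw [← cfcₙ_mul (fun t => t) g h (by fun_prop) rfl (by fun_prop) (by simp [g])]
    exact cfcₙ_congr fun t _ => by simp only [f, g]; ring
  refine ⟨cfcₙ g h, ?_, ?_, ?_⟩ <;> rw [he]
  · exact cfcₙ_predicate f h
  · refine norm_cfcₙ_le fun t _ => ?_
    rw [Real.norm_of_nonneg (by positivity)]
    exact div_le_one_of_le₀ (le_add_of_nonneg_right (sq_nonneg κ)) (by positivity)
  · have hd : h - cfcₙ f h * h = cfcₙ (fun t => t - f t * t) h := by
      rw [cfcₙ_sub (fun t => t) (fun t => f t * t) h (by fun_prop) rfl (by fun_prop) (by simp),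
        cfcₙ_mul f (fun t => t) h (by fun_prop) hf0 (by fun_prop) rfl, cfcₙ_id' ℝ h]
    rw [hd, ← cfcₙ_mul (fun t => t - f t * t) f h (by fun_prop) (by simp) (by fun_prop) hf0,
      ← cfcₙ_sub (fun t => t - f t * t) (fun t => (t - f t * t) * f t) h (by fun_prop) (by simp)
        (by fun_prop) (by simp)]
    refine norm_cfcₙ_le fun t _ => ?_
    rw [Real.norm_eq_abs]
    convert abs_mul_one_sub_sq_le hκ t using 2
    ring

variable {I : Submodule ℂ A}

lemma exists_mem_norm_sub_mul_le [PartialOrder A] [StarOrderedRing A]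
    (hmul : ∀ c ∈ I, ∀ a, c * a ∈ I) {F : Finset A} (hF : ∀ c ∈ F, c ∈ I) {ε : ℝ} (hε : 0 < ε) :
    ∃ e ∈ I, ‖e‖ ≤ 1 ∧ ∀ c ∈ F, ‖c - e * c‖ ≤ ε := by
  set h : A := ∑ c ∈ F, c * star c with hdef
  have hsa : IsSelfAdjoint h := isSelfAdjoint_sum F fun c _ => IsSelfAdjoint.mul_star_self c
  obtain ⟨a, hesa, hle, hconj⟩ := exists_mul_norm_sub_le_of_isSelfAdjoint hsa (pow_pos hε 2)
  have hI : h * a ∈ I := hmul _ (I.sum_mem fun c hc => hmul c (hF c hc) _) _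
  generalize h * a = e at *
  refine ⟨e, hI, hle, fun c hc => le_of_sq_le_sq ?_ hε.le⟩
  have hsum : ∑ c ∈ F, (c - e * c) * star (c - e * c) = (h - e * h) - (h - e * h) * e := by
    simp only [hdef, Finset.mul_sum, Finset.sum_mul, ← Finset.sum_sub_distrib, star_sub, star_mul,
      hesa.star_eq]
    exact Finset.sum_congr rfl fun c _ => by noncomm_ring
  rw [sq, ← CStarRing.norm_self_mul_star]
  refine le_trans ?_ (hsum ▸ hconj)
  exact CStarAlgebra.norm_le_norm_of_nonneg_of_le (mul_star_self_nonneg _)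
    (Finset.single_le_sum (f := fun c => (c - e * c) * star (c - e * c))
      (fun i _ => mul_star_self_nonneg _) hc)

theorem exists_contractive_leftApproximateUnit (hmul : ∀ c ∈ I, ∀ a, c * a ∈ I) :
    ∃ l : Filter A, l.NeBot ∧ (∀ᶠ e in l, e ∈ I ∧ ‖e‖ ≤ 1) ∧
      ∀ c ∈ I, Filter.Tendsto (fun e => e * c) l (nhds c) := by
  classical
  let _ : PartialOrder A := CStarAlgebra.spectralOrder A
  have : StarOrderedRing A := CStarAlgebra.spectralOrderedRing A
  have hex (p : Finset I × ℕ) : ∃ e ∈ I, ‖e‖ ≤ 1 ∧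
      ∀ c ∈ p.1.image ((↑) : I → A), ‖c - e * c‖ ≤ 1 / ((p.2 : ℝ) + 1) :=
    exists_mem_norm_sub_mul_le hmul (by simp +contextual) Nat.one_div_pos_of_nat
  choose e heI he1 hec using hex
  refine ⟨Filter.map e Filter.atTop, inferInstance,
    Filter.eventually_map.2 (.of_forall fun p => ⟨heI p, he1 p⟩), fun c hc => ?_⟩
  have hzero := (tendsto_one_div_add_atTop_nhds_zero_nat (𝕜 := ℝ)).comp
    (Filter.tendsto_snd.mono_left (Filter.prod_atTop_atTop_eq (α := Finset I) (β := ℕ)).ge)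
  refine Filter.tendsto_map'_iff.2 (tendsto_iff_norm_sub_tendsto_zero.2
    (squeeze_zero' (.of_forall fun p => norm_nonneg _) ?_ hzero))
  filter_upwards [Filter.eventually_ge_atTop ({⟨c, hc⟩}, 0)] with p hp
  rw [norm_sub_rev]
  exact hec p c (Finset.mem_image.2 ⟨⟨c, hc⟩, Finset.singleton_subset_iff.1 hp.1, rfl⟩)

end ApproximateUnit

section LeftMultiplication

variable {A B : Type*} [NonUnitalCStarAlgebra A] [NonUnitalCStarAlgebra B] {σ : Side} {δ ε : ℝ}
  {w : A ⊗[ℂ] B}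

lemma Side.norm_squareSum_mul_le {n : Type*} [Fintype n] (σ : Side) (e : A) (a : n → A) :
    ‖σ.squareSum fun i => e * a i‖ ≤ ‖e‖ ^ 2 * ‖σ.squareSum a‖ := by
  let _ : PartialOrder A := CStarAlgebra.spectralOrder A
  have : StarOrderedRing A := CStarAlgebra.spectralOrderedRing A
  cases σ with
  | row =>
    have hconj : (row.squareSum fun i => e * a i) = e * row.squareSum a * star e := by
      simp only [squareSum, form, Finset.mul_sum, Finset.sum_mul, star_mul, mul_assoc]
    rw [hconj, sq, mul_right_comm]
    exact (norm_mul_le _ _).trans (by rw [norm_star]; gcongr; exact norm_mul_le _ _)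
  | col =>
    have hle : (col.squareSum fun i => e * a i) ≤ ‖star e * e‖ • col.squareSum a := by
      rw [squareSum, squareSum, Finset.smul_sum]
      refine Finset.sum_le_sum fun i _ => ?_
      have h := CStarAlgebra.star_left_conjugate_le_norm_smul (a := a i)
        (IsSelfAdjoint.star_mul_self e)
      simpa only [form, star_mul, mul_assoc] using h
    refine (CStarAlgebra.norm_le_norm_of_nonneg_of_le (col.squareSum_nonneg _) hle).trans_eq ?_
    rw [norm_smul, norm_norm, CStarRing.norm_star_mul_self, sq]

lemma HasSideRep.rTensor_mulLeft (hw : HasSideRep σ δ w) {e : A} (he : ‖e‖ ≤ 1) :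
    HasSideRep σ δ ((LinearMap.mulLeft ℂ e).rTensor B w) := by
  obtain ⟨n, a, b, rfl, ha, hb⟩ := hw
  refine ⟨n, fun i => e * a i, b, by simp, ?_, hb⟩
  refine (σ.norm_squareSum_mul_le e a).trans (le_trans ?_ ha)
  exact mul_le_of_le_one_left (norm_nonneg _) (pow_le_one₀ (norm_nonneg e) he)

lemma HasSideRep.neg (hw : HasSideRep σ δ w) : HasSideRep σ δ (-w) := by
  obtain ⟨n, a, b, rfl, ha, hb⟩ := hw
  refine ⟨n, fun i => (-1 : ℂ) • a i, b, ?_, ?_, hb⟩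
  · simp [TensorProduct.neg_tmul]
  · simpa only [Side.norm_squareSum_smul, norm_neg, norm_one, one_pow, one_mul] using ha

variable {S : Set A} {T : Set B}

lemma eventually_hasSideRep_sub_rTensor_mulLeft {l : Filter A}
    (hl : ∀ c ∈ S, Filter.Tendsto (fun e => e * c) l (nhds c)) {y : A ⊗[ℂ] B}
    (hy : y ∈ tmulSpan S T) (hε : 0 < ε) :
    ∀ᶠ e in l, HasSideRep σ ε (y - (LinearMap.mulLeft ℂ e).rTensor B y) := by
  obtain ⟨n, r, g, rfl⟩ := Submodule.mem_span_set'.1 hy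
  choose c hc b _ hcb using fun i => (g i).2
  have hlim : Filter.Tendsto (fun e => σ.sideNorm (fun i => c i - e * c i) *
      σ.op.sideNorm fun i => r i • b i) l (nhds (σ.sideNorm (0 : Fin n → A) *
        σ.op.sideNorm fun i => r i • b i)) := by
    refine ((σ.continuous_sideNorm.tendsto _).comp (tendsto_pi_nhds.2 fun i => ?_)).mul_const _
    simpa using (tendsto_const_nhds (x := c i)).sub (hl (c i) (hc i))
  have hzero : σ.sideNorm (0 : Fin n → A) = 0 := by
    simp [Side.sideNorm, Side.squareSum, Side.form_zero_zero]
  rw [hzero, zero_mul] at hlim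
  filter_upwards [hlim.eventually_lt_const hε] with e he
  convert hasSideRep_of_sideNorm_mul_lt he using 1
  simp only [← hcb, map_sum, map_smul, LinearMap.rTensor_tmul, LinearMap.mulLeft_apply,
    ← Finset.sum_sub_distrib, ← smul_sub, ← TensorProduct.sub_tmul, TensorProduct.tmul_smul]

lemma rTensor_mulLeft_mem_tmulSpan {e : A} (he : ∀ a, e * a ∈ S) {w : A ⊗[ℂ] B}
    (hw : w ∈ tmulSpan Set.univ T) : (LinearMap.mulLeft ℂ e).rTensor B w ∈ tmulSpan S T := by
  rw [← Submodule.mem_comap]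
  refine Submodule.span_le.2 ?_ hw
  rintro _ ⟨a, -, b, hb, rfl⟩
  exact Submodule.subset_span ⟨e * a, he a, b, hb, rfl⟩

lemma tmulSpan_univ_univ : tmulSpan (Set.univ : Set A) (Set.univ : Set B) = ⊤ := by
  rw [← TensorProduct.span_tmul_eq_top, tmulSpan]
  congr 1
  ext
  simp [Set.mem_image2]

end LeftMultiplication

section Density

lemma mem_closure_of_forall_norm_sub_le {X : Type*} [SeminormedAddCommGroup X] {S : Set X} {x : X}
    {C : ℝ}
    (h : ∀ ε > 0, ∃ y ∈ S, ‖x - y‖ ≤ C * ε) : x ∈ closure S := by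
  obtain ⟨y, -, hy⟩ := h 1 one_pos
  have hC : 0 ≤ C := by simpa using (norm_nonneg _).trans hy
  refine Metric.mem_closure_iff.2 fun ε hε => ?_
  obtain ⟨y, hyS, hy⟩ := h (ε / (C + 1)) (by positivity)
  refine ⟨y, hyS, (dist_eq_norm x y).trans_lt (hy.trans_lt ?_)⟩
  rw [mul_div_assoc', div_lt_iff₀ (by positivity)]
  linarith [mul_comm C ε]
variable {A B : Type*} [NonUnitalCStarAlgebra A] [NonUnitalCStarAlgebra B]
  {X : Type*} [NormedAddCommGroup X] [NormedSpace ℂ X] {K : ℝ} {ι : A ⊗[ℂ] B →ₗ[ℂ] X}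

/-- The norm `‖ι u‖` is equivalent to the larger of the two Haagerup norms of `u`, i.e. to the
infimum of the `δ` for which `u` has representations of size `δ` on both sides. -/
structure IsHaagerupEquivalent (K : ℝ) (ι : A ⊗[ℂ] B →ₗ[ℂ] X) : Prop where
  hasSideRep : ∀ (σ : Side) {u : A ⊗[ℂ] B} {δ : ℝ}, ‖ι u‖ < δ → HasSideRep σ δ u
  norm_le : ∀ {w : A ⊗[ℂ] B} {δ : ℝ}, 0 < δ → (∀ σ, HasSideRep σ δ w) → ‖ι w‖ ≤ K * δ

lemma IsHaagerupEquivalent.comp_comm (hι : IsHaagerupEquivalent K ι) :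
    IsHaagerupEquivalent K (ι ∘ₗ (TensorProduct.comm ℂ B A).toLinearMap) where
  hasSideRep σ u δ h := by
    simpa using (hι.hasSideRep σ.op h).symm
  norm_le hδ hw := hι.norm_le hδ fun σ => by simpa using (hw σ.op).symm

lemma exists_seq_norm_lt_tendsto_sum {V : Type*} [AddCommGroup V] [Module ℂ V] {ι : V →ₗ[ℂ] X}
    (hι : DenseRange ι) (x : X) :
    ∃ (z : ℕ → V) (M : ℝ), (∀ k, ‖ι (z k)‖ < M * (1 / 4) ^ k) ∧
      Filter.Tendsto (fun N => ι (∑ k ∈ Finset.range N, z k)) Filter.atTop (nhds x) := by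
  obtain ⟨v, hv, hvι, hv0, hvk⟩ := controlled_sum_of_mem_closure (s := ι.range.toAddSubgroup)
    (hι x) (b := fun k => (1 / 4 : ℝ) ^ k) fun k => by positivity
  choose z hz using hvι
  obtain rfl : (fun k => ι (z k)) = v := funext hz
  refine ⟨z, ‖x‖ + 1, fun k => ?_, ?_⟩
  · rcases k.eq_zero_or_pos with rfl | hk
    · rw [pow_zero, mul_one]
      rw [pow_zero, neg_add_eq_sub] at hv0
      exact (norm_le_norm_add_norm_sub _ _).trans_lt (add_lt_add_right hv0 _)
    · exact (hvk k hk).trans_le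
        (le_mul_of_one_le_left (by positivity) (le_add_of_nonneg_left (norm_nonneg x)))
  · simpa only [map_sum] using (Filter.tendsto_add_atTop_iff_nat 1).1 hv

variable {I : Submodule ℂ A} {L : (B →L[ℂ] ℂ) → X →L[ℂ] A}

lemma rid_map_id_eq (hL : ∀ ψ a b, L ψ (ι (a ⊗ₜ b)) = ψ b • a) (ψ : B →L[ℂ] ℂ) (w : A ⊗[ℂ] B) :
    TensorProduct.rid ℂ A (TensorProduct.map LinearMap.id ψ.toLinearMap w) = L ψ (ι w) := by
  induction w using TensorProduct.induction_on with
  | zero => simp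
  | tmul a b => simp [hL]
  | add w w' h h' => simp only [map_add, h, h']

namespace IsHaagerupEquivalent

lemma exists_seq_eventually_hasSideRep_sub (hι : IsHaagerupEquivalent K ι) (hd : DenseRange ι)
    (hI : IsClosed (I : Set A)) (hL : ∀ ψ a b, L ψ (ι (a ⊗ₜ b)) = ψ b • a) {x : X}
    (hx : ∀ ψ, L ψ x ∈ I) :
    ∃ u : ℕ → A ⊗[ℂ] B, Filter.Tendsto (fun N => ι (u N)) Filter.atTop (nhds x) ∧
      ∀ (σ : Side) (ε : ℝ), 0 < ε → ∀ᶠ N in Filter.atTop,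
        ∃ y ∈ tmulSpan (I : Set A) (Set.univ : Set B), HasSideRep σ ε (u N - y) := by
  let _ : PartialOrder A := CStarAlgebra.spectralOrder A
  have : StarOrderedRing A := CStarAlgebra.spectralOrderedRing A
  let _ : PartialOrder B := CStarAlgebra.spectralOrder B
  have : StarOrderedRing B := CStarAlgebra.spectralOrderedRing B
  obtain ⟨z, M, hz, hlim⟩ := exists_seq_norm_lt_tendsto_sum hd x
  have hM : Summable fun k => M * (1 / 4 : ℝ) ^ k :=
    (summable_geometric_of_lt_one (by norm_num) (by norm_num)).mul_left M
  have hsqrt : Summable fun k => √(M * (1 / 4 : ℝ) ^ k) := by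
    refine ((summable_geometric_of_lt_one (r := 1 / 2) (by norm_num) (by norm_num)).mul_left
      √M).congr fun k => ?_
    rw [Real.sqrt_mul' M (by positivity), show (1 / 4 : ℝ) ^ k = ((1 / 2) ^ k) ^ 2 by
      rw [← pow_mul, mul_comm, pow_mul]; norm_num, Real.sqrt_sq (by positivity)]
  refine ⟨_, hlim, fun σ ε hε => eventually_exists_hasSideRep_sum_sub hI hsqrt
    (fun k => hι.hasSideRep σ (hz k)) (fun ψ => ?_) hε⟩
  have hsum : Summable fun k => L ψ (ι (z k)) := (hM.mul_left ‖L ψ‖).of_norm_bounded fun k =>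
    (L ψ).le_opNorm_of_le (hz k).le
  have htsum : ∑' k, L ψ (ι (z k)) = L ψ x := by
    refine (hsum.hasSum_iff_tendsto_nat.2 ?_).tsum_eq
    simpa only [Function.comp_def, map_sum] using ((L ψ).continuous.tendsto x).comp hlim
  simpa only [rid_map_id_eq hL, htsum] using hx ψ

theorem mem_closure_tmulSpan_univ (hι : IsHaagerupEquivalent K ι) (hd : DenseRange ι)
    (hI : IsClosed (I : Set A)) (hmul : ∀ c ∈ I, ∀ a, c * a ∈ I)
    (hL : ∀ ψ a b, L ψ (ι (a ⊗ₜ b)) = ψ b • a) {x : X} (hx : ∀ ψ, L ψ x ∈ I) :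
    x ∈ closure (ι '' tmulSpan (I : Set A) (Set.univ : Set B)) := by
  obtain ⟨u, hu, happrox⟩ := hι.exists_seq_eventually_hasSideRep_sub hd hI hL hx
  obtain ⟨l, hl, hlI, hlc⟩ := exists_contractive_leftApproximateUnit hmul
  refine mem_closure_of_forall_norm_sub_le (C := 1 + K * 3) fun ε hε => ?_
  have hdist := (tendsto_iff_norm_sub_tendsto_zero.1 hu).eventually_lt_const hε
  obtain ⟨N, hN, hyN⟩ :=
    (hdist.and (Filter.eventually_all.2 fun σ => happrox σ ε hε)).exists
  choose y hy hyN using hyN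
  obtain ⟨e, ⟨heI, he⟩, hye⟩ := (hlI.and (Filter.eventually_all.2 fun σ =>
    eventually_hasSideRep_sub_rTensor_mulLeft (σ := σ) hlc (hy σ) hε)).exists
  set T := (LinearMap.mulLeft ℂ e).rTensor B
  have hnorm : ‖ι (u N - T (u N))‖ ≤ K * (ε + ε + ε) := by
    refine hι.norm_le (by positivity) fun σ => ?_
    convert ((hyN σ).add ((hyN σ).rTensor_mulLeft he).neg).add (hye σ) using 1
    rw [map_sub]
    abel
  refine ⟨ι (T (u N)), ⟨_, rTensor_mulLeft_mem_tmulSpan (hmul e heI)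
    (tmulSpan_univ_univ (A := A) (B := B) ▸ Submodule.mem_top), rfl⟩, ?_⟩
  calc ‖x - ι (T (u N))‖ = ‖(x - ι (u N)) + ι (u N - T (u N))‖ := by
        rw [map_sub, sub_add_sub_cancel]
    _ ≤ ε + K * (ε + ε + ε) := norm_add_le_of_le (norm_sub_rev x _ ▸ hN.le) hnorm
    _ = (1 + K * 3) * ε := by ring

theorem mem_closure_tmulSpan (hι : IsHaagerupEquivalent K ι) (hmul : ∀ c ∈ I, ∀ a, c * a ∈ I)
    {T : Set B} {x : X} (hxI : x ∈ closure (ι '' tmulSpan (I : Set A) (Set.univ : Set B)))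
    (hxT : x ∈ closure (ι '' tmulSpan (Set.univ : Set A) T)) :
    x ∈ closure (ι '' tmulSpan (I : Set A) T) := by
  obtain ⟨l, hl, hlI, hlc⟩ := exists_contractive_leftApproximateUnit hmul
  refine mem_closure_of_forall_norm_sub_le (C := 1 + K + K * 2) fun ε hε => ?_
  obtain ⟨_, ⟨z, hz, rfl⟩, hxz⟩ := Metric.mem_closure_iff.1 hxI ε hε
  obtain ⟨_, ⟨y, hy, rfl⟩, hxy⟩ := Metric.mem_closure_iff.1 hxT ε hε
  obtain ⟨e, ⟨heI, he⟩, hze⟩ := (hlI.and (Filter.eventually_all.2 fun σ =>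
    eventually_hasSideRep_sub_rTensor_mulLeft (σ := σ) hlc hz hε)).exists
  set S := (LinearMap.mulLeft ℂ e).rTensor B
  have hzy : ‖ι (z - y)‖ < 2 * ε := by
    rw [map_sub, ← dist_eq_norm, two_mul]
    exact (dist_triangle_left _ _ x).trans_lt (add_lt_add hxz hxy)
  have hnorm : ‖ι (z - S z)‖ ≤ K * ε := hι.norm_le hε hze
  have hnorm' : ‖ι (S (z - y))‖ ≤ K * (2 * ε) := hι.norm_le (by positivity) fun σ =>
    (hι.hasSideRep σ hzy).rTensor_mulLeft he
  refine ⟨ι (S y), ⟨_, rTensor_mulLeft_mem_tmulSpan (hmul e heI) hy, rfl⟩, ?_⟩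
  calc ‖x - ι (S y)‖ = ‖(x - ι z) + ι (z - S z) + ι (S (z - y))‖ := by
        simp only [map_sub, sub_add_sub_cancel]
    _ ≤ ε + K * ε + K * (2 * ε) :=
        norm_add_le_of_le (norm_add_le_of_le (dist_eq_norm x _ ▸ hxz.le) hnorm) hnorm'
    _ = (1 + K + K * 2) * ε := by ring

end IsHaagerupEquivalent

end Density

section SlicePreimages

/-- A closed two-sided ideal of a C⋆-algebra, as a complex subspace: multiplying by an approximate
unit shows that it is stable under scalars. -/
def closedIdealSubmodule {A : Type*} [NonUnitalCStarAlgebra A] (I : TwoSidedIdeal A)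
    (hI : IsClosed (I : Set A)) : Submodule ℂ A where
  carrier := I
  add_mem' := I.add_mem
  zero_mem' := I.zero_mem
  smul_mem' r c hc := by
    let _ : PartialOrder A := CStarAlgebra.spectralOrder A
    have : StarOrderedRing A := CStarAlgebra.spectralOrderedRing A
    have hunit := CStarAlgebra.increasingApproximateUnit A
    have := hunit.neBot
    refine hI.mem_of_tendsto (hunit.tendsto_mul_left (r • c)) (.of_forall fun e => ?_)
    rw [smul_mul_assoc, ← mul_smul_comm]
    exact I.mul_mem_right _ _ hc

lemma apply_tmul_mem_of_mem_tmulSpan {A B C : Type*} [AddCommGroup A] [Module ℂ A]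
    [AddCommGroup B] [Module ℂ B] [AddCommGroup C] [Module ℂ C] {S : Set A} {T : Set B}
    {P : Submodule ℂ C} {f : A ⊗[ℂ] B →ₗ[ℂ] C} (hf : ∀ a ∈ S, ∀ b ∈ T, f (a ⊗ₜ b) ∈ P)
    {w : A ⊗[ℂ] B} (hw : w ∈ tmulSpan S T) : f w ∈ P := by
  refine (Submodule.span_le.2 ?_ : tmulSpan S T ≤ P.comap f) hw
  rintro _ ⟨a, ha, b, hb, rfl⟩
  exact hf a ha b hb

variable {A B : Type u} {X : Type*} [NonUnitalCStarAlgebra A] [NonUnitalCStarAlgebra B]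
  [NormedAddCommGroup X] [NormedSpace ℂ X] {NA : ∀ p : ℕ, Matrix (Fin p) (Fin p) A → ℝ}
  {NB : ∀ q : ℕ, Matrix (Fin q) (Fin q) B → ℝ} {ι : A ⊗[ℂ] B →ₗ[ℂ] X}
  {I : Submodule ℂ A} {J : Submodule ℂ B} {R : (A →L[ℂ] ℂ) → X →L[ℂ] B}
  {L : (B →L[ℂ] ℂ) → X →L[ℂ] A}

lemma closure_tmulSpan_subset_slice_preimages (hI : IsClosed (I : Set A))
    (hJ : IsClosed (J : Set B)) (hR : ∀ φ a b, R φ (ι (a ⊗ₜ b)) = φ a • b)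
    (hL : ∀ ψ a b, L ψ (ι (a ⊗ₜ b)) = ψ b • a) :
    closure (ι '' tmulSpan (I : Set A) (J : Set B)) ⊆ {x | (∀ φ, R φ x ∈ J) ∧ ∀ ψ, L ψ x ∈ I} := by
  refine closure_minimal ?_ ?_
  · rintro _ ⟨w, hw, rfl⟩
    exact ⟨fun φ => apply_tmul_mem_of_mem_tmulSpan (f := (R φ).toLinearMap ∘ₗ ι)
        (fun a _ b hb => hR φ a b ▸ J.smul_mem _ hb) hw,
      fun ψ => apply_tmul_mem_of_mem_tmulSpan (f := (L ψ).toLinearMap ∘ₗ ι)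
        (fun a ha b _ => hL ψ a b ▸ I.smul_mem _ ha) hw⟩
  · simp only [Set.ofPred_and, Set.ofPred_forall]
    exact (isClosed_iInter fun φ => hJ.preimage (R φ).continuous).inter
      (isClosed_iInter fun ψ => hI.preimage (L ψ).continuous)

theorem isHaagerupEquivalent_of_norm_eq_osProjNorm (hNA : ∀ p, IsCStarNorm (NA p))
    (hNB : ∀ q, IsCStarNorm (NB q)) (hι : ∀ u, ‖ι u‖ = osProjNorm NA NB u) :
    IsHaagerupEquivalent 1920 ι := by
  let _ : PartialOrder A := CStarAlgebra.spectralOrder A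
  have : StarOrderedRing A := CStarAlgebra.spectralOrderedRing A
  let _ : PartialOrder B := CStarAlgebra.spectralOrder B
  have : StarOrderedRing B := CStarAlgebra.spectralOrderedRing B
  exact ⟨fun σ _ _ h => hasSideRep_of_osProjNorm_lt hNA hNB σ (hι _ ▸ h),
    fun hδ hw => norm_le_of_hasSideRep hNA hNB (fun u => (hι u).le) hδ hw⟩

theorem tensorIdeal_eq_slice_preimages_general (hNA : ∀ p, IsCStarNorm (NA p))
    (hNB : ∀ q, IsCStarNorm (NB q)) (hι : ∀ u, ‖ι u‖ = osProjNorm NA NB u) (hd : DenseRange ι)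
    (hI : IsClosed (I : Set A)) (hJ : IsClosed (J : Set B)) (hImul : ∀ c ∈ I, ∀ a, c * a ∈ I)
    (hJmul : ∀ c ∈ J, ∀ b, c * b ∈ J) (hR : ∀ φ a b, R φ (ι (a ⊗ₜ b)) = φ a • b)
    (hL : ∀ ψ a b, L ψ (ι (a ⊗ₜ b)) = ψ b • a) :
    closure (ι '' tmulSpan (I : Set A) (J : Set B)) = {x | (∀ φ, R φ x ∈ J) ∧ ∀ ψ, L ψ x ∈ I} := by
  refine (closure_tmulSpan_subset_slice_preimages hI hJ hR hL).antisymm fun x ⟨hxR, hxL⟩ => ?_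
  have hH : IsHaagerupEquivalent 1920 ι := isHaagerupEquivalent_of_norm_eq_osProjNorm hNA hNB hι
  have hxI := hH.mem_closure_tmulSpan_univ hd hI hImul hL hxL
  have hd' : DenseRange (ι ∘ₗ (TensorProduct.comm ℂ B A).toLinearMap) := by
    rw [DenseRange, LinearMap.coe_comp, LinearEquiv.coe_coe,
      (TensorProduct.comm ℂ B A).surjective.range_comp]
    exact hd
  have hxJ := hH.comp_comm.mem_closure_tmulSpan_univ hd' hJ hJmul (by simp [hR]) hxR
  refine hH.mem_closure_tmulSpan hImul hxI (closure_mono ?_ hxJ)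
  rintro _ ⟨w, hw, rfl⟩
  refine ⟨_, apply_tmul_mem_of_mem_tmulSpan (f := (TensorProduct.comm ℂ B A).toLinearMap)
    (fun b hb a _ => ?_) hw, rfl⟩
  exact Submodule.subset_span ⟨a, trivial, b, hb, rfl⟩

end SlicePreimages

/-- For closed two-sided ideals `I ⊆ A` and `J ⊆ B`, the product ideal
`I ⊗̂ J` consists exactly of those `x ∈ A ⊗̂ B` with `R_φ(x) ∈ J` for all `φ ∈ A*` and
`L_ψ(x) ∈ I` for all `ψ ∈ B*`. -/
theorem tensorIdeal_eq_slice_preimages {A B X : Type u} [NonUnitalCStarAlgebra A] [NonUnitalCStarAlgebra B]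
    [NonUnitalNormedRing X] [StarRing X] [NormedSpace ℂ X] [CompleteSpace X]
    [IsScalarTower ℂ X X] [SMulCommClass ℂ X X]
    (NA : ∀ p : ℕ, Matrix (Fin p) (Fin p) A → ℝ)
    (NB : ∀ q : ℕ, Matrix (Fin q) (Fin q) B → ℝ)
    (hNA : ∀ p, IsCStarNorm (NA p)) (hNB : ∀ q, IsCStarNorm (NB q))
    (ι : A ⊗[ℂ] B →ₗ[ℂ] X) (hX : IsTensorCompletion (osProjNorm NA NB) X ι)
    (I : TwoSidedIdeal A) (J : TwoSidedIdeal B)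
    (hI : IsClosed (I : Set A)) (hJ : IsClosed (J : Set B))
    (R : (A →L[ℂ] ℂ) → X →L[ℂ] B)
    (hR : ∀ (φ : A →L[ℂ] ℂ) (a : A) (b : B), R φ (ι (a ⊗ₜ[ℂ] b)) = φ a • b)
    (L : (B →L[ℂ] ℂ) → X →L[ℂ] A)
    (hL : ∀ (ψ : B →L[ℂ] ℂ) (a : A) (b : B), L ψ (ι (a ⊗ₜ[ℂ] b)) = ψ b • a) :
    tensorIdeal ι (I : Set A) (J : Set B) =
      {x : X | (∀ φ : A →L[ℂ] ℂ, R φ x ∈ J) ∧ (∀ ψ : B →L[ℂ] ℂ, L ψ x ∈ I)} := by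
  exact tensorIdeal_eq_slice_preimages_general hNA hNB hX.norm_eq hX.dense
    (I := closedIdealSubmodule I hI) (J := closedIdealSubmodule J hJ) hI hJ
    (fun _ hc _ => I.mul_mem_right _ _ hc) (fun _ hc _ => J.mul_mem_right _ _ hc) hR hL

end
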